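/- Let n ≥ 2, k ≥ 1, d ≥ 2. There exists a finite set S of elements of RFA(ℤ^d,n,k) such that the torsion problem of the subgroup ⟨S⟩ is undecidable: no algorithm decides, given a word w over S ∪ S^{-1}, whether the element of RFA(ℤ^d,n,k) represented by w has finite order. -/

import Mathlib

open Function

/-- `ℤ^d`. -/
abbrev V (d : ℕ) : Type := Fin d → ℤ

/-- A head configuration is valid if it carries at most one head. -/
def headOk {d k : ℕ} (y : V d → Option (Fin k)) : Prop :=
  ∀ u v : V d, (y u).isSome → (y v).isSome → u = v

/-- The space `X_{n,k}`: a tape in `Σ^{ℤ^d}` together with at most one head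
carrying a state in `Q = Fin k`. -/
abbrev X (d n k : ℕ) : Type :=
  { c : (V d → Fin n) × (V d → Option (Fin k)) // headOk c.2 }

/-- `DefinedBy F F' f T` : `T` is the moving-head Turing machine defined by the
local rule `f`, reading the tape on the window `F`, writing on the window `F'`,
changing the state and moving the head. -/
def DefinedBy {d n k : ℕ} (F F' : Finset (V d))
    (f : (V d → Fin n) → Fin k → (V d → Fin n) × Fin k × V d)
    (T : X d n k → X d n k) : Prop :=
  -- `f` only depends on the restriction of the tape to `F`, and only the
  -- restriction of its tape output to `F'` matters:
  (∀ x x' q, (∀ v ∈ F, x v = x' v) →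
      (∀ v ∈ F', (f x q).1 v = (f x' q).1 v) ∧ (f x q).2 = (f x' q).2) ∧
  -- a configuration with no head is fixed:
  (∀ c : X d n k, (∀ v, c.val.2 v = none) → T c = c) ∧
  -- if the head is at `v` in state `q`, apply the local rule there:
  (∀ (c : X d n k) (v : V d) (q : Fin k), c.val.2 v = some q →
    (∀ t, (T c).val.1 t =
      if t - v ∈ F' then (f (fun u => c.val.1 (u + v)) q).1 (t - v) else c.val.1 t) ∧
    (∀ t, (T c).val.2 t =
      if t = v + (f (fun u => c.val.1 (u + v)) q).2.2
      then some (f (fun u => c.val.1 (u + v)) q).2.1 else none))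

/-- A moving-head `(d,n,k)`-Turing machine. -/
def IsTM {d n k : ℕ} (T : X d n k → X d n k) : Prop :=
  ∃ F F' f, DefinedBy F F' f T

/-- A reversible moving-head Turing machine: a Turing machine admitting a
Turing machine inverse. -/
def IsRTM {d n k : ℕ} (T : X d n k → X d n k) : Prop :=
  IsTM T ∧ ∃ S : X d n k → X d n k, IsTM S ∧ S ∘ T = id ∧ T ∘ S = id

/-- The set of reversible Turing machines, viewed as permutations of `X_{n,k}`. -/
def RTMset (d n k : ℕ) : Set (Equiv.Perm (X d n k)) :=
  {π | IsTM (⇑π) ∧ IsTM (⇑π.symm)}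

/-- The group `RTM(ℤ^d,n,k)` of reversible Turing machines (a subgroup of the
permutation group of `X_{n,k}`; the set of reversible Turing machines is closed
under composition and inversion, so it coincides with the subgroup it generates). -/
def RTMgrp (d n k : ℕ) : Subgroup (Equiv.Perm (X d n k)) :=
  Subgroup.closure (RTMset d n k)

/-- Local permutations: reversible Turing machines that never move the head. -/
def LPset (d n k : ℕ) : Set (Equiv.Perm (X d n k)) :=
  {π | π ∈ RTMset d n k ∧
    ∀ (c : X d n k) (v : V d), ((π c).val.2 v).isSome = (c.val.2 v).isSome}

/-- The group `LP(ℤ^d,n,k)` of local permutations. -/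
def LPgrp (d n k : ℕ) : Subgroup (Equiv.Perm (X d n k)) :=
  Subgroup.closure (LPset d n k)

/-- Reversible finite-state automata: reversible Turing machines that never
change the tape. -/
def RFAset (d n k : ℕ) : Set (Equiv.Perm (X d n k)) :=
  {π | π ∈ RTMset d n k ∧ ∀ c : X d n k, (π c).val.1 = c.val.1}

/-- The group `RFA(ℤ^d,n,k)` of reversible finite-state automata. -/
def RFAgrp (d n k : ℕ) : Subgroup (Equiv.Perm (X d n k)) :=
  Subgroup.closure (RFAset d n k)

/-- State-permutations: reversible machines that never move the head and never
change the tape, only permuting the state as a function of the tape. -/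
def SPset (d n k : ℕ) : Set (Equiv.Perm (X d n k)) :=
  {π | π ∈ RTMset d n k ∧ (∀ c : X d n k, (π c).val.1 = c.val.1) ∧
    ∀ (c : X d n k) (v : V d), ((π c).val.2 v).isSome = (c.val.2 v).isSome}

/-- The group `SP(ℤ^d,n,k)` of state-permutations. -/
def SPgrp (d n k : ℕ) : Subgroup (Equiv.Perm (X d n k)) :=
  Subgroup.closure (SPset d n k)

/-- The machines `T_u` that move the head by `u ∈ ℤ^d` without changing the
tape or the state. -/
def Shiftset (d n k : ℕ) : Set (Equiv.Perm (X d n k)) :=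
  {π | ∃ u : V d, ∀ c : X d n k,
    (π c).val.1 = c.val.1 ∧ ∀ t, (π c).val.2 t = c.val.2 (t - u)}

/-- The group `Shift(ℤ^d,n,k)`. -/
def Shiftgrp (d n k : ℕ) : Subgroup (Equiv.Perm (X d n k)) :=
  Subgroup.closure (Shiftset d n k)

/-- The group `OB(ℤ^d,n,k) = ⟨Shift(ℤ^d,n,k), LP(ℤ^d,n,k)⟩` of oblivious Turing
machines. -/
def OBgrp (d n k : ℕ) : Subgroup (Equiv.Perm (X d n k)) :=
  Subgroup.closure (Shiftset d n k ∪ LPset d n k)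

/-- The group `EL(ℤ^d,n,k) = ⟨RFA(ℤ^d,n,k), LP(ℤ^d,n,k)⟩` of elementary Turing
machines. -/
def ELgrp (d n k : ℕ) : Subgroup (Equiv.Perm (X d n k)) :=
  Subgroup.closure (RFAset d n k ∪ LPset d n k)

/-- Evaluation of a word over a finite set `S ∪ S⁻¹` of generators (given by
`π : Fin m → Equiv.Perm (X d n k)`): each letter is a generator or its inverse. -/
def evalWord {d n k : ℕ} {m : ℕ} (π : Fin m → Equiv.Perm (X d n k))
    (w : List (Fin m × Bool)) : Equiv.Perm (X d n k) :=
  (w.map fun p => if p.2 then π p.1 else (π p.1)⁻¹).prod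

/-! A Wang tile set simulates itself: a correctly tiled block of side `m + 1`, whose lines carry the
cells of a configuration of a cellular automaton, simulates one tile of the tiling with blocks of
side `m + 3` and the next configuration. A path through the tiling, the snake, turns according to
the tiles it meets and traverses every block completely, so that it also follows the snake of the
simulated tiling. If the automaton, which simulates a Turing machine, reaches a bad state, then the
tiling is correct only on snakes of bounded length; otherwise there are tilings that are correct
along arbitrarily long snakes without repetition.

The tape encodes tilings, and the head moves one step along its snake by a product of two
involutions: the first carries a forward head to the next position, facing backward, provided the
tiling is correct there, and the second makes it face forward again, provided the labels around it
are those of the given blocks. A head that one of them fixes runs back. So this permutation has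
finite order if and only if the Turing machine halts on the input written in the blocks. The first
involution is a generator, and the second is the value of a word computed from the input: a
commutator of permutations controlled by two conditions is controlled by their conjunction, so words
in finitely many generators can test the labels along a line. -/

namespace RFATorsion

/-! ### The self-simulating tile set -/

/-- A one-sided cellular automaton with a blank state and a set of forbidden states. Cell `i` of
the new configuration is computed from cells `i - 2`, `i - 1`, `i` of the old one, so that a
configuration supported on `1, …, m` becomes one supported on `1, …, m + 2`. -/
structure CellularAutomaton (G : Type*) where
  rule : G → G → G → G
  blank : G
  rule_blank : rule blank blank blank = blank
  bad : G → Prop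
  not_bad_blank : ¬ bad blank

/-- The global map of a cellular automaton. -/
def CellularAutomaton.step {G : Type*} (K : CellularAutomaton G) (γ : ℤ → G) (i : ℤ) : G :=
  K.rule (γ (i - 2)) (γ (i - 1)) (γ i)

theorem CellularAutomaton.step_eq_blank {G : Type*} (K : CellularAutomaton G) {m : ℤ} {γ : ℤ → G}
    (hγ : ∀ i, i < 1 ∨ m < i → γ i = K.blank) {i : ℤ} (hi : i < 1 ∨ m + 2 < i) :
    K.step γ i = K.blank := by
  rw [step, hγ (i - 2) (by lia), hγ (i - 1) (by lia), hγ i (by lia), K.rule_blank]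

/-- The label of a nonzero index of a block: the state of the cell with that index, and whether
the index is the last one of the block. -/
abbrev Label (G : Type*) := G × Bool

/-- The alphabet of the words `letter i 1, …, letter i m` encoding an index `i`. -/
inductive Letter
  | zero | one | below | pivot | above

/-- The information that stays constant along a line of a block. A block of side `m + 1` simulates
one tile of the next level, which has indices `(i, j)` in a block of that level. Each line carries
its own label and, for the index of the simulated tile in the direction *along* the line and in the
direction *across* it, the label of that index (`none` for the index `0`) and one letter of the word
encoding it. The phases are those of the edges of the transverse lines just before and just after
they cross the line. -/
structure Line (G : Type*) where
  label : Label G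
  indexAlong : Option (Label G)
  letterAlong : Letter
  indexAcross : Option (Label G)
  letterAcross : Letter
  phaseBefore : ZMod 3
  phaseAfter : ZMod 3

/-- The colour of an edge: the data of its line, whether it is the first or the last edge of the
line within the block, a phase forcing the borders of a block to be straight, whether the line has
already met the diagonal of the block, and the memory of the scan of the transverse lines: letter
and state of the last one, and state of the one before. -/
structure Colour (G : Type*) extends Line G where
  atStart : Bool
  atEnd : Bool
  phase : ZMod 3
  pastDiagonal : Bool
  scan : Option (Letter × G × G)

/-- The kinds of tiles: crossings of two lines inside a block, and the two kinds of border tiles,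
where a line passes under a border. -/
inductive TileKind
  | plain | rowUnder | colUnder

/-- A Wang tile with its kind. -/
structure Tile (G : Type*) where
  west : Colour G
  east : Colour G
  south : Colour G
  north : Colour G
  kind : TileKind

section Rules

variable {G : Type*}

/-- Whether a label marks the last index of a block; `none` is the label of the index `0`. -/
def isLast (o : Option (Label G)) : Bool := o.elim false Prod.snd

/-- The relation between the letters of the words of `i` and `i + 1` at the same position. -/
def Letter.Succ : Letter → Letter → Prop
  | .zero, y => y = .one
  | .one, y => y = .pivot ∨ y = .above
  | .above, y => y = .pivot ∨ y = .above
  | .pivot, y => y = .below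
  | .below, y => y = .below

/-- The relation between consecutive letters of the word of an index. -/
def Letter.Next : Letter → Letter → Prop
  | .zero, y => y = .zero
  | .one, y => y = .one
  | .below, y => y = .below ∨ y = .pivot
  | .pivot, y => y = .above
  | .above, y => y = .above

/-- One step of the scan of the transverse lines, at a line with state `c` and letter `u`: the scan
checks that the letters form the word of an index and that `o` is the label of this index for the
next configuration of the cellular automaton. -/
def ScanStep (K : CellularAutomaton G) (o : Option (Label G)) :
    Option (Letter × G × G) → G → Letter → Option (Letter × G × G) → Prop
  | none, c, u, r => r = some (u, c, K.blank) ∧ u ≠ .above ∧ (u = .zero → o = none) ∧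
      (u = .one → o = some (K.rule K.blank K.blank c, false))
  | some (u₀, c₀, c₁), c, u, r => r = some (u, c, c₀) ∧ u₀.Next u ∧
      (u₀ = .pivot → o = some (K.rule c₁ c₀ c, false))

/-- The condition on the memory of the scan after the last transverse line. -/
def ScanEnd (K : CellularAutomaton G) (o : Option (Label G)) : Option (Letter × G × G) → Prop
  | none => False
  | some (u, c, c₁) => (u = .pivot → o = some (K.rule c₁ c K.blank, false)) ∧
      (u = .below → o = some (K.rule c K.blank K.blank, true))

/-- A line with edges `w` and `e` passes under a border of colour `x`, which is the colour of an
edge of the simulated tile. -/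
structure PassesUnder (K : CellularAutomaton G) (w e x : Colour G) : Prop where
  w_atEnd : w.atEnd = true
  w_atStart : w.atStart = false
  e_atStart : e.atStart = true
  e_atEnd : e.atEnd = false
  w_phase : w.phase = x.phase + 1
  e_phase : e.phase = x.phase + 1
  label : e.label = w.label
  letterAcross : e.letterAcross = w.letterAcross
  indexAcross : e.indexAcross = w.indexAcross
  pastDiagonal : e.pastDiagonal = false
  scan : e.scan = none
  scanEnd : ScanEnd K w.indexAlong w.scan
  of_last : isLast w.indexAlong = true → e.indexAlong = none ∧ e.letterAlong = .zero
  of_not_last : isLast w.indexAlong = false →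
    e.indexAlong = some x.label ∧ w.letterAlong.Succ e.letterAlong ∧
      x.atEnd = isLast w.indexAcross ∧ x.atStart = w.indexAcross.isNone

/-- The condition on a line with edges `r`, `r'` at its crossing with a transverse line with edges
`c`, `c'` inside a block. -/
structure Crosses (K : CellularAutomaton G) (r r' c c' : Colour G) : Prop where
  not_atEnd : r.atEnd = false
  not_atStart : r'.atStart = false
  line : r'.toLine = r.toLine
  indexAlong : r.indexAlong = c.indexAcross
  phaseBefore : c.phase = r.phaseBefore
  phaseAfter : c'.phase = r.phaseAfter
  scanStep : ScanStep K r.indexAlong r.scan c.label.1 c.letterAcross r'.scan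
  not_bad : ¬ K.bad r.label.1
  on_diagonal : r.pastDiagonal = false → c.pastDiagonal = false →
    r'.pastDiagonal = true ∧ r.letterAlong = c.letterAcross
  before_diagonal : r.pastDiagonal = false → c.pastDiagonal = true → r'.pastDiagonal = false
  after_diagonal : r.pastDiagonal = true → c.pastDiagonal = false ∧ r'.pastDiagonal = true

/-- The Wang tiles of the tile set. -/
def Tile.Valid (K : CellularAutomaton G) (t : Tile G) : Prop :=
  match t.kind with
  | .plain => Crosses K t.west t.east t.south t.north ∧ Crosses K t.south t.north t.west t.east
  | .rowUnder => t.south = t.north ∧ PassesUnder K t.west t.east t.north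
  | .colUnder => t.west = t.east ∧ PassesUnder K t.south t.north t.east

/-- The condition on four tiles around a vertex, when the south-west one has the indices labelled by
`oi` and `oj` in its block: valid matching tiles, whose edges know their labels and positions. -/
structure FaceValid (K : CellularAutomaton G) (sw se nw ne : Tile G) (oi oj : Option (Label G)) :
    Prop where
  sw_valid : sw.Valid K
  se_valid : se.Valid K
  nw_valid : nw.Valid K
  ne_valid : ne.Valid K
  match_south : sw.east = se.west
  match_north : nw.east = ne.west
  match_west : sw.north = nw.south
  match_east : se.north = ne.south
  west_edge : ∀ L, oi = some L →
    sw.north.label = L ∧ sw.north.atEnd = isLast oj ∧ sw.north.atStart = oj.isNone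
  east_edge : isLast oi = false → se.north.atEnd = isLast oj ∧ se.north.atStart = oj.isNone
  south_edge : ∀ L, oj = some L →
    sw.east.label = L ∧ sw.east.atEnd = isLast oi ∧ sw.east.atStart = oi.isNone
  north_edge : isLast oj = false → nw.east.atEnd = isLast oi ∧ nw.east.atStart = oi.isNone

variable {K : CellularAutomaton G}

/-- The kind of the reflection of a tile in the diagonal. -/
def TileKind.transpose : TileKind → TileKind
  | .plain => .plain
  | .rowUnder => .colUnder
  | .colUnder => .rowUnder

/-- The reflection of a tile in the diagonal. -/
def Tile.transpose (t : Tile G) : Tile G := ⟨t.south, t.north, t.west, t.east, t.kind.transpose⟩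

theorem Tile.Valid.transpose {t : Tile G} (h : t.Valid K) : t.transpose.Valid K := by
  rcases t with ⟨w, e, s, n, kind⟩
  cases kind
  · exact h.symm
  · exact h
  · exact h

theorem FaceValid.transpose {sw se nw ne : Tile G} {oi oj : Option (Label G)}
    (h : FaceValid K sw se nw ne oi oj) :
    FaceValid K sw.transpose nw.transpose se.transpose ne.transpose oj oi :=
  ⟨h.sw_valid.transpose, h.nw_valid.transpose, h.se_valid.transpose, h.ne_valid.transpose,
    h.match_west, h.match_east, h.match_south, h.match_north,
    h.south_edge, h.north_edge, h.west_edge, h.east_edge⟩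

/-- The label of the index `i` in blocks with indices `0, …, m`. -/
def indexLabel (m : ℤ) (γ : ℤ → G) (i : ℤ) : Option (Label G) :=
  if i = 0 then none else some (γ i, decide (i = m))

variable {m : ℤ} {γ : ℤ → G}

theorem indexLabel_zero : indexLabel m γ 0 = none := if_pos rfl

theorem indexLabel_of_ne_zero {i : ℤ} (h : i ≠ 0) :
    indexLabel m γ i = some (γ i, decide (i = m)) := if_neg h

theorem isLast_indexLabel {i : ℤ} (hm : m ≠ 0) :
    isLast (indexLabel m γ i) = decide (i = m) := by
  rcases eq_or_ne i 0 with rfl | h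
  · simp [indexLabel_zero, isLast, hm.symm]
  · simp [indexLabel_of_ne_zero h, isLast]

theorem isNone_indexLabel {i : ℤ} : (indexLabel m γ i).isNone = decide (i = 0) := by
  rcases eq_or_ne i 0 with rfl | h
  · simp [indexLabel_zero]
  · simp [indexLabel_of_ne_zero h, h]

/-- The letter at position `a` of the word encoding the index `i`. -/
def letter (i a : ℤ) : Letter :=
  if i = 0 then .zero else if i = 1 then .one else
    if a < i - 1 then .below else if a = i - 1 then .pivot else .above

theorem letter_zero (a : ℤ) : letter 0 a = .zero := rfl

theorem letter_one (a : ℤ) : letter 1 a = .one := rfl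

theorem letter_of_lt {i a : ℤ} (ha : 1 ≤ a) (h : a + 1 < i) : letter i a = .below := by
  rw [letter, if_neg (by lia), if_neg (by lia), if_pos (by lia)]

theorem letter_add_one {a : ℤ} (ha : 1 ≤ a) : letter (a + 1) a = .pivot := by
  rw [letter, if_neg (by lia), if_neg (by lia), if_neg (by lia), if_pos (by lia)]

theorem letter_sub_one {i : ℤ} (hi : 2 ≤ i) : letter i (i - 1) = .pivot := by
  simpa only [sub_add_cancel] using letter_add_one (show 1 ≤ i - 1 by lia)

theorem letter_of_ge {i a : ℤ} (hi : 2 ≤ i) (h : i ≤ a) : letter i a = .above := by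
  rw [letter, if_neg (by lia), if_neg (by lia), if_neg (by lia), if_neg (by lia)]

theorem letter_injective {i j : ℤ} (hm : 2 ≤ m) (hi : 0 ≤ i) (him : i ≤ m + 2) (hj : 0 ≤ j)
    (hjm : j ≤ m + 2) (h : ∀ a, 1 ≤ a → a ≤ m → letter i a = letter j a) : i = j := by
  by_contra hne
  wlog hlt : i < j generalizing i j
  · exact this hj hjm hi him (fun a ha ham => (h a ha ham).symm) (Ne.symm hne) (by lia)
  by_cases hi1 : i ≤ 1
  · have h1 := h 1 le_rfl (by lia)
    unfold letter at h1
    split_ifs at h1 <;> lia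
  · have h1 := h (i - 1) (by lia) (by lia)
    unfold letter at h1
    split_ifs at h1 <;> lia

theorem letter_succ {i a : ℤ} (hi : 0 ≤ i) (ha : 1 ≤ a) :
    (letter i a).Succ (letter (i + 1) a) := by
  rcases hi.eq_or_lt with rfl | hi
  · rfl
  rcases (show i = 1 ∧ a = 1 ∨ i = 1 ∧ 2 ≤ a ∨ 2 ≤ i ∧ i < a ∨ 2 ≤ i ∧ i = a ∨
    2 ≤ i ∧ a = i - 1 ∨ a + 1 < i by lia) with
    ⟨rfl, rfl⟩ | ⟨rfl, h⟩ | ⟨hi, h⟩ | ⟨hi, rfl⟩ | ⟨hi, rfl⟩ | h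
  · exact Or.inl rfl
  · exact Or.inr (letter_of_ge le_rfl h)
  · rw [letter_of_ge hi h.le]
    exact Or.inr (letter_of_ge (by lia) h)
  · rw [letter_of_ge hi le_rfl]
    exact Or.inl (letter_add_one ha)
  · rw [letter_sub_one hi, letter_of_lt ha (by lia)]
    rfl
  · rw [letter_of_lt ha h, letter_of_lt ha (by lia)]
    rfl

theorem eq_add_one_of_letter_succ {i j : ℤ} (hm : 2 ≤ m) (hi : 0 ≤ i) (him : i < m + 2)
    (hj : 0 ≤ j) (hjm : j ≤ m + 2)
    (h : ∀ a, 1 ≤ a → a ≤ m → (letter i a).Succ (letter j a)) : j = i + 1 := by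
  by_cases hi1 : i ≤ 1
  · have h1 := h 1 le_rfl (by lia)
    unfold letter at h1
    split_ifs at h1 <;> simp only [Letter.Succ, reduceCtorEq, or_self] at h1 <;> lia
  · have h1 := h (i - 1) (by lia) (by lia)
    have h2 : i ≤ m → (letter i i).Succ (letter j i) := fun him => h i (by lia) him
    unfold letter at h1 h2
    split_ifs at h1 h2 <;> simp only [Letter.Succ, reduceCtorEq, or_self] at h1 h2 <;> lia

theorem letter_next (i a : ℤ) : (letter i a).Next (letter i (a + 1)) := by
  unfold letter
  split_ifs <;> first | lia | simp [Letter.Next]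

theorem exists_letter_extending {i : ℤ} {l : Letter} (hm : 1 ≤ m) (hi : 0 ≤ i) (him : i ≤ m + 2)
    (hnext : (letter i m).Next l) :
    ∃ j, 0 ≤ j ∧ j ≤ m + 3 ∧ (∀ a, 1 ≤ a → a ≤ m → letter j a = letter i a) ∧
      l = letter j (m + 1) := by
  rcases (show i = 0 ∨ i = 1 ∨ 2 ≤ i ∧ i ≤ m ∨ i = m + 1 ∨ i = m + 2 by lia) with
    rfl | rfl | ⟨hi2, him⟩ | rfl | rfl
  · exact ⟨0, le_rfl, by lia, fun _ _ _ => rfl, hnext⟩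
  · exact ⟨1, by lia, by lia, fun _ _ _ => rfl, hnext⟩
  · rw [letter_of_ge hi2 him] at hnext
    exact ⟨i, hi, by lia, fun _ _ _ => rfl, hnext.trans (letter_of_ge hi2 (by lia)).symm⟩
  · rw [letter_add_one hm] at hnext
    exact ⟨m + 1, hi, by lia, fun _ _ _ => rfl, hnext.trans (letter_of_ge (by lia) le_rfl).symm⟩
  · rw [letter_of_lt hm (by lia)] at hnext
    rcases hnext with hbelow | hpivot
    · refine ⟨m + 3, by lia, by lia, fun a ha ham => ?_, ?_⟩
      · rw [letter_of_lt ha (by lia), letter_of_lt ha (by lia)]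
      · rw [letter_of_lt (by lia) (by lia), hbelow]
    · exact ⟨m + 2, hi, by lia, fun _ _ _ => rfl,
        by rw [hpivot, show m + 2 = m + 1 + 1 by ring, letter_add_one (by lia)]⟩

theorem exists_eq_letter {u : ℤ → Letter} (hm : 1 ≤ m) (hu : u 1 ≠ .above)
    (hnext : ∀ a, 1 ≤ a → a + 1 ≤ m → (u a).Next (u (a + 1))) :
    ∃ i, 0 ≤ i ∧ i ≤ m + 2 ∧ ∀ a, 1 ≤ a → a ≤ m → u a = letter i a := by
  induction m, hm using Int.leInduction with
  | base =>
    suffices ∃ i, 0 ≤ i ∧ i ≤ 3 ∧ u 1 = letter i 1 by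
      obtain ⟨i, hi, him, h⟩ := this
      exact ⟨i, hi, him, fun a ha ham => by rwa [le_antisymm ham ha]⟩
    cases h : u 1
    · exact ⟨0, by lia, by lia, rfl⟩
    · exact ⟨1, by lia, by lia, rfl⟩
    · exact ⟨3, by lia, by lia, rfl⟩
    · exact ⟨2, by lia, by lia, rfl⟩
    · exact absurd h hu
  | succ m hm ih =>
    obtain ⟨i, hi, him, h⟩ := ih fun a ha ham => hnext a ha (by lia)
    have hnext_m := hnext m hm le_rfl
    rw [h m hm le_rfl] at hnext_m
    obtain ⟨j, hj, hjm, hji, hm1⟩ := exists_letter_extending hm hi him hnext_m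
    refine ⟨j, hj, by lia, fun a ha ham => ?_⟩
    rcases (show a ≤ m ∨ a = m + 1 by lia) with ham | rfl
    · rw [h a ha ham, hji a ha ham]
    · exact hm1

theorem scan_eq {o : Option (Label G)} {u : ℤ → Letter}
    {s : ℤ → Option (Letter × G × G)} (hγ : γ 0 = K.blank) (h0 : s 0 = none)
    (hs : ∀ a, 1 ≤ a → a ≤ m → ScanStep K o (s (a - 1)) (γ a) (u a) (s a)) {a : ℤ} (ha : 1 ≤ a)
    (ham : a ≤ m) : s a = some (u a, γ a, γ (a - 1)) := by
  induction a, ha using Int.leInduction with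
  | base =>
    have h := hs 1 le_rfl ham
    rw [sub_self, h0] at h
    rw [h.1, sub_self, hγ]
  | succ a ha ih =>
    have h := hs (a + 1) (by lia) ham
    rw [add_sub_cancel_right, ih (by lia)] at h
    rw [h.1, add_sub_cancel_right]

theorem indexLabel_step_eq_of_scan {o : Option (Label G)} {s : ℤ → Option (Letter × G × G)}
    (hm : 1 ≤ m) (hγ : ∀ i, i < 1 ∨ m < i → γ i = K.blank) (h0 : s 0 = none) {i : ℤ}
    (hi : 0 ≤ i) (him : i ≤ m + 2)
    (hs : ∀ a, 1 ≤ a → a ≤ m → ScanStep K o (s (a - 1)) (γ a) (letter i a) (s a))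
    (hend : ScanEnd K o (s m)) : o = indexLabel (m + 2) (K.step γ) i := by
  have hscan := fun a ha ham => scan_eq (hγ 0 (by lia)) h0 hs (a := a) ha ham
  have h1 := hs 1 le_rfl hm
  rw [sub_self, h0] at h1
  rw [hscan m hm le_rfl] at hend
  rcases (show i = 0 ∨ i = 1 ∨ 2 ≤ i ∧ i ≤ m ∨ 2 ≤ i ∧ i = m + 1 ∨ i = m + 2 by lia) with
    rfl | rfl | ⟨hi2, him⟩ | ⟨hi2, rfl⟩ | rfl
  · exact h1.2.2.1 (letter_zero 1)
  · rw [h1.2.2.2 (letter_one 1), indexLabel_of_ne_zero one_ne_zero, CellularAutomaton.step,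
      hγ (1 - 2) (by lia), hγ (1 - 1) (by lia), decide_eq_false (by lia)]
  · have h := hs i (by lia) him
    rw [hscan (i - 1) (by lia) (by lia)] at h
    rw [h.2.2 (letter_sub_one hi2), indexLabel_of_ne_zero (by lia), CellularAutomaton.step,
      decide_eq_false (by lia), sub_sub, one_add_one_eq_two]
  · rw [hend.1 (letter_add_one hm), indexLabel_of_ne_zero (by lia), CellularAutomaton.step,
      hγ (m + 1) (by lia), decide_eq_false (by lia), add_sub_cancel_right,
      show m + 1 - 2 = m - 1 by ring]
  · rw [hend.2 (letter_of_lt hm (by lia)), indexLabel_of_ne_zero (by lia), CellularAutomaton.step,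
      hγ (m + 2 - 1) (by lia), hγ (m + 2) (by lia), decide_eq_true rfl, add_sub_cancel_right]

theorem exists_index_of_scan {o : Option (Label G)} {u : ℤ → Letter}
    {s : ℤ → Option (Letter × G × G)} (hm : 1 ≤ m)
    (hγ : ∀ i, i < 1 ∨ m < i → γ i = K.blank) (h0 : s 0 = none)
    (hs : ∀ a, 1 ≤ a → a ≤ m → ScanStep K o (s (a - 1)) (γ a) (u a) (s a))
    (hend : ScanEnd K o (s m)) :
    ∃ i, 0 ≤ i ∧ i ≤ m + 2 ∧ o = indexLabel (m + 2) (K.step γ) i ∧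
      ∀ a, 1 ≤ a → a ≤ m → u a = letter i a := by
  have h1 := hs 1 le_rfl hm
  rw [sub_self, h0] at h1
  have hnext : ∀ a, 1 ≤ a → a + 1 ≤ m → (u a).Next (u (a + 1)) := fun a ha ham => by
    have h := hs (a + 1) (by lia) ham
    rw [add_sub_cancel_right, scan_eq (hγ 0 (by lia)) h0 hs ha (by lia)] at h
    exact h.2.1
  obtain ⟨i, hi, him, hu⟩ := exists_eq_letter hm h1.2.1 hnext
  refine ⟨i, hi, him, indexLabel_step_eq_of_scan hm hγ h0 hi him (fun a ha ham => ?_) hend, hu⟩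
  rw [← hu a ha ham]
  exact hs a ha ham

end Rules

section Blocks

variable {G : Type*} {K : CellularAutomaton G} {m : ℤ} {γ : ℤ → G} {x : ℤ → ℤ → Tile G}

/-- The tiles with indices `0, …, m` in both directions form a block with cell states `γ`; the
indices `m + 1` are those of the first line and column of the adjacent blocks. -/
structure IsBlock (K : CellularAutomaton G) (m : ℤ) (γ : ℤ → G) (x : ℤ → ℤ → Tile G) : Prop where
  two_le : 2 ≤ m
  blank : ∀ i, i < 1 ∨ m < i → γ i = K.blank
  face : ∀ i j, 0 ≤ i → i ≤ m → 0 ≤ j → j ≤ m →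
    FaceValid K (x i j) (x (i + 1) j) (x i (j + 1)) (x (i + 1) (j + 1))
      (indexLabel m γ i) (indexLabel m γ j)

/-- The reflection of a pattern of tiles in the diagonal. -/
def transpose (x : ℤ → ℤ → Tile G) : ℤ → ℤ → Tile G := fun a b => (x b a).transpose

theorem transpose_transpose (x : ℤ → ℤ → Tile G) : transpose (transpose x) = x := by
  funext a b
  rcases h : x a b with ⟨w, e, s, n, kind⟩
  cases kind <;> simp only [transpose, h] <;> rfl

namespace IsBlock

theorem transpose (h : IsBlock K m γ x) : IsBlock K m γ (transpose x) :=
  ⟨h.two_le, h.blank, fun i j hi him hj hjm => (h.face j i hj hjm hi him).transpose⟩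

theorem valid (h : IsBlock K m γ x) {a b : ℤ} (ha : 0 ≤ a) (ham : a ≤ m + 1) (hb : 0 ≤ b)
    (hbm : b ≤ m + 1) : (x a b).Valid K := by
  have hm := h.two_le
  rcases ham.lt_or_eq with ham | rfl <;> rcases hbm.lt_or_eq with hbm | rfl
  · exact (h.face a b ha (by lia) hb (by lia)).sw_valid
  · exact (h.face a m ha (by lia) (by lia) le_rfl).nw_valid
  · exact (h.face m b (by lia) le_rfl hb (by lia)).se_valid
  · exact (h.face m m (by lia) le_rfl (by lia) le_rfl).ne_valid

theorem west_eq_east (h : IsBlock K m γ x) {a b : ℤ} (ha : 1 ≤ a) (ham : a ≤ m + 1) (hb : 0 ≤ b)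
    (hbm : b ≤ m) : (x a b).west = (x (a - 1) b).east := by
  have F := h.face (a - 1) b (by lia) (by lia) hb hbm
  rw [sub_add_cancel] at F
  exact F.match_south.symm

theorem row_label_and_flags (h : IsBlock K m γ x) {a b : ℤ} (ha : 0 ≤ a) (ham : a ≤ m) (hb : 1 ≤ b)
    (hbm : b ≤ m) : (x a b).east.label = (γ b, decide (b = m)) ∧
      (x a b).east.atEnd = decide (a = m) ∧ (x a b).east.atStart = decide (a = 0) := by
  have hm := h.two_le
  have S := (h.face a b ha ham (by lia) hbm).south_edge _ (indexLabel_of_ne_zero (by lia))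
  rwa [isLast_indexLabel (by lia), isNone_indexLabel] at S

theorem kind_ne_rowUnder (h : IsBlock K m γ x) {a b : ℤ} (ha : 1 ≤ a) (ham : a ≤ m) (hb : 1 ≤ b)
    (hbm : b ≤ m) : (x a b).kind ≠ .rowUnder := by
  intro hkind
  have R := h.valid (a := a) (b := b) (by lia) (by lia) (by lia) (by lia)
  simp only [Tile.Valid, hkind] at R
  have hend := R.2.w_atEnd
  rw [h.west_eq_east ha (by lia) (by lia) hbm,
    (h.row_label_and_flags (by lia) (by lia) hb hbm).2.1, decide_eq_true_eq] at hend
  lia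

theorem crosses (h : IsBlock K m γ x) {a b : ℤ} (ha : 1 ≤ a) (ham : a ≤ m) (hb : 1 ≤ b)
    (hbm : b ≤ m) :
    Crosses K (x (a - 1) b).east (x a b).east (x a (b - 1)).north (x a b).north := by
  have R := h.valid (a := a) (b := b) (by lia) (by lia) (by lia) (by lia)
  have hrow := h.kind_ne_rowUnder ha ham hb hbm
  have hcol := h.transpose.kind_ne_rowUnder hb hbm ha ham
  have hwest := h.west_eq_east (a := a) (b := b) ha (by lia) (by lia) hbm
  have hsouth : (x a b).south = (x a (b - 1)).north :=
    h.transpose.west_eq_east (a := b) (b := a) hb (by lia) (by lia) ham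
  rw [← hwest, ← hsouth]
  change (x a b).kind.transpose ≠ .rowUnder at hcol
  cases hkind : (x a b).kind
  · rw [Tile.Valid, hkind] at R
    exact R.1
  · exact absurd hkind hrow
  · exact absurd (by rw [hkind]; rfl) hcol

theorem toLine_east (h : IsBlock K m γ x) {a b : ℤ} (ha : 0 ≤ a) (ham : a ≤ m) (hb : 1 ≤ b)
    (hbm : b ≤ m) : (x a b).east.toLine = (x 0 b).east.toLine := by
  induction a, ha using Int.leInduction with
  | base => rfl
  | succ a ha ih =>
    have hline := (h.crosses (a := a + 1) (by lia) ham hb hbm).line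
    rw [add_sub_cancel_right] at hline
    rw [hline, ih (by lia)]

theorem toLine_north (h : IsBlock K m γ x) {a b : ℤ} (ha : 1 ≤ a) (ham : a ≤ m) (hb : 0 ≤ b)
    (hbm : b ≤ m) : (x a b).north.toLine = (x a 0).north.toLine :=
  h.transpose.toLine_east hb hbm ha ham

theorem not_bad (h : IsBlock K m γ x) {a : ℤ} (ha : 1 ≤ a) (ham : a ≤ m) : ¬ K.bad (γ a) := by
  have hbad := (h.crosses (a := 1) (b := a) le_rfl (by lia) ha ham).not_bad
  rwa [(h.row_label_and_flags (by lia) (by lia) ha ham).1] at hbad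

theorem phase_east_first (h : IsBlock K m γ x) {b : ℤ} (hb : 1 ≤ b) (hbm : b ≤ m) :
    (x 0 b).east.phase = (x 1 0).north.phaseBefore := by
  have hm := h.two_le
  have hphase : (x (1 - 1) b).east.phase = (x 1 (b - 1)).north.phaseBefore :=
    (h.transpose.crosses (a := b) (b := 1) hb hbm le_rfl (by lia)).phaseBefore
  rwa [sub_self, h.toLine_north le_rfl (by lia) (by lia) (by lia)] at hphase

theorem phase_east_last (h : IsBlock K m γ x) {b : ℤ} (hb : 1 ≤ b) (hbm : b ≤ m) :
    (x m b).east.phase = (x m 0).north.phaseAfter := by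
  have hm := h.two_le
  have hphase : (x m b).east.phase = (x m (b - 1)).north.phaseAfter :=
    (h.transpose.crosses (a := b) (b := m) hb hbm (by lia) le_rfl).phaseAfter
  rwa [h.toLine_north (by lia) le_rfl (by lia) (by lia)] at hphase

end IsBlock

/-- The phases and flags exclude `colUnder` tiles from a column of border tiles: next to each other,
two of them disagree on the flags, and next to a `rowUnder` tile they disagree on the phases. -/
theorem kind_eq_rowUnder_of_column (hm : 2 ≤ m) {t : ℤ → Tile G} {p : ZMod 3}
    (hmatch : ∀ b, 1 ≤ b → b + 1 ≤ m → (t b).north = (t (b + 1)).south)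
    (hvalid : ∀ b, 1 ≤ b → b ≤ m → (t b).Valid K)
    (hplain : ∀ b, 1 ≤ b → b ≤ m → (t b).kind ≠ .plain)
    (hphase : ∀ b, 1 ≤ b → b ≤ m → (t b).east.phase = p ∨ (t b).west.phase = p)
    {b : ℤ} (hb : 1 ≤ b) (hbm : b ≤ m) : (t b).kind = .rowUnder := by
  have edges : ∀ b, 1 ≤ b → b ≤ m →
      ((t b).south = (t b).north ∧ p = (t b).north.phase + 1 ∧ (t b).kind = .rowUnder) ∨
      ((t b).south.phase = p + 1 ∧ (t b).north.phase = p + 1 ∧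
        (t b).south.atStart = false ∧ (t b).north.atStart = true) := by
    intro b hb hbm
    have R := hvalid b hb hbm
    cases hkind : (t b).kind
    · exact absurd hkind (hplain b hb hbm)
    · simp only [Tile.Valid, hkind] at R
      refine Or.inl ⟨R.1, ?_, rfl⟩
      rcases hphase b hb hbm with hp | hp
      · rw [← hp, R.2.e_phase]
      · rw [← hp, R.2.w_phase]
    · simp only [Tile.Valid, hkind] at R
      have hp : (t b).east.phase = p := by simpa only [R.1, or_self] using hphase b hb hbm
      exact Or.inr ⟨by rw [R.2.w_phase, hp], by rw [R.2.e_phase, hp], R.2.w_atStart,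
        R.2.e_atStart⟩
  have phases_ne : ∀ p q : ZMod 3, p = q + 1 → q ≠ p + 1 := by decide
  have pair : ∀ b, 1 ≤ b → b + 1 ≤ m → (t b).kind = .rowUnder ∧ (t (b + 1)).kind = .rowUnder := by
    intro b hb hbm
    have e := hmatch b hb hbm
    rcases edges b hb (by lia) with ⟨-, p₁, k₁⟩ | ⟨-, p₁, -, s₁⟩ <;>
    rcases edges (b + 1) (by lia) hbm with ⟨e₂, p₂, k₂⟩ | ⟨p₂, -, s₂, -⟩
    · exact ⟨k₁, k₂⟩
    · exact absurd p₂ (phases_ne _ _ (by rwa [← e]))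
    · exact absurd p₁ (phases_ne _ _ (by rwa [e, e₂]))
    · rw [← e, s₁] at s₂
      exact absurd s₂ (by decide)
  rcases hbm.lt_or_eq with hlt | rfl
  · exact (pair b hb hlt).1
  · have := (pair (b - 1) (by lia) (by lia)).2
    rwa [sub_add_cancel] at this

theorem north_eq_of_straight (hm : 0 ≤ m) {t : ℤ → Tile G}
    (hmatch : ∀ b, 0 ≤ b → b ≤ m → (t b).north = (t (b + 1)).south)
    (hstraight : ∀ b, 1 ≤ b → b ≤ m → (t b).south = (t b).north) :
    (t 0).north = (t (m + 1)).south ∧ ∀ b, 0 ≤ b → b ≤ m → (t b).north = (t 0).north := by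
  have hconst : ∀ b, 0 ≤ b → b ≤ m → (t b).north = (t 0).north := by
    intro b hb hbm
    induction b, hb using Int.leInduction with
    | base => rfl
    | succ b hb ih =>
      rw [← hstraight _ (by lia) hbm, ← hmatch _ hb (by lia), ih (by lia)]
  exact ⟨by rw [← hmatch m hm le_rfl, hconst m hm le_rfl], hconst⟩

namespace IsBlock

theorem kind_first (h : IsBlock K m γ x) {b : ℤ} (hb : 1 ≤ b) (hbm : b ≤ m) :
    (x 0 b).kind = .rowUnder := by
  have hm := h.two_le
  refine kind_eq_rowUnder_of_column (K := K) (t := x 0) hm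
    (fun b hb hbm => (h.face 0 b le_rfl (by lia) (by lia) (by lia)).match_west)
    (fun b hb hbm => h.valid le_rfl (by lia) (by lia) (by lia)) (fun b hb hbm hkind => ?_)
    (fun b hb hbm => Or.inl (h.phase_east_first hb hbm)) hb hbm
  have R := h.valid (a := 0) (b := b) le_rfl (by lia) (by lia) (by lia)
  simp only [Tile.Valid, hkind] at R
  have hstart := R.1.not_atStart
  rw [(h.row_label_and_flags le_rfl (by lia) hb hbm).2.2] at hstart
  exact absurd hstart (by decide)

theorem kind_last (h : IsBlock K m γ x) {b : ℤ} (hb : 1 ≤ b) (hbm : b ≤ m) :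
    (x (m + 1) b).kind = .rowUnder := by
  have hm := h.two_le
  have hwest : ∀ b, 1 ≤ b → b ≤ m → (x (m + 1) b).west = (x m b).east := fun b hb hbm => by
    rw [h.west_eq_east (by lia) le_rfl (by lia) hbm, add_sub_cancel_right]
  refine kind_eq_rowUnder_of_column (K := K) (t := x (m + 1)) hm
    (fun b hb hbm => (h.face m b (by lia) le_rfl (by lia) (by lia)).match_east)
    (fun b hb hbm => h.valid (by lia) le_rfl (by lia) (by lia)) (fun b hb hbm hkind => ?_)
    (fun b hb hbm => Or.inr (by rw [hwest b hb hbm, h.phase_east_last hb hbm])) hb hbm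
  have R := h.valid (a := m + 1) (b := b) (by lia) le_rfl (by lia) (by lia)
  simp only [Tile.Valid, hkind] at R
  have hend := R.1.not_atEnd
  rw [hwest b hb hbm, (h.row_label_and_flags (by lia) le_rfl hb hbm).2.1] at hend
  exact absurd hend (by simp)

theorem passesUnder_first (h : IsBlock K m γ x) {b : ℤ} (hb : 1 ≤ b) (hbm : b ≤ m) :
    (x 0 b).south = (x 0 b).north ∧ PassesUnder K (x 0 b).west (x 0 b).east (x 0 b).north := by
  have hm := h.two_le
  have R := h.valid (a := 0) (b := b) le_rfl (by lia) (by lia) (by lia)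
  rwa [Tile.Valid, h.kind_first hb hbm] at R

theorem passesUnder_last (h : IsBlock K m γ x) {b : ℤ} (hb : 1 ≤ b) (hbm : b ≤ m) :
    (x (m + 1) b).south = (x (m + 1) b).north ∧
      PassesUnder K (x m b).east (x (m + 1) b).east (x (m + 1) b).north := by
  have hm := h.two_le
  have R := h.valid (a := m + 1) (b := b) (by lia) le_rfl (by lia) (by lia)
  have hwest := h.west_eq_east (a := m + 1) (b := b) (by lia) le_rfl (by lia) hbm
  rw [add_sub_cancel_right] at hwest
  rwa [Tile.Valid, h.kind_last hb hbm, hwest] at R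

theorem border_first (h : IsBlock K m γ x) : (x 0 0).north = (x 0 (m + 1)).south ∧
    ∀ b, 0 ≤ b → b ≤ m → (x 0 b).north = (x 0 0).north := by
  have hm := h.two_le
  exact north_eq_of_straight (t := x 0) (by lia)
    (fun b hb hbm => (h.face 0 b le_rfl (by lia) hb hbm).match_west)
    (fun b hb hbm => (h.passesUnder_first hb hbm).1)

theorem border_last (h : IsBlock K m γ x) : (x (m + 1) 0).north = (x (m + 1) (m + 1)).south ∧
    ∀ b, 0 ≤ b → b ≤ m → (x (m + 1) b).north = (x (m + 1) 0).north := by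
  have hm := h.two_le
  exact north_eq_of_straight (t := x (m + 1)) (by lia)
    (fun b hb hbm => (h.face m b (by lia) le_rfl hb hbm).match_east)
    (fun b hb hbm => (h.passesUnder_last hb hbm).1)

theorem pastDiagonal_east_of_prev (h : IsBlock K m γ x) {a b : ℤ} (ha : 1 ≤ a) (ham : a ≤ m)
    (hb : 1 ≤ b) (hbm : b ≤ m)
    (hprev : 2 ≤ a → (x (a - 2) b).east.pastDiagonal = decide (b < a - 1) ∧
      (x (a - 1) (b - 1)).north.pastDiagonal = decide (a - 1 < b)) :
    (x (a - 1) b).east.pastDiagonal = decide (b < a) := by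
  rcases ha.eq_or_lt with rfl | ha
  · rw [sub_self, (h.passesUnder_first hb hbm).2.pastDiagonal, decide_eq_false (by lia)]
  obtain ⟨hrow, hcol⟩ := hprev ha
  have H := h.crosses (a := a - 1) (by lia) (by lia) hb hbm
  rw [show a - 1 - 1 = a - 2 by ring] at H
  rcases lt_trichotomy b (a - 1) with hlt | heq | hgt
  · rw [(H.after_diagonal (by rw [hrow, decide_eq_true hlt])).2, decide_eq_true (by lia)]
  · rw [(H.on_diagonal (by rw [hrow, decide_eq_false (by lia)])
      (by rw [hcol, decide_eq_false (by lia)])).1, decide_eq_true (by lia)]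
  · rw [H.before_diagonal (by rw [hrow, decide_eq_false (by lia)])
      (by rw [hcol, decide_eq_true hgt]), decide_eq_false (by lia)]

theorem pastDiagonal (h : IsBlock K m γ x) {a b : ℤ} (ha : 1 ≤ a) (ham : a ≤ m) (hb : 1 ≤ b)
    (hbm : b ≤ m) : (x (a - 1) b).east.pastDiagonal = decide (b < a) ∧
      (x a (b - 1)).north.pastDiagonal = decide (a < b) := by
  induction hN : (a + b).toNat using Nat.strong_induction_on generalizing a b with
  | _ N ih =>
  subst hN
  refine ⟨h.pastDiagonal_east_of_prev ha ham hb hbm fun h2 => ?_,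
    h.transpose.pastDiagonal_east_of_prev hb hbm ha ham fun h2 => ?_⟩
  · simpa only [sub_sub, one_add_one_eq_two] using
      ih _ (by lia) (a := a - 1) (by lia) (by lia) hb hbm rfl
  · have hprev := (ih _ (by lia) ha ham (b := b - 1) (by lia) (by lia) rfl).symm
    simp only [sub_sub, one_add_one_eq_two] at hprev
    exact hprev

/-- The crossings on the diagonal copy the word of the columns to the rows. -/
theorem letterAlong_eq_letterAcross (h : IsBlock K m γ x) {b : ℤ} (hb : 1 ≤ b) (hbm : b ≤ m) :
    (x 0 b).east.letterAlong = (x b 0).north.letterAcross := by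
  obtain ⟨hrow, hcol⟩ := h.pastDiagonal hb hbm hb hbm
  have hcopy := ((h.crosses hb hbm hb hbm).on_diagonal (by rw [hrow, decide_eq_false (by lia)])
    (by rw [hcol, decide_eq_false (by lia)])).2
  rwa [h.toLine_east (by lia) (by lia) hb hbm, h.toLine_north hb hbm (by lia) (by lia)] at hcopy

theorem indexAlong_eq_indexAcross (h : IsBlock K m γ x) {a b : ℤ} (ha : 1 ≤ a) (ham : a ≤ m)
    (hb : 1 ≤ b) (hbm : b ≤ m) : (x 0 b).east.indexAlong = (x a 0).north.indexAcross := by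
  have hindex := (h.crosses ha ham hb hbm).indexAlong
  rwa [h.toLine_east (by lia) (by lia) hb hbm, h.toLine_north ha ham (by lia) (by lia)] at hindex

theorem exists_index_of_columns (h : IsBlock K m γ x) : ∃ i, 0 ≤ i ∧ i ≤ m + 2 ∧
    (x 0 1).east.indexAlong = indexLabel (m + 2) (K.step γ) i ∧
    ∀ a, 1 ≤ a → a ≤ m → (x a 0).north.letterAcross = letter i a := by
  have hm := h.two_le
  have hline := fun a ha ham => h.toLine_east (a := a) (b := 1) ha ham le_rfl (by lia)
  refine exists_index_of_scan (s := fun a => (x a 1).east.scan) (by lia) h.blank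
    (h.passesUnder_first le_rfl (by lia)).2.scan (fun a ha ham => ?_) ?_
  · have S := (h.crosses (b := 1) ha ham le_rfl (by lia)).scanStep
    rw [hline (a - 1) (by lia) (by lia), sub_self] at S
    have hlabel : (x a 0).north.label = (γ a, decide (a = m)) :=
      (h.transpose.row_label_and_flags (a := 0) (b := a) (by lia) (by lia) ha ham).1
    rwa [hlabel] at S
  · have hend := (h.passesUnder_last (b := 1) le_rfl (by lia)).2.scanEnd
    rwa [hline m (by lia) le_rfl] at hend

end IsBlock

/-- The rows of the block encode the indices `i` and `j` of the simulated tile. -/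
structure RowsEncode (K : CellularAutomaton G) (m : ℤ) (γ : ℤ → G) (x : ℤ → ℤ → Tile G)
    (i j : ℤ) : Prop where
  nonneg : 0 ≤ i
  le : i ≤ m + 2
  indexAlong : ∀ b, 1 ≤ b → b ≤ m →
    (x 0 b).east.indexAlong = indexLabel (m + 2) (K.step γ) i
  indexAcross : ∀ b, 1 ≤ b → b ≤ m →
    (x 0 b).east.indexAcross = indexLabel (m + 2) (K.step γ) j
  letterAlong : ∀ b, 1 ≤ b → b ≤ m → (x 0 b).east.letterAlong = letter i b
  letterAcross : ∀ b, 1 ≤ b → b ≤ m → (x 0 b).east.letterAcross = letter j b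

/-- A block simulating a tile with indices `i` and `j` in a block of the next level. -/
structure SimulatesAt (K : CellularAutomaton G) (m : ℤ) (γ : ℤ → G) (x : ℤ → ℤ → Tile G)
    (i j : ℤ) : Prop where
  isBlock : IsBlock K m γ x
  rows : RowsEncode K m γ x i j
  cols : RowsEncode K m γ (transpose x) j i

theorem SimulatesAt.transpose {i j : ℤ} (h : SimulatesAt K m γ x i j) :
    SimulatesAt K m γ (transpose x) j i :=
  ⟨h.isBlock.transpose, h.cols, by rw [transpose_transpose]; exact h.rows⟩

theorem IsBlock.exists_simulatesAt (h : IsBlock K m γ x) : ∃ i j, SimulatesAt K m γ x i j := by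
  have hm := h.two_le
  obtain ⟨i, hi, him, along_i, across_i⟩ := h.exists_index_of_columns
  obtain ⟨j, hj, hjm, along_j, across_j⟩ := h.transpose.exists_index_of_columns
  have rows_i : ∀ b, 1 ≤ b → b ≤ m →
      (x 0 b).east.indexAlong = indexLabel (m + 2) (K.step γ) i := fun b hb hbm => by
    rw [h.indexAlong_eq_indexAcross (a := 1) le_rfl (by lia) hb hbm,
      ← h.indexAlong_eq_indexAcross (a := 1) le_rfl (by lia) le_rfl (by lia), along_i]
  have cols_j : ∀ a, 1 ≤ a → a ≤ m →
      (x a 0).north.indexAlong = indexLabel (m + 2) (K.step γ) j := fun a ha ham =>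
    (h.transpose.indexAlong_eq_indexAcross (a := 1) le_rfl (by lia) ha ham).trans
      ((h.transpose.indexAlong_eq_indexAcross (a := 1) le_rfl (by lia) le_rfl (by lia)).symm.trans
        along_j)
  refine ⟨i, j, h, ⟨hi, him, rows_i, fun b hb hbm => ?_, fun b hb hbm => ?_, across_j⟩,
    ⟨hj, hjm, cols_j, fun a ha ham => ?_, fun a ha ham => ?_, across_i⟩⟩
  · exact (h.transpose.indexAlong_eq_indexAcross hb hbm (b := 1) le_rfl (by lia)).symm.trans
      along_j
  · rw [h.letterAlong_eq_letterAcross hb hbm, across_i b hb hbm]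
  · exact (h.indexAlong_eq_indexAcross ha ham (b := 1) le_rfl (by lia)).symm.trans along_i
  · exact (h.transpose.letterAlong_eq_letterAcross ha ham).trans (across_j a ha ham)

theorem SimulatesAt.north_edges {i j : ℤ} (h : SimulatesAt K m γ x i j) :
    (∀ L, indexLabel (m + 2) (K.step γ) i = some L → (x 0 0).north.label = L ∧
      (x 0 0).north.atEnd = isLast (indexLabel (m + 2) (K.step γ) j) ∧
      (x 0 0).north.atStart = (indexLabel (m + 2) (K.step γ) j).isNone) ∧
    (isLast (indexLabel (m + 2) (K.step γ) i) = false →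
      (x (m + 1) 0).north.atEnd = isLast (indexLabel (m + 2) (K.step γ) j) ∧
      (x (m + 1) 0).north.atStart = (indexLabel (m + 2) (K.step γ) j).isNone) := by
  have hm := h.isBlock.two_le
  have along := h.rows.indexAlong 1 le_rfl (by lia)
  have across := h.rows.indexAcross 1 le_rfl (by lia)
  constructor
  · intro L hL
    have U := (h.isBlock.passesUnder_first (b := 1) le_rfl (by lia)).2
    rw [h.isBlock.border_first.2 1 (by lia) (by lia)] at U
    cases hlast : isLast (x 0 1).west.indexAlong
    · obtain ⟨hindex, -, hflags⟩ := U.of_not_last hlast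
      rw [← U.indexAcross, across] at hflags
      exact ⟨Option.some.inj (by rw [← hindex, along, hL]), hflags⟩
    · exact absurd ((U.of_last hlast).1.symm.trans (along.trans hL)) (by simp)
  · intro hlast
    have U := (h.isBlock.passesUnder_last (b := 1) le_rfl (by lia)).2
    have hline := h.isBlock.toLine_east (a := m) (b := 1) (by lia) le_rfl le_rfl (by lia)
    rw [h.isBlock.border_last.2 1 (by lia) (by lia)] at U
    have N := U.of_not_last (by rw [hline, along, hlast])
    rw [hline, across] at N
    exact N.2.2

theorem SimulatesAt.faceValid {i j : ℤ} (h : SimulatesAt K m γ x i j) :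
    FaceValid K (x 0 0) (x (m + 1) 0) (x 0 (m + 1)) (x (m + 1) (m + 1))
      (indexLabel (m + 2) (K.step γ) i) (indexLabel (m + 2) (K.step γ) j) := by
  have hm := h.isBlock.two_le
  have hB := h.isBlock
  exact ⟨hB.valid le_rfl (by lia) le_rfl (by lia), hB.valid (by lia) le_rfl le_rfl (by lia),
    hB.valid le_rfl (by lia) (by lia) le_rfl, hB.valid (by lia) le_rfl (by lia) le_rfl,
    hB.transpose.border_first.1, hB.transpose.border_last.1, hB.border_first.1, hB.border_last.1,
    h.north_edges.1, h.north_edges.2, h.transpose.north_edges.1, h.transpose.north_edges.2⟩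

theorem SimulatesAt.index_of_adjacent {y : ℤ → ℤ → Tile G} {i j i' j' : ℤ}
    (h : SimulatesAt K m γ x i j) (h' : SimulatesAt K m γ y i' j')
    (hxy : ∀ b, x (m + 1) b = y 0 b) : i' = (if i = m + 2 then 0 else i + 1) ∧ j' = j := by
  have hm := h.isBlock.two_le
  have him := h.rows.le
  have U : ∀ b, 1 ≤ b → b ≤ m → PassesUnder K (x m b).east (y 0 b).east (y 0 b).north :=
    fun b hb hbm => by simpa only [hxy] using (h.isBlock.passesUnder_last hb hbm).2
  have hline : ∀ b, 1 ≤ b → b ≤ m → (x m b).east.toLine = (x 0 b).east.toLine :=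
    fun b hb hbm => h.isBlock.toLine_east (by lia) le_rfl hb hbm
  have hlast : ∀ b, 1 ≤ b → b ≤ m → isLast (x m b).east.indexAlong = decide (i = m + 2) :=
    fun b hb hbm => by
      rw [hline b hb hbm, h.rows.indexAlong b hb hbm, isLast_indexLabel (by lia)]
  constructor
  · split_ifs with hi
    · refine letter_injective hm h'.rows.nonneg h'.rows.le le_rfl (by lia) fun a ha ham => ?_
      rw [← h'.rows.letterAlong a ha ham,
        ((U a ha ham).of_last (by rw [hlast a ha ham, decide_eq_true hi])).2, letter_zero]
    · refine eq_add_one_of_letter_succ hm h.rows.nonneg (by lia) h'.rows.nonneg h'.rows.le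
        fun a ha ham => ?_
      have hsucc := ((U a ha ham).of_not_last (by rw [hlast a ha ham, decide_eq_false hi])).2.1
      rwa [hline a ha ham, h.rows.letterAlong a ha ham, h'.rows.letterAlong a ha ham] at hsucc
  · refine letter_injective hm h'.cols.nonneg h'.cols.le h.cols.nonneg h.cols.le
      fun a ha ham => ?_
    rw [← h'.rows.letterAcross a ha ham, ← h.rows.letterAcross a ha ham, (U a ha ham).letterAcross,
      hline a ha ham]

end Blocks

/-! ### The snake along the simulated tiles -/

section Snake

/-- The state of the snake, which moves on the faces of the grid (the vertices of the tiling): its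
position, and whether it heads east and north. -/
@[ext] structure Snake where
  X : ℤ
  Y : ℤ
  east : Bool
  north : Bool

/-- The displacement of a step in a direction. -/
def stride (b : Bool) : ℤ := cond b 1 (-1)

/-- The relative coordinate of the tiles of a face that lie in a direction. -/
def corner (b : Bool) : ℤ := cond b 1 0

/-- The last of the indices `0, …, m` in a direction. -/
def farEnd (m : ℤ) (b : Bool) : ℤ := cond b m 0

open Classical in
/-- The step of the snake looks at the corner of the face ahead of it in both directions. If
`under` holds there, which stands for a tile of kind `colUnder`, the snake moves horizontally and
reverses vertically, and otherwise it moves vertically and reverses horizontally. -/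
noncomputable def Snake.next (under : ℤ → ℤ → Prop) (σ : Snake) : Snake :=
  if under (σ.X + corner σ.east) (σ.Y + corner σ.north)
  then ⟨σ.X + stride σ.east, σ.Y, σ.east, !σ.north⟩
  else ⟨σ.X, σ.Y + stride σ.north, !σ.east, σ.north⟩

/-- The snake moves horizontally only at the far end of a column of a block, and there it moves
vertically only at the far end of the block. -/
structure Snake.TurnsAtEnds (m : ℤ) (under : ℤ → ℤ → Prop) (σ : Snake) : Prop where
  horizontal : under (σ.X + corner σ.east) (σ.Y + corner σ.north) →
    σ.Y % (m + 1) = farEnd m σ.north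
  vertical : ¬ under (σ.X + corner σ.east) (σ.Y + corner σ.north) →
    σ.Y % (m + 1) = farEnd m σ.north → σ.X % (m + 1) = farEnd m σ.east

theorem add_one_emod_of_emod_eq {m X : ℤ} (h : X % (m + 1) = m) : (X + 1) % (m + 1) = 0 := by
  have hX := Int.mul_ediv_add_emod X (m + 1)
  exact Int.emod_eq_zero_of_dvd ⟨X / (m + 1) + 1, by linear_combination h - hX⟩

theorem sub_one_emod_of_emod_eq {m X : ℤ} (hm : 0 ≤ m) (h : X % (m + 1) = 0) :
    (X - 1) % (m + 1) = m := by
  obtain ⟨q, rfl⟩ := Int.dvd_of_emod_eq_zero h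
  rw [show (m + 1) * q - 1 = (m + 1) * (q - 1) + m by ring, Int.mul_add_emod_self_left,
    Int.emod_eq_of_lt hm (by lia)]

variable {G : Type*} {K : CellularAutomaton G} {m : ℤ} {γ : ℤ → G} {x : ℤ → ℤ → Tile G}

/-- The positions of the tiles of kind `colUnder`. -/
def isColUnder (x : ℤ → ℤ → Tile G) (a b : ℤ) : Prop := (x a b).kind = .colUnder

/-- The plane is tiled correctly at the face `(X, Y)`, where the indices in the blocks of side
`m + 1` are the remainders of the coordinates. -/
def FaceValidAt (K : CellularAutomaton G) (m : ℤ) (γ : ℤ → G) (x : ℤ → ℤ → Tile G) (X Y : ℤ) :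
    Prop :=
  FaceValid K (x X Y) (x (X + 1) Y) (x X (Y + 1)) (x (X + 1) (Y + 1))
    (indexLabel m γ (X % (m + 1))) (indexLabel m γ (Y % (m + 1)))

namespace FaceValidAt

variable {X Y : ℤ}

theorem transpose (h : FaceValidAt K m γ x X Y) : FaceValidAt K m γ (transpose x) Y X :=
  FaceValid.transpose h

theorem valid (h : FaceValidAt K m γ x X Y) (s t : Bool) :
    (x (X + corner s) (Y + corner t)).Valid K := by
  cases s <;> cases t <;> simp only [corner, cond_true, cond_false, add_zero]
  · exact h.sw_valid
  · exact h.nw_valid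
  · exact h.se_valid
  · exact h.ne_valid

theorem north_eq_south (h : FaceValidAt K m γ x X Y) (s : Bool) :
    (x (X + corner s) Y).north = (x (X + corner s) (Y + 1)).south := by
  cases s <;> simp only [corner, cond_true, cond_false, add_zero]
  · exact h.match_west
  · exact h.match_east

theorem north_flags (hm : m ≠ 0) (h : FaceValidAt K m γ x X Y) {s : Bool}
    (hX : X % (m + 1) ≠ farEnd m s) :
    (x (X + corner s) Y).north.atEnd = decide (Y % (m + 1) = m) ∧
      (x (X + corner s) Y).north.atStart = decide (Y % (m + 1) = 0) := by
  rw [← isLast_indexLabel (γ := γ) hm, ← isNone_indexLabel (m := m) (γ := γ)]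
  cases s <;> simp only [corner, cond_true, cond_false, add_zero]
  · exact (h.west_edge _ (indexLabel_of_ne_zero hX)).2
  · exact h.east_edge (by rw [isLast_indexLabel hm]; exact decide_eq_false hX)

theorem emod_ne_of_south_eq_north (hm : m ≠ 0) (h : FaceValidAt K m γ x X Y)
    (h' : FaceValidAt K m γ x X (Y + 1)) {s : Bool} (hX : X % (m + 1) ≠ farEnd m s)
    (hedge : (x (X + corner s) (Y + 1)).south = (x (X + corner s) (Y + 1)).north) :
    Y % (m + 1) ≠ m := by
  intro hY
  have hend := (h.north_flags hm hX).1
  rw [h.north_eq_south, hedge, (h'.north_flags hm hX).1, hY, add_one_emod_of_emod_eq hY] at hend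
  simp [hm.symm] at hend

theorem emod_ne_of_kind_ne_colUnder (hm : m ≠ 0) (h : FaceValidAt K m γ x X Y)
    (h' : FaceValidAt K m γ x X (Y + 1)) {s : Bool} (hX : X % (m + 1) ≠ farEnd m s)
    (hkind : (x (X + corner s) (Y + 1)).kind ≠ .colUnder) : Y % (m + 1) ≠ m := by
  have R : (x (X + corner s) (Y + 1)).Valid K := h.valid s true
  cases htile : (x (X + corner s) (Y + 1)).kind <;> rw [Tile.Valid, htile] at R
  · have hend := (h.north_flags hm hX).1
    rw [h.north_eq_south, R.2.not_atEnd] at hend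
    exact of_decide_eq_false hend.symm
  · exact h.emod_ne_of_south_eq_north hm h' hX R.1
  · exact absurd htile hkind

theorem emod_eq_farEnd_of_colUnder (hm : m ≠ 0) (h : FaceValidAt K m γ x X Y) {s t : Bool}
    (hX : X % (m + 1) ≠ farEnd m s) (hkind : (x (X + corner s) (Y + corner t)).kind = .colUnder) :
    Y % (m + 1) = farEnd m t := by
  have R := h.valid s t
  rw [Tile.Valid, hkind] at R
  obtain ⟨hend, hstart⟩ := h.north_flags hm hX
  cases t
  · exact of_decide_eq_true (hstart.symm.trans (by simpa [corner] using R.2.e_atStart))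
  · exact of_decide_eq_true <|
      hend.symm.trans ((congrArg _ (h.north_eq_south s)).trans R.2.w_atEnd)

theorem turnsAtEnds {σ : Snake} (hm : 0 < m) (h : FaceValidAt K m γ x σ.X σ.Y)
    (h' : FaceValidAt K m γ x (σ.next (isColUnder x)).X (σ.next (isColUnder x)).Y) :
    σ.TurnsAtEnds m (isColUnder x) := by
  rcases σ with ⟨X, Y, s, t⟩
  constructor
  · intro hunder
    simp only [Snake.next, hunder, if_true] at h'
    by_contra hY
    have R := h.valid s t
    rw [Tile.Valid, show (x (X + corner s) (Y + corner t)).kind = _ from hunder] at R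
    refine hY (h.emod_eq_farEnd_of_colUnder hm.ne' (fun hX => ?_) hunder)
    cases s
    · rw [← sub_add_cancel X 1] at h
      exact h'.transpose.emod_ne_of_south_eq_north hm.ne' h.transpose (s := t) hY
        (by simpa [RFATorsion.transpose, Tile.transpose, corner, stride] using R.1)
        (sub_one_emod_of_emod_eq hm.le hX)
    · exact h.transpose.emod_ne_of_south_eq_north hm.ne' h'.transpose hY R.1 hX
  · intro hunder hY
    simp only [Snake.next, hunder, if_false] at h'
    by_contra hX
    cases t
    · rw [← sub_add_cancel Y 1] at h
      exact h'.emod_ne_of_kind_ne_colUnder hm.ne' h (s := s) hX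
        (by simpa [isColUnder, corner, stride] using hunder) (sub_one_emod_of_emod_eq hm.le hY)
    · exact h.emod_ne_of_kind_ne_colUnder hm.ne' h' hX hunder hY

end FaceValidAt

/-- The pattern of the corners of the blocks of side `M + 1`. -/
def coarsen {α : Type*} (M : ℕ) (f : ℤ → ℤ → α) (a b : ℤ) : α :=
  f ((M + 1) * a) ((M + 1) * b)

namespace Snake

variable {M : ℕ} {under : ℤ → ℤ → Prop} {S σ : Snake}

/-- The index, among `0, …, M`, reached after `c` steps in a direction from the first one. -/
def advance (M : ℕ) (b : Bool) (c : ℕ) : ℤ := cond b (c : ℤ) (M - c)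

theorem advance_mem {b : Bool} {c : ℕ} (hc : c ≤ M) : 0 ≤ advance M b c ∧ advance M b c ≤ M := by
  cases b <;> simp only [advance, cond_true, cond_false] <;> lia

theorem advance_eq_farEnd {b : Bool} {c : ℕ} : advance M b c = farEnd M b ↔ c = M := by
  cases b <;> simp only [advance, farEnd, cond_true, cond_false] <;> lia

theorem advance_succ {b : Bool} {c : ℕ} : advance M b (c + 1) = advance M b c + stride b := by
  cases b <;> simp only [advance, stride, cond_true, cond_false] <;> lia

theorem advance_last_add_corner {b : Bool} : advance M b M + corner b = (M + 1) * corner b := by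
  cases b <;> simp [advance, corner]

theorem advance_last_add_stride {b : Bool} :
    advance M b M + stride b = (M + 1) * stride b + advance M b 0 := by
  cases b <;> simp [advance, stride]

theorem advance_last_not {b : Bool} : advance M (!b) 0 = advance M b M := by
  cases b <;> simp [advance]

theorem exists_advance_eq (b : Bool) {i : ℤ} (hi : 0 ≤ i) (hiM : i ≤ M) :
    ∃ c ≤ M, advance M b c = i := by
  cases b
  · exact ⟨(M - i).toNat, by lia, by simp only [advance, cond_false]; lia⟩
  · exact ⟨i.toNat, by lia, by simp only [advance, cond_true]; lia⟩

/-- The state of the snake in a block of odd side `M + 1` after `c` full columns and `e` further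
steps, when it traverses the block that is the face `S` of the simulated tiling. -/
def inBlock (M : ℕ) (S : Snake) (c e : ℕ) : Snake :=
  ⟨(M + 1) * S.X + advance M S.east c, (M + 1) * S.Y + advance M (S.north ^^ c.bodd) e,
    S.east ^^ e.bodd, S.north ^^ c.bodd⟩

/-- The state of the snake after `r` steps in a block. -/
def traverse (M : ℕ) (S : Snake) (r : ℕ) : Snake := S.inBlock M (r / (M + 1)) (r % (M + 1))

theorem traverse_eq_inBlock {c e : ℕ} (he : e ≤ M) :
    S.traverse M ((M + 1) * c + e) = S.inBlock M c e := by
  rw [traverse, Nat.mul_add_div (by lia), Nat.mul_add_mod, Nat.div_eq_of_lt (by lia),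
    Nat.mod_eq_of_lt (by lia), add_zero]

theorem mul_add_emod {A i : ℤ} (hi : 0 ≤ i) (him : i ≤ M) :
    ((M + 1) * A + i) % (M + 1) = i := by
  rw [Int.mul_add_emod_self_left, Int.emod_eq_of_lt hi (by lia)]

theorem inBlock_X_emod {c e : ℕ} (hc : c ≤ M) :
    (S.inBlock M c e).X % (M + 1) = advance M S.east c :=
  mul_add_emod (advance_mem hc).1 (advance_mem hc).2

theorem inBlock_Y_emod {c e : ℕ} (he : e ≤ M) :
    (S.inBlock M c e).Y % (M + 1) = advance M (S.inBlock M c e).north e :=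
  mul_add_emod (advance_mem he).1 (advance_mem he).2

theorem next_inBlock_of_lt {c e : ℕ} (he : e < M)
    (h : (S.inBlock M c e).TurnsAtEnds M under) :
    (S.inBlock M c e).next under = S.inBlock M c (e + 1) := by
  rw [next, if_neg fun hunder => he.ne <| advance_eq_farEnd.1 <|
    (inBlock_Y_emod he.le).symm.trans (h.horizontal hunder)]
  ext
  · rfl
  · simp only [inBlock, advance_succ, add_assoc]
  · simp [inBlock, Nat.bodd_succ]
  · rfl

theorem next_inBlock_last_of_lt {c : ℕ} (hM : M.bodd = false) (hc : c < M)
    (h : (S.inBlock M c M).TurnsAtEnds M under) :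
    (S.inBlock M c M).next under = S.inBlock M (c + 1) 0 := by
  have heast : (S.inBlock M c M).east = S.east := by rw [inBlock, hM, Bool.xor_false]
  have hunder : under _ _ := not_not.1 fun hunder => hc.ne <| advance_eq_farEnd.1 <|
    (inBlock_X_emod hc.le).symm.trans <| (h.vertical hunder <|
      (inBlock_Y_emod le_rfl).trans (advance_eq_farEnd.2 rfl)).trans (by rw [heast])
  rw [next, if_pos hunder]
  ext
  · simp only [inBlock, advance_succ, add_assoc, hM, Bool.xor_false]
  · simp only [inBlock, Nat.bodd_succ, Bool.xor_not, advance_last_not]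
  · simp [inBlock, hM]
  · simp [inBlock, Nat.bodd_succ]

/-- The snake leaves a block according to the tile at the corner of the block, so it follows the
snake of the simulated tiling. -/
theorem next_inBlock_last (hM : M.bodd = false) :
    (S.inBlock M M M).next under = (S.next (coarsen M under)).inBlock M 0 0 := by
  have hX : (S.inBlock M M M).X + corner (S.inBlock M M M).east
      = (M + 1) * (S.X + corner S.east) := by
    simp only [inBlock, hM, Bool.xor_false, add_assoc, advance_last_add_corner, mul_add]
  have hY : (S.inBlock M M M).Y + corner (S.inBlock M M M).north
      = (M + 1) * (S.Y + corner S.north) := by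
    simp only [inBlock, hM, Bool.xor_false, add_assoc, advance_last_add_corner, mul_add]
  rw [next, hX, hY, next, coarsen]
  split_ifs <;> ext <;>
    simp only [inBlock, hM, Nat.bodd_zero, Bool.xor_false, advance_last_not, add_assoc,
      advance_last_add_stride, mul_add]

theorem next_traverse (hM : M.bodd = false) {r : ℕ} (hr : r + 1 < (M + 1) * (M + 1))
    (h : (S.traverse M r).TurnsAtEnds M under) :
    (S.traverse M r).next under = S.traverse M (r + 1) := by
  have hdiv := Nat.div_add_mod r (M + 1)
  have hmod := Nat.mod_lt r M.succ_pos
  rw [traverse] at h ⊢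
  rcases (Nat.lt_succ_iff.1 hmod).lt_or_eq with he | he
  · rw [next_inBlock_of_lt he h, ← traverse_eq_inBlock (by lia), ← add_assoc, hdiv]
  · rw [he] at h hdiv ⊢
    have hc : r / (M + 1) < M := by
      by_contra! hc
      have := Nat.mul_le_mul_left (M + 1) hc
      lia
    rw [next_inBlock_last_of_lt hM hc h, ← traverse_eq_inBlock (by lia)]
    congr 1
    lia

theorem iterate_next_traverse (hM : M.bodd = false) {r k : ℕ} (hk : r + k < (M + 1) * (M + 1))
    (h : ∀ j < k, ((next under)^[j] (S.traverse M r)).TurnsAtEnds M under) :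
    (next under)^[k] (S.traverse M r) = S.traverse M (r + k) := by
  induction k with
  | zero => rfl
  | succ k ih =>
    have ih := ih (by lia) fun j hj => h j (by lia)
    rw [Function.iterate_succ_apply', ih, next_traverse hM (by lia) (ih ▸ h k (by lia)), add_assoc]

theorem iterate_next_traverse_of_add_eq (hM : M.bodd = false) {r k : ℕ}
    (hr : r < (M + 1) * (M + 1)) (hk : r + k = (M + 1) * (M + 1))
    (h : ∀ j, j + 1 < k → ((next under)^[j] (S.traverse M r)).TurnsAtEnds M under) :
    (next under)^[k] (S.traverse M r) = (S.next (coarsen M under)).traverse M 0 := by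
  obtain ⟨k, rfl⟩ := Nat.exists_eq_succ_of_ne_zero (show k ≠ 0 by lia)
  rw [Function.iterate_succ_apply', iterate_next_traverse hM (by lia) fun j hj => h j (by lia),
    show r + k = (M + 1) * M + M by lia, traverse_eq_inBlock le_rfl, next_inBlock_last hM]
  exact (traverse_eq_inBlock (c := 0) M.zero_le).symm

theorem mul_add_lt {c e : ℕ} (hc : c ≤ M) (he : e ≤ M) : (M + 1) * c + e < (M + 1) * (M + 1) := by
  have := Nat.mul_le_mul_left (M + 1) hc
  lia

theorem exists_traverse_eq (σ : Snake) :
    ∃ S r, r < (M + 1) * (M + 1) ∧ σ = traverse M S r := by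
  rcases σ with ⟨X, Y, s, t⟩
  have hX := Int.mul_ediv_add_emod X (M + 1)
  have hY := Int.mul_ediv_add_emod Y (M + 1)
  have hX0 := Int.emod_nonneg X (show (M : ℤ) + 1 ≠ 0 by lia)
  have hY0 := Int.emod_nonneg Y (show (M : ℤ) + 1 ≠ 0 by lia)
  have hXM := Int.emod_lt_of_pos X (show (0 : ℤ) < M + 1 by lia)
  have hYM := Int.emod_lt_of_pos Y (show (0 : ℤ) < M + 1 by lia)
  obtain ⟨e, heM, he⟩ := exists_advance_eq (M := M) t hY0 (by lia)
  obtain ⟨c, hcM, hc⟩ := exists_advance_eq (M := M) (s ^^ e.bodd) hX0 (by lia)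
  refine ⟨⟨X / (M + 1), Y / (M + 1), s ^^ e.bodd, t ^^ c.bodd⟩, (M + 1) * c + e,
    mul_add_lt hcM heM, ?_⟩
  rw [traverse_eq_inBlock heM]
  ext <;> simp only [inBlock, Bool.xor_assoc, Bool.xor_self, Bool.xor_false]
  · rw [hc, hX]
  · rw [he, hY]

theorem exists_traverse_position (S : Snake) {i j : ℤ} (hi : 0 ≤ i) (hiM : i ≤ M) (hj : 0 ≤ j)
    (hjM : j ≤ M) : ∃ r < (M + 1) * (M + 1), (S.traverse M r).X = (M + 1) * S.X + i ∧
      (S.traverse M r).Y = (M + 1) * S.Y + j := by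
  obtain ⟨c, hcM, hc⟩ := exists_advance_eq S.east hi hiM
  obtain ⟨e, heM, he⟩ := exists_advance_eq (S.north ^^ c.bodd) hj hjM
  refine ⟨(M + 1) * c + e, mul_add_lt hcM heM, ?_⟩
  rw [traverse_eq_inBlock heM]
  exact ⟨by rw [inBlock, hc], by rw [inBlock, he]⟩

end Snake

/-- The conditions on the tiling hold at the first `N` faces on the path of the snake. -/
def PathValid (K : CellularAutomaton G) (m : ℤ) (γ : ℤ → G) (x : ℤ → ℤ → Tile G) (σ : Snake)
    (N : ℕ) : Prop :=
  ∀ r < N, FaceValidAt K m γ x ((Snake.next (isColUnder x))^[r] σ).X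
    ((Snake.next (isColUnder x))^[r] σ).Y

/-- The block simulating the tile `(A, B)` of the next level. -/
def blockAt (m : ℤ) (x : ℤ → ℤ → Tile G) (A B : ℤ) : ℤ → ℤ → Tile G :=
  fun a b => x ((m + 1) * A + a) ((m + 1) * B + b)

namespace PathValid

variable {M N : ℕ} {S σ : Snake}

theorem turnsAtEnds (hm : 0 < m) (h : PathValid K m γ x σ N) {r : ℕ} (hr : r + 1 < N) :
    ((Snake.next (isColUnder x))^[r] σ).TurnsAtEnds m (isColUnder x) := by
  have hnext := h (r + 1) hr
  rw [Function.iterate_succ_apply'] at hnext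
  exact (h r (by lia)).turnsAtEnds hm hnext

theorem drop (h : PathValid K m γ x σ N) {a N' : ℕ} (ha : a + N' ≤ N) :
    PathValid K m γ x ((Snake.next (isColUnder x))^[a] σ) N' := by
  intro r hr
  rw [← Function.iterate_add_apply]
  exact h _ (by lia)

theorem isBlock (hM : M.bodd = false) (hM2 : 2 ≤ M) (hγ : ∀ i, i < 1 ∨ (M : ℤ) < i → γ i = K.blank)
    (h : PathValid K M γ x (S.traverse M 0) ((M + 1) * (M + 1))) :
    IsBlock K M γ (blockAt M x S.X S.Y) := by
  refine ⟨by lia, hγ, fun i j hi hiM hj hjM => ?_⟩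
  obtain ⟨r, hr, hX, hY⟩ := S.exists_traverse_position hi hiM hj hjM
  have F := h r hr
  rw [Snake.iterate_next_traverse hM (by lia) fun k hk => h.turnsAtEnds (by lia) (by lia),
    zero_add, hX, hY, FaceValidAt, Snake.mul_add_emod hi hiM, Snake.mul_add_emod hj hjM] at F
  simpa only [blockAt, add_assoc] using F

theorem iterate_next_mul (hM : M.bodd = false) (hM2 : 2 ≤ M) {n q : ℕ} (hq : q ≤ n)
    (h : PathValid K M γ x (S.traverse M 0) (n * ((M + 1) * (M + 1)))) :
    (Snake.next (isColUnder x))^[q * ((M + 1) * (M + 1))] (S.traverse M 0) =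
      ((Snake.next (isColUnder (coarsen M x)))^[q] S).traverse M 0 := by
  induction q with
  | zero => rw [zero_mul]; rfl
  | succ q ih =>
    have ih := ih (by lia)
    have hblock := h.drop (a := q * ((M + 1) * (M + 1))) (N' := (M + 1) * (M + 1))
      (by simpa only [Nat.succ_mul] using Nat.mul_le_mul_right ((M + 1) * (M + 1)) hq)
    rw [ih] at hblock
    rw [Nat.succ_mul, add_comm, Function.iterate_add_apply, ih, Function.iterate_succ_apply',
      Snake.iterate_next_traverse_of_add_eq hM (by positivity) (zero_add _)
        fun j hj => hblock.turnsAtEnds (by lia) hj]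
    rfl

theorem isBlock_iterate (hM : M.bodd = false) (hM2 : 2 ≤ M)
    (hγ : ∀ i, i < 1 ∨ (M : ℤ) < i → γ i = K.blank) {n q : ℕ} (hq : q < n)
    (h : PathValid K M γ x (S.traverse M 0) (n * ((M + 1) * (M + 1)))) :
    IsBlock K M γ (blockAt M x ((Snake.next (isColUnder (coarsen M x)))^[q] S).X
      ((Snake.next (isColUnder (coarsen M x)))^[q] S).Y) := by
  have hblock := h.drop (a := q * ((M + 1) * (M + 1))) (N' := (M + 1) * (M + 1))
    (by simpa only [Nat.succ_mul] using Nat.mul_le_mul_right ((M + 1) * (M + 1)) hq)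
  rw [h.iterate_next_mul hM hM2 hq.le] at hblock
  exact hblock.isBlock hM hM2 hγ

end PathValid

/-- The snake of the simulated tiling passes between adjacent blocks, and so the differences between
its coordinates and the simulated indices do not change modulo the side of the simulated blocks. -/
theorem SimulatesAt.index_sub_modEq {under : ℤ → ℤ → Prop} {S : Snake} {i j i' j' : ℤ}
    (h : SimulatesAt K m γ (blockAt m x S.X S.Y) i j)
    (h' : SimulatesAt K m γ (blockAt m x (S.next under).X (S.next under).Y) i' j') :
    i' - (S.next under).X ≡ i - S.X [ZMOD m + 3] ∧
      j' - (S.next under).Y ≡ j - S.Y [ZMOD m + 3] := by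
  have east : ∀ {y : ℤ → ℤ → Tile G} {A B i j i' j' : ℤ}, SimulatesAt K m γ (blockAt m y A B) i j →
      SimulatesAt K m γ (blockAt m y (A + 1) B) i' j' →
      i' - (A + 1) ≡ i - A [ZMOD m + 3] ∧ j' = j := by
    intro y A B i j i' j' h h'
    obtain ⟨hi, hj⟩ := h.index_of_adjacent h' fun b => by simp only [blockAt]; congr 1; ring
    refine ⟨?_, hj⟩
    split_ifs at hi with hlast
    · exact Int.modEq_iff_dvd.2 ⟨1, by lia⟩
    · exact Int.modEq_iff_dvd.2 ⟨0, by lia⟩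
  have north : ∀ {A B i j i' j' : ℤ}, SimulatesAt K m γ (blockAt m x A B) i j →
      SimulatesAt K m γ (blockAt m x A (B + 1)) i' j' →
      j' - (B + 1) ≡ j - B [ZMOD m + 3] ∧ i' = i :=
    fun h h' => east (y := RFATorsion.transpose x) h.transpose h'.transpose
  rcases S with ⟨X, Y, s, t⟩
  unfold Snake.next at h' ⊢
  split_ifs at h' ⊢
  · cases s
    · obtain ⟨hi, rfl⟩ := east h' (by simpa [stride] using h)
      simpa [stride] using hi.symm
    · obtain ⟨hi, rfl⟩ := east h h'
      exact ⟨hi, rfl⟩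
  · cases t
    · obtain ⟨hj, rfl⟩ := north h' (by simpa [stride] using h)
      simpa [stride] using hj.symm
    · obtain ⟨hj, rfl⟩ := north h h'
      exact ⟨rfl, hj⟩

theorem SimulatesAt.faceValid_coarsen {M : ℕ} {A B i j : ℤ}
    (h : SimulatesAt K M γ (blockAt M x A B) i j) :
    FaceValid K (coarsen M x A B) (coarsen M x (A + 1) B) (coarsen M x A (B + 1))
      (coarsen M x (A + 1) (B + 1)) (indexLabel (M + 2) (K.step γ) i)
      (indexLabel (M + 2) (K.step γ) j) := by
  simpa only [coarsen, blockAt, add_zero, ← mul_add_one] using h.faceValid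

/-- The snake moved by `α` and `β`. -/
def Snake.shift (α β : ℤ) (S : Snake) : Snake := ⟨S.X + α, S.Y + β, S.east, S.north⟩

theorem Snake.next_shift (α β : ℤ) (under : ℤ → ℤ → Prop) (S : Snake) :
    (S.shift α β).next (fun a b => under (a - α) (b - β)) = (S.next under).shift α β := by
  have hX : S.X + α + corner S.east - α = S.X + corner S.east := by ring
  have hY : S.Y + β + corner S.north - β = S.Y + corner S.north := by ring
  by_cases h : under (S.X + corner S.east) (S.Y + corner S.north)
  · rw [next, if_pos (by rwa [shift, hX, hY]), next, if_pos h]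
    ext <;> simp only [shift, add_right_comm]
  · rw [next, if_neg (by rwa [shift, hX, hY]), next, if_neg h]
    ext <;> simp only [shift, add_right_comm]

theorem Snake.iterate_next_shift (α β : ℤ) (under : ℤ → ℤ → Prop) (S : Snake) (q : ℕ) :
    (next (fun a b => under (a - α) (b - β)))^[q] (S.shift α β) =
      ((next under)^[q] S).shift α β :=
  (Function.Semiconj.iterate_right (f := shift α β)
    (fun S => (next_shift α β under S).symm) q S).symm

theorem PathValid.exists_coarse_of_traverse {M n : ℕ} (hM : M.bodd = false) (hM2 : 2 ≤ M)
    (hγ : ∀ i, i < 1 ∨ (M : ℤ) < i → γ i = K.blank) {S : Snake}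
    (h : PathValid K M γ x (S.traverse M 0) ((n + 1) * ((M + 1) * (M + 1)))) :
    ∃ x' σ', PathValid K (M + 2) (K.step γ) x' σ' n := by
  set next := Snake.next (isColUnder (coarsen M x)) with hnext
  obtain ⟨i₀, j₀, h₀⟩ := (h.isBlock_iterate hM hM2 hγ (q := 0) (by lia)).exists_simulatesAt
  have hsim : ∀ q ≤ n, ∃ i j, SimulatesAt K M γ (blockAt M x (next^[q] S).X (next^[q] S).Y) i j ∧
      i - (next^[q] S).X ≡ i₀ - S.X [ZMOD M + 3] ∧
      j - (next^[q] S).Y ≡ j₀ - S.Y [ZMOD M + 3] := by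
    intro q
    induction q with
    | zero => exact fun _ => ⟨i₀, j₀, h₀, .rfl, .rfl⟩
    | succ q ih =>
      intro hq
      obtain ⟨i, j, hij, hi, hj⟩ := ih (by lia)
      obtain ⟨i', j', hij'⟩ :=
        (h.isBlock_iterate hM hM2 hγ (q := q + 1) (by lia)).exists_simulatesAt
      rw [← hnext, Function.iterate_succ_apply'] at hij'
      rw [Function.iterate_succ_apply']
      obtain ⟨hi', hj'⟩ := hij.index_sub_modEq hij'
      exact ⟨i', j', hij', hi'.trans hi, hj'.trans hj⟩
  refine ⟨fun a b => coarsen M x (a - (i₀ - S.X)) (b - (j₀ - S.Y)), S.shift (i₀ - S.X) (j₀ - S.Y),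
    fun q hq => ?_⟩
  have hshift := Snake.iterate_next_shift (i₀ - S.X) (j₀ - S.Y) (isColUnder (coarsen M x)) S q
  obtain ⟨i, j, hij, hi, hj⟩ := hsim q hq.le
  change FaceValidAt K _ _ _ ((Snake.next fun a b => isColUnder (coarsen M x) (a - (i₀ - S.X))
    (b - (j₀ - S.Y)))^[q] _).X ((Snake.next fun a b => isColUnder (coarsen M x) (a - (i₀ - S.X))
    (b - (j₀ - S.Y)))^[q] _).Y
  have emod_eq : ∀ {k X α : ℤ}, 0 ≤ k → k ≤ M + 2 → k - X ≡ α [ZMOD M + 3] →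
      (X + α) % (M + 2 + 1) = k := by
    intro k X α hk hkM hmod
    have hmod' := (Int.ModEq.add_left X hmod).symm
    rw [add_sub_cancel] at hmod'
    exact hmod'.eq.trans (Int.emod_eq_of_lt hk (by lia))
  rw [hshift, FaceValidAt, Snake.shift, emod_eq hij.rows.nonneg hij.rows.le hi,
    emod_eq hij.cols.nonneg hij.cols.le hj]
  simpa only [add_sub_cancel_right, add_sub_right_comm] using hij.faceValid_coarsen

theorem PathValid.exists_coarse {M n : ℕ} (hM : M.bodd = false) (hM2 : 2 ≤ M)
    (hγ : ∀ i, i < 1 ∨ (M : ℤ) < i → γ i = K.blank) {σ : Snake}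
    (h : PathValid K M γ x σ ((n + 2) * ((M + 1) * (M + 1)))) :
    (∀ a, ¬ K.bad (γ a)) ∧ ∃ x' σ', PathValid K (M + 2) (K.step γ) x' σ' n := by
  obtain ⟨S, r, hr, rfl⟩ := σ.exists_traverse_eq (M := M)
  obtain ⟨k, hk⟩ := Nat.exists_eq_add_of_le hr.le
  have hcorner : PathValid K M γ x _ ((n + 1) * ((M + 1) * (M + 1))) := h.drop (a := k) (by lia)
  rw [Snake.iterate_next_traverse_of_add_eq hM hr hk.symm fun j hj =>
    h.turnsAtEnds (by lia) (by lia)] at hcorner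
  refine ⟨fun a => ?_, hcorner.exists_coarse_of_traverse hM hM2 hγ⟩
  by_cases ha : a < 1 ∨ (M : ℤ) < a
  · exact hγ a ha ▸ K.not_bad_blank
  · exact (hcorner.isBlock_iterate hM hM2 hγ (q := 0) (by lia)).not_bad (by lia) (by lia)

theorem exists_not_pathValid_of_bad (K : CellularAutomaton G) (T : ℕ) {M : ℕ} {γ : ℤ → G}
    (hM : M.bodd = false) (hM2 : 2 ≤ M) (hγ : ∀ i, i < 1 ∨ (M : ℤ) < i → γ i = K.blank)
    (hbad : ∃ i, K.bad (K.step^[T] γ i)) : ∃ N, ∀ x σ, ¬ PathValid K M γ x σ N := by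
  induction T generalizing M γ with
  | zero =>
    obtain ⟨i, hi⟩ := hbad
    exact ⟨_, fun x σ h => (h.exists_coarse (n := 0) hM hM2 hγ).1 i hi⟩
  | succ T ih =>
    obtain ⟨N, hN⟩ := ih (M := M + 2) (by simpa using hM) (by lia)
      (fun i hi => K.step_eq_blank hγ (by exact_mod_cast hi)) hbad
    refine ⟨(N + 2) * ((M + 1) * (M + 1)), fun x σ h => ?_⟩
    obtain ⟨x', σ', h'⟩ := (h.exists_coarse (n := N) hM hM2 hγ).2
    exact hN x' σ' (by exact_mod_cast h')

end Snake

section Refinement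

variable {G : Type*} {K : CellularAutomaton G} {m : ℤ} {γ : ℤ → G}

theorem eq_zero_of_letter_eq_zero {i a : ℤ} (h : letter i a = .zero) : i = 0 := by
  unfold letter at h
  split_ifs at h
  assumption

theorem eq_one_of_letter_eq_one {i a : ℤ} (h : letter i a = .one) : i = 1 := by
  unfold letter at h
  split_ifs at h
  assumption

theorem eq_add_one_of_letter_eq_pivot {i a : ℤ} (h : letter i a = .pivot) : i = a + 1 := by
  unfold letter at h
  split_ifs at h
  lia

theorem add_one_lt_of_letter_eq_below {i a : ℤ} (h : letter i a = .below) : a + 1 < i := by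
  unfold letter at h
  split_ifs at h
  lia

/-- The memory of the scan of the word of `i` after `a` transverse lines. -/
def scanMemory (γ : ℤ → G) (i a : ℤ) : Option (Letter × G × G) :=
  if a = 0 then none else some (letter i a, γ a, γ (a - 1))

theorem scanStep_scanMemory (hγ : ∀ i, i < 1 ∨ m < i → γ i = K.blank) {i a : ℤ} (hi : 0 ≤ i)
    (ha : 1 ≤ a) (ham : a ≤ m) :
    ScanStep K (indexLabel (m + 2) (K.step γ) i) (scanMemory γ i (a - 1)) (γ a) (letter i a)
      (scanMemory γ i a) := by
  rcases ha.eq_or_lt with rfl | ha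
  · refine ⟨by simp [scanMemory, hγ 0], fun h => ?_, fun h => ?_, fun h => ?_⟩
    · unfold letter at h
      split_ifs at h
      lia
    · rw [eq_zero_of_letter_eq_zero h, indexLabel_zero]
    · rw [eq_one_of_letter_eq_one h, indexLabel_of_ne_zero one_ne_zero, CellularAutomaton.step,
        hγ (1 - 2) (by lia), hγ (1 - 1) (by lia), decide_eq_false (by lia)]
  · rw [scanMemory, if_neg (by lia), scanMemory, if_neg (by lia)]
    refine ⟨rfl, ?_, fun h => ?_⟩
    · simpa only [sub_add_cancel] using letter_next i (a - 1)
    · obtain rfl : i = a := by linear_combination eq_add_one_of_letter_eq_pivot h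
      rw [indexLabel_of_ne_zero (by lia), CellularAutomaton.step, decide_eq_false (by lia),
        sub_sub, one_add_one_eq_two]

theorem scanEnd_scanMemory (hm : 0 < m) (hγ : ∀ i, i < 1 ∨ m < i → γ i = K.blank) {i : ℤ}
    (him : i ≤ m + 2) : ScanEnd K (indexLabel (m + 2) (K.step γ) i) (scanMemory γ i m) := by
  rw [scanMemory, if_neg hm.ne']
  constructor
  · intro h
    rw [eq_add_one_of_letter_eq_pivot h, indexLabel_of_ne_zero (by lia), CellularAutomaton.step,
      hγ (m + 1) (by lia), decide_eq_false (by lia), add_sub_cancel_right,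
      show m + 1 - 2 = m - 1 by ring]
  · intro h
    obtain rfl : i = m + 2 := by linarith [add_one_lt_of_letter_eq_below h]
    rw [indexLabel_of_ne_zero (by lia), CellularAutomaton.step, hγ (m + 2 - 1) (by lia),
      hγ (m + 2) (by lia), decide_eq_true rfl, add_sub_cancel_right]

/-- A colouring of the edges of the grid of unit squares, given by the colours of the east and
north edges of each square, together with a kind for each square. -/
structure EdgeColouring (G : Type*) where
  east : ℤ → ℤ → Colour G
  north : ℤ → ℤ → Colour G
  kind : ℤ → ℤ → TileKind

namespace EdgeColouring

variable {w : EdgeColouring G}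

/-- The tile formed by the edges of the square `(X, Y)`. -/
def tile (w : EdgeColouring G) (X Y : ℤ) : Tile G :=
  ⟨w.east (X - 1) Y, w.east X Y, w.north X (Y - 1), w.north X Y, w.kind X Y⟩

/-- The reflection of a colouring in the diagonal. -/
def transpose (w : EdgeColouring G) : EdgeColouring G :=
  ⟨fun X Y => w.north Y X, fun X Y => w.east Y X, fun X Y => (w.kind Y X).transpose⟩

/-- The north edges inside the blocks know their labels and their positions. -/
def NorthLabelled (m : ℤ) (γ : ℤ → G) (w : EdgeColouring G) : Prop :=
  ∀ X Y, X % (m + 1) ≠ 0 →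
    (w.north X Y).label = (γ (X % (m + 1)), decide (X % (m + 1) = m)) ∧
      (w.north X Y).atEnd = decide (Y % (m + 1) = m) ∧
        (w.north X Y).atStart = decide (Y % (m + 1) = 0)

/-- The colouring is correct on the square of side `N` at the origin. -/
structure ValidOn (K : CellularAutomaton G) (m : ℤ) (γ : ℤ → G) (N : ℤ) (w : EdgeColouring G) :
    Prop where
  tile_valid : ∀ X Y, 0 ≤ X → X < N → 0 ≤ Y → Y < N → (w.tile X Y).Valid K
  north : w.NorthLabelled m γ
  east : w.transpose.NorthLabelled m γ

theorem NorthLabelled.west_edge (hm : m ≠ 0) (h : w.NorthLabelled m γ) (X Y : ℤ) (L : Label G)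
    (hL : indexLabel m γ (X % (m + 1)) = some L) :
    (w.north X Y).label = L ∧
      (w.north X Y).atEnd = isLast (indexLabel m γ (Y % (m + 1))) ∧
        (w.north X Y).atStart = (indexLabel m γ (Y % (m + 1))).isNone := by
  rw [isLast_indexLabel hm, isNone_indexLabel]
  by_cases hX : X % (m + 1) = 0
  · rw [hX, indexLabel_zero] at hL
    exact absurd hL (Option.some_ne_none L).symm
  · rw [indexLabel_of_ne_zero hX, Option.some_inj] at hL
    exact hL ▸ h X Y hX

theorem NorthLabelled.east_edge (hm : 0 < m) (h : w.NorthLabelled m γ) (X Y : ℤ)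
    (hX : isLast (indexLabel m γ (X % (m + 1))) = false) :
    (w.north (X + 1) Y).atEnd = isLast (indexLabel m γ (Y % (m + 1))) ∧
      (w.north (X + 1) Y).atStart = (indexLabel m γ (Y % (m + 1))).isNone := by
  rw [isLast_indexLabel hm.ne', isNone_indexLabel]
  refine (h (X + 1) Y fun h0 => ?_).2
  rw [isLast_indexLabel hm.ne', decide_eq_false_iff_not] at hX
  refine hX ?_
  simpa only [add_sub_cancel_right] using sub_one_emod_of_emod_eq hm.le h0

theorem ValidOn.faceValidAt {N X Y : ℤ} (hm : 0 < m) (h : w.ValidOn K m γ N) (hX : 0 ≤ X)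
    (hXN : X + 1 < N) (hY : 0 ≤ Y) (hYN : Y + 1 < N) : FaceValidAt K m γ w.tile X Y where
  sw_valid := h.tile_valid _ _ hX (by lia) hY (by lia)
  se_valid := h.tile_valid _ _ (by lia) hXN hY (by lia)
  nw_valid := h.tile_valid _ _ hX (by lia) (by lia) hYN
  ne_valid := h.tile_valid _ _ (by lia) hXN (by lia) hYN
  match_south := by simp only [tile, add_sub_cancel_right]
  match_north := by simp only [tile, add_sub_cancel_right]
  match_west := by simp only [tile, add_sub_cancel_right]
  match_east := by simp only [tile, add_sub_cancel_right]
  west_edge := h.north.west_edge hm.ne' X Y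
  east_edge := h.north.east_edge hm X Y
  south_edge := h.east.west_edge hm.ne' Y X
  north_edge := h.east.east_edge hm Y X

theorem sub_one_emod_of_emod_ne_zero {n X : ℤ} (hn : 0 < n) (h : X % n ≠ 0) :
    (X - 1) % n = X % n - 1 := by
  have h0 := Int.emod_nonneg X hn.ne'
  have hlt := Int.emod_lt_of_pos X hn
  conv_lhs => rw [← Int.mul_ediv_add_emod X n]
  rw [add_sub_assoc, Int.mul_add_emod_self_left, Int.emod_eq_of_lt (by lia) (by lia)]

/-- The phase of an edge with index `a` along its line, which is determined at the two ends of the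
line by the phases `p` and `q` of the borders. -/
def linePhase (m : ℤ) (p q : ZMod 3) (a : ℤ) : ZMod 3 :=
  if a = 0 then p + 1 else if a = m then q + 1 else 0

/-- The colour of the edge of index `a` of the row `b` in the block simulating the square
`(A, B)`. -/
def rowColour (K : CellularAutomaton G) (m : ℤ) (γ : ℤ → G) (w : EdgeColouring G)
    (A B a b : ℤ) : Colour G where
  label := (γ b, decide (b = m))
  indexAlong := indexLabel (m + 2) (K.step γ) (A % (m + 3))
  letterAlong := letter (A % (m + 3)) b
  indexAcross := indexLabel (m + 2) (K.step γ) (B % (m + 3))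
  letterAcross := letter (B % (m + 3)) b
  phaseBefore := linePhase m (w.east A B).phase (w.east A (B + 1)).phase (b - 1)
  phaseAfter := linePhase m (w.east A B).phase (w.east A (B + 1)).phase b
  atStart := decide (a = 0)
  atEnd := decide (a = m)
  phase := linePhase m (w.north A B).phase (w.north (A + 1) B).phase a
  pastDiagonal := decide (b ≤ a)
  scan := scanMemory γ (A % (m + 3)) a

theorem crosses_rowColour (hγ : ∀ i, i < 1 ∨ m < i → γ i = K.blank) (hbad : ∀ i, ¬ K.bad (γ i))
    (hm : 0 < m) {A B a b : ℤ} (ha : 1 ≤ a) (ham : a ≤ m) :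
    Crosses K (w.rowColour K m γ A B (a - 1) b) (w.rowColour K m γ A B a b)
      (w.transpose.rowColour K m γ B A (b - 1) a) (w.transpose.rowColour K m γ B A b a) where
  not_atEnd := decide_eq_false (by lia)
  not_atStart := decide_eq_false (by lia)
  line := rfl
  indexAlong := rfl
  phaseBefore := rfl
  phaseAfter := rfl
  scanStep := scanStep_scanMemory hγ (Int.emod_nonneg A (by lia)) ha ham
  not_bad := hbad b
  on_diagonal h h' := by
    simp only [rowColour, decide_eq_false_iff_not] at h h'
    obtain rfl : a = b := by lia
    exact ⟨decide_eq_true le_rfl, rfl⟩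
  before_diagonal := by
    simp only [rowColour, decide_eq_false_iff_not, decide_eq_true_eq]
    lia
  after_diagonal := by
    simp only [rowColour, decide_eq_false_iff_not, decide_eq_true_eq]
    lia

theorem passesUnder_rowColour (hm : 0 < m) (hγ : ∀ i, i < 1 ∨ m < i → γ i = K.blank)
    (hw : w.NorthLabelled (m + 2) (K.step γ)) {A B b : ℤ} (hb : 1 ≤ b) :
    PassesUnder K (w.rowColour K m γ (A - 1) B m b) (w.rowColour K m γ A B 0 b) (w.north A B) where
  w_atEnd := decide_eq_true rfl
  w_atStart := decide_eq_false hm.ne'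
  e_atStart := by simp [rowColour]
  e_atEnd := decide_eq_false hm.ne
  w_phase := by simp [rowColour, linePhase, hm.ne']
  e_phase := by simp [rowColour, linePhase]
  label := rfl
  letterAcross := rfl
  indexAcross := rfl
  pastDiagonal := decide_eq_false (by lia)
  scan := rfl
  scanEnd := scanEnd_scanMemory hm hγ <| by
    linarith [Int.emod_lt_of_pos (A - 1) (show 0 < m + 3 by lia)]
  of_last h := by
    simp only [rowColour, isLast_indexLabel (show m + 2 ≠ 0 by lia), decide_eq_true_eq] at h ⊢
    have hA := add_one_emod_of_emod_eq (m := m + 2) (X := A - 1) (by rwa [add_assoc])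
    rw [sub_add_cancel, add_assoc, show (2 + 1 : ℤ) = 3 by norm_num] at hA
    rw [hA]
    exact ⟨indexLabel_zero, letter_zero b⟩
  of_not_last h := by
    have h3 : m + 2 + 1 = m + 3 := by ring
    have hne : A % (m + 3) ≠ 0 := fun hA => by
      have := sub_one_emod_of_emod_eq (m := m + 2) (X := A) (by lia) (by rwa [h3])
      simp [rowColour, isLast_indexLabel (show m + 2 ≠ 0 by lia), ← h3, this] at h
    have hA : A % (m + 3) = (A - 1) % (m + 3) + 1 := by
      rw [sub_one_emod_of_emod_ne_zero (by lia) hne, sub_add_cancel]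
    obtain ⟨hlabel, hend, hstart⟩ := hw A B (by rwa [h3])
    refine ⟨?_, ?_, ?_, ?_⟩
    · rw [hlabel, h3]
      exact indexLabel_of_ne_zero hne
    · simp only [rowColour, hA]
      exact letter_succ (Int.emod_nonneg _ (by lia)) hb
    · simpa only [h3, rowColour] using hend.trans (isLast_indexLabel (by lia)).symm
    · simpa only [h3, rowColour] using hstart.trans isNone_indexLabel.symm

/-- The colours of the east edges when every square of `w` is replaced by the block that simulates
it. -/
def refineEast (K : CellularAutomaton G) (m : ℤ) (γ : ℤ → G) (w : EdgeColouring G) (X Y : ℤ) :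
    Colour G :=
  if Y % (m + 1) = 0 then w.east (X / (m + 1)) (Y / (m + 1))
  else w.rowColour K m γ (X / (m + 1)) (Y / (m + 1)) (X % (m + 1)) (Y % (m + 1))

/-- The colouring obtained by replacing every square of `w` by the block that simulates it. -/
def refine (K : CellularAutomaton G) (m : ℤ) (γ : ℤ → G) (w : EdgeColouring G) :
    EdgeColouring G where
  east := w.refineEast K m γ
  north X Y := w.transpose.refineEast K m γ Y X
  kind X Y := if X % (m + 1) = 0 then
      if Y % (m + 1) = 0 then w.kind (X / (m + 1)) (Y / (m + 1)) else .rowUnder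
    else if Y % (m + 1) = 0 then .colUnder else .plain

theorem transpose_refine : (w.refine K m γ).transpose = w.transpose.refine K m γ := by
  simp only [refine, transpose, mk.injEq, true_and]
  refine ⟨rfl, ?_⟩
  funext X Y
  split_ifs <;> rfl

theorem refineEast_of_emod_eq_zero {X Y : ℤ} (hY : Y % (m + 1) = 0) :
    w.refineEast K m γ X Y = w.east (X / (m + 1)) (Y / (m + 1)) := if_pos hY

theorem refineEast_of_emod_ne_zero {X Y : ℤ} (hY : Y % (m + 1) ≠ 0) :
    w.refineEast K m γ X Y =
      w.rowColour K m γ (X / (m + 1)) (Y / (m + 1)) (X % (m + 1)) (Y % (m + 1)) := if_neg hY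

theorem sub_one_ediv {n X : ℤ} (hn : 0 < n) :
    (X - 1) / n = if X % n = 0 then X / n - 1 else X / n := by
  have hX := Int.mul_ediv_add_emod X n
  have h0 := Int.emod_nonneg X hn.ne'
  have hlt := Int.emod_lt_of_pos X hn
  split_ifs with h
  · rw [Int.ediv_eq_iff_of_pos hn]
    constructor <;> linarith
  · rw [Int.ediv_eq_iff_of_pos hn]
    constructor <;> lia

theorem crosses_refine (hm : 0 < m) (hγ : ∀ i, i < 1 ∨ m < i → γ i = K.blank)
    (hbad : ∀ i, ¬ K.bad (γ i)) {X Y : ℤ} (hX : X % (m + 1) ≠ 0) (hY : Y % (m + 1) ≠ 0) :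
    Crosses K (w.refineEast K m γ (X - 1) Y) (w.refineEast K m γ X Y)
      (w.transpose.refineEast K m γ (Y - 1) X) (w.transpose.refineEast K m γ Y X) := by
  have hm1 : 0 < m + 1 := by lia
  have hX0 := Int.emod_nonneg X hm1.ne'
  have hXm := Int.emod_lt_of_pos X hm1
  simp only [refineEast_of_emod_ne_zero hX, refineEast_of_emod_ne_zero hY,
    sub_one_ediv hm1, sub_one_emod_of_emod_ne_zero hm1 hX, sub_one_emod_of_emod_ne_zero hm1 hY,
    if_neg hX, if_neg hY]
  exact crosses_rowColour hγ hbad hm (by lia) (by lia)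

theorem passesUnder_refine (hm : 0 < m) (hγ : ∀ i, i < 1 ∨ m < i → γ i = K.blank)
    (hw : w.NorthLabelled (m + 2) (K.step γ)) {X Y : ℤ} (hX : X % (m + 1) = 0)
    (hY : Y % (m + 1) ≠ 0) :
    PassesUnder K (w.refineEast K m γ (X - 1) Y) (w.refineEast K m γ X Y)
      (w.north (X / (m + 1)) (Y / (m + 1))) := by
  have hY0 := Int.emod_nonneg Y (show m + 1 ≠ 0 by lia)
  simp only [refineEast_of_emod_ne_zero hY, sub_one_ediv (show 0 < m + 1 by lia),
    sub_one_emod_of_emod_eq hm.le hX, hX]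
  exact passesUnder_rowColour hm hγ hw (by lia)

theorem northLabelled_refine : (w.refine K m γ).NorthLabelled m γ := by
  intro X Y hX
  simp only [refine, refineEast_of_emod_ne_zero hX]
  exact ⟨rfl, rfl, rfl⟩

theorem tile_refine_of_emod_eq_zero (hm : 0 < m) {X Y : ℤ} (hX : X % (m + 1) = 0)
    (hY : Y % (m + 1) = 0) :
    (w.refine K m γ).tile X Y = w.tile (X / (m + 1)) (Y / (m + 1)) := by
  have hm1 : 0 < m + 1 := by lia
  simp only [tile, refine, refineEast_of_emod_eq_zero hX, refineEast_of_emod_eq_zero hY,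
    sub_one_ediv hm1, if_pos hX, if_pos hY, transpose]

theorem ValidOn.refine {N : ℤ} (hm : 0 < m) (hγ : ∀ i, i < 1 ∨ m < i → γ i = K.blank)
    (hbad : ∀ i, ¬ K.bad (γ i)) (h : w.ValidOn (K := K) (m := m + 2) (γ := K.step γ) N) :
    (w.refine K m γ).ValidOn K m γ ((m + 1) * N) where
  north := northLabelled_refine
  east := by
    rw [transpose_refine]
    exact northLabelled_refine
  tile_valid X Y hX hXN hY hYN := by
    have hm1 : 0 < m + 1 := by lia
    by_cases hX0 : X % (m + 1) = 0 <;> by_cases hY0 : Y % (m + 1) = 0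
    · rw [tile_refine_of_emod_eq_zero hm hX0 hY0]
      exact h.tile_valid _ _ (Int.ediv_nonneg hX hm1.le)
        (Int.ediv_lt_of_lt_mul hm1 (by rwa [mul_comm])) (Int.ediv_nonneg hY hm1.le)
        (Int.ediv_lt_of_lt_mul hm1 (by rwa [mul_comm]))
    · simp only [Tile.Valid, tile, EdgeColouring.refine, if_pos hX0, if_neg hY0,
        refineEast_of_emod_eq_zero hX0, sub_one_ediv hm1]
      exact ⟨trivial, passesUnder_refine hm hγ h.north hX0 hY0⟩
    · simp only [Tile.Valid, tile, EdgeColouring.refine, if_neg hX0, if_pos hY0,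
        refineEast_of_emod_eq_zero hY0, sub_one_ediv hm1]
      exact ⟨trivial, passesUnder_refine (w := w.transpose) hm hγ h.east hY0 hX0⟩
    · simp only [Tile.Valid, tile, EdgeColouring.refine, if_neg hX0, if_neg hY0]
      exact ⟨crosses_refine hm hγ hbad hX0 hY0, crosses_refine hm hγ hbad hY0 hX0⟩

/-- The colours of the east edges of a colouring that is correct on a single tile. -/
def baseEast (K : CellularAutomaton G) (m : ℤ) (γ : ℤ → G) (X Y : ℤ) : Colour G where
  label := if Y % (m + 1) = 0 then (K.blank, false) else (γ (Y % (m + 1)), decide (Y % (m + 1) = m))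
  indexAlong := none
  letterAlong := .zero
  indexAcross := none
  letterAcross := .zero
  phaseBefore := 0
  phaseAfter := 0
  atStart := if Y % (m + 1) = 0 then false else decide (X % (m + 1) = 0)
  atEnd := if Y % (m + 1) = 0 then false else decide (X % (m + 1) = m)
  phase := 0
  pastDiagonal := decide (0 ≤ X)
  scan := if X < 0 then none else some (.zero, K.blank, K.blank)

/-- A colouring that is correct on a single tile. -/
def base (K : CellularAutomaton G) (m : ℤ) (γ : ℤ → G) : EdgeColouring G :=
  ⟨baseEast K m γ, fun X Y => baseEast K m γ Y X, fun _ _ => .plain⟩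

theorem validOn_base : (base K m γ).ValidOn K m γ 1 where
  north X Y hX := by simp only [base, baseEast, if_neg hX, and_self]
  east X Y hX := by simp only [base, baseEast, transpose, if_neg hX, and_self]
  tile_valid X Y hX hXN hY hYN := by
    obtain rfl : X = 0 := by lia
    obtain rfl : Y = 0 := by lia
    have h : Crosses K (baseEast K m γ (0 - 1) 0) (baseEast K m γ 0 0) (baseEast K m γ (0 - 1) 0)
        (baseEast K m γ 0 0) := by
      constructor <;> simp [baseEast, ScanStep, K.not_bad_blank]
    exact ⟨h, h⟩

theorem add_corner_emod_eq_zero_iff (hm : 0 < m) (X : ℤ) (b : Bool) :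
    (X + corner b) % (m + 1) = 0 ↔ X % (m + 1) = farEnd m b := by
  cases b
  · rw [corner, cond_false, add_zero, farEnd, cond_false]
  · refine ⟨fun h => ?_, add_one_emod_of_emod_eq⟩
    simpa only [corner, farEnd, cond_true, add_sub_cancel_right] using
      sub_one_emod_of_emod_eq hm.le h

theorem turnsAtEnds_refine (hm : 0 < m) (σ : Snake) :
    σ.TurnsAtEnds m (isColUnder (w.refine K m γ).tile) := by
  constructor <;> simp only [isColUnder, tile, EdgeColouring.refine,
    ← add_corner_emod_eq_zero_iff hm]
  · split_ifs with hX hY hY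
    · exact fun _ => hY
    · exact fun h => nomatch h
    · exact fun _ => hY
    · exact fun h => nomatch h
  · intro h hY
    by_contra hX
    exact h (by rw [if_neg hX, if_pos hY])

theorem coarsen_isColUnder_refine {M : ℕ} :
    coarsen M (isColUnder (w.refine K M γ).tile) = isColUnder w.tile := by
  funext a b
  have hM : (M : ℤ) + 1 ≠ 0 := by lia
  simp only [coarsen, isColUnder, tile, EdgeColouring.refine, Int.mul_emod_right, if_true,
    Int.mul_ediv_cancel_left _ hM]

end EdgeColouring

/-- The initial state of the snake: at the origin, moving to the north-east. -/
def Snake.origin : Snake := ⟨0, 0, true, true⟩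

/-- The face of the snake lies in the square of side `N` at the origin. -/
structure Snake.InSquare (N : ℤ) (σ : Snake) : Prop where
  X_nonneg : 0 ≤ σ.X
  X_lt : σ.X + 1 < N
  Y_nonneg : 0 ≤ σ.Y
  Y_lt : σ.Y + 1 < N

/-- The first `L` faces on the path of the snake from the origin lie in a square and are not the
origin again. -/
def PathInSquare (under : ℤ → ℤ → Prop) (N : ℤ) (L : ℕ) : Prop :=
  ∀ r < L, ((Snake.next under)^[r] .origin).InSquare N ∧
    (((Snake.next under)^[r] .origin).X = 0 → ((Snake.next under)^[r] .origin).Y = 0 → r = 0)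

namespace Snake

variable {M : ℕ} {under : ℤ → ℤ → Prop}

theorem iterate_next_of_turnsAtEnds (hM : M.bodd = false)
    (h : ∀ σ : Snake, σ.TurnsAtEnds M under) (S : Snake) (r : ℕ) :
    (next under)^[r] (S.traverse M 0) =
      ((next (coarsen M under))^[r / ((M + 1) * (M + 1))] S).traverse M
        (r % ((M + 1) * (M + 1))) := by
  have hP : 0 < (M + 1) * (M + 1) := by positivity
  have hblocks : ∀ q, (next under)^[(M + 1) * (M + 1) * q] (S.traverse M 0) =
      ((next (coarsen M under))^[q] S).traverse M 0 := fun q => by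
    induction q with
    | zero => rfl
    | succ q ih =>
      rw [mul_add_one, add_comm, Function.iterate_add_apply, ih, Function.iterate_succ_apply',
        iterate_next_traverse_of_add_eq hM hP (zero_add _) fun j _ => h _]
  conv_lhs => rw [← Nat.div_add_mod r ((M + 1) * (M + 1)), add_comm]
  rw [Function.iterate_add_apply, hblocks,
    iterate_next_traverse hM (by simpa only [zero_add] using Nat.mod_lt r hP) fun j _ => h _,
    zero_add]

theorem origin_eq_traverse : origin = origin.traverse M 0 := by
  rw [show 0 = (M + 1) * 0 + 0 from rfl, traverse_eq_inBlock M.zero_le]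
  simp [inBlock, advance, origin]

theorem origin_traverse_eq_zero {r : ℕ} (hX : (origin.traverse M r).X = 0)
    (hY : (origin.traverse M r).Y = 0) : r = 0 := by
  simp only [traverse, inBlock, origin, advance, cond_true, mul_zero, zero_add,
    Nat.cast_eq_zero] at hX hY
  rw [hX, Nat.bodd_zero, Bool.xor_false, cond_true, Nat.cast_eq_zero] at hY
  rw [← Nat.div_add_mod r (M + 1), hX, hY, mul_zero]

theorem mul_add_nonneg_and_lt {A i N : ℤ} (hA : 0 ≤ A) (hAN : A + 1 < N) (hi : 0 ≤ i)
    (hiM : i ≤ M) : 0 ≤ (M + 1) * A + i ∧ (M + 1) * A + i + 1 < (M + 1) * N :=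
  ⟨by positivity, by nlinarith⟩

theorem eq_zero_of_mul_add_eq_zero {A i : ℤ} (hA : 0 ≤ A) (hi : 0 ≤ i)
    (h : (M + 1) * A + i = 0) : A = 0 := by
  nlinarith

end Snake

open Snake in
theorem PathInSquare.of_coarsen {M : ℕ} {under : ℤ → ℤ → Prop} (hM : M.bodd = false)
    (hturns : ∀ σ : Snake, σ.TurnsAtEnds M under)
    {N : ℤ} {L : ℕ}
    (h : PathInSquare (coarsen M under) N L) :
    PathInSquare under ((M + 1) * N) (L * ((M + 1) * (M + 1))) := by
  intro r hr
  have hP : 0 < (M + 1) * (M + 1) := by positivity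
  obtain ⟨hS, hreturn⟩ := h (r / ((M + 1) * (M + 1))) (Nat.div_lt_of_lt_mul (by rwa [mul_comm]))
  rw [origin_eq_traverse, iterate_next_of_turnsAtEnds hM hturns]
  have hmod := Nat.mod_lt r hP
  have hdiv := Nat.div_add_mod r ((M + 1) * (M + 1))
  set q := r / ((M + 1) * (M + 1))
  set e := r % ((M + 1) * (M + 1))
  have hc := advance_mem (b := ((next (coarsen M under))^[q] origin).east)
    (Nat.lt_succ_iff.1 (Nat.div_lt_of_lt_mul hmod))
  have he := advance_mem (b := ((next (coarsen M under))^[q] origin).north ^^ (e / (M + 1)).bodd)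
    (Nat.lt_succ_iff.1 (Nat.mod_lt e M.succ_pos))
  obtain ⟨hX0, hXN⟩ := mul_add_nonneg_and_lt hS.X_nonneg hS.X_lt hc.1 hc.2
  obtain ⟨hY0, hYN⟩ := mul_add_nonneg_and_lt hS.Y_nonneg hS.Y_lt he.1 he.2
  refine ⟨⟨hX0, hXN, hY0, hYN⟩, fun hX hY => ?_⟩
  have hq : q = 0 := hreturn (eq_zero_of_mul_add_eq_zero hS.X_nonneg hc.1 hX)
    (eq_zero_of_mul_add_eq_zero hS.Y_nonneg he.1 hY)
  rw [hq] at hX hY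
  rw [← hdiv, hq, origin_traverse_eq_zero hX hY, mul_zero]

theorem exists_validOn_pathInSquare (K : CellularAutomaton G) (T : ℕ) {M : ℕ} {γ : ℤ → G}
    (hM : M.bodd = false) (hM2 : 2 ≤ M) (hγ : ∀ i, i < 1 ∨ (M : ℤ) < i → γ i = K.blank)
    (hbad : ∀ n i, ¬ K.bad (K.step^[n] γ i)) :
    ∃ (w : EdgeColouring G) (N : ℤ), w.ValidOn K M γ N ∧
      PathInSquare (isColUnder w.tile) N (2 ^ T) := by
  have hM0 : (0 : ℤ) < M := by lia
  induction T generalizing M γ with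
  | zero =>
    refine ⟨_, _, EdgeColouring.validOn_base.refine hM0 hγ (hbad 0), fun r hr => ?_⟩
    obtain rfl : r = 0 := by simpa using hr
    have hN : (0 : ℤ) + 1 < (M + 1) * 1 := by lia
    exact ⟨⟨le_rfl, hN, le_rfl, hN⟩, fun _ _ => rfl⟩
  | succ T ih =>
    obtain ⟨w, N, hw, hpath⟩ := ih (M := M + 2) (by simpa using hM) (by lia)
      (fun i hi => K.step_eq_blank hγ (by exact_mod_cast hi)) (fun n => hbad (n + 1)) (by lia)
    refine ⟨w.refine K M γ, _, EdgeColouring.ValidOn.refine hM0 hγ (hbad 0)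
      (by exact_mod_cast hw), fun r hr => ?_⟩
    refine PathInSquare.of_coarsen hM (EdgeColouring.turnsAtEnds_refine hM0)
      (EdgeColouring.coarsen_isColUnder_refine ▸ hpath) r (hr.trans_le ?_)
    rw [pow_succ]
    exact Nat.mul_le_mul_left _ (by nlinarith)

theorem exists_pathValid_of_not_bad (K : CellularAutomaton G) {M : ℕ} {γ : ℤ → G}
    (hM : M.bodd = false) (hM2 : 2 ≤ M) (hγ : ∀ i, i < 1 ∨ (M : ℤ) < i → γ i = K.blank)
    (hbad : ∀ n i, ¬ K.bad (K.step^[n] γ i)) (N : ℕ) :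
    ∃ x, PathValid K M γ x .origin N ∧ ∀ r < N, ((Snake.next (isColUnder x))^[r] .origin).X = 0 →
      ((Snake.next (isColUnder x))^[r] .origin).Y = 0 → r = 0 := by
  obtain ⟨w, R, hw, hpath⟩ := exists_validOn_pathInSquare K N hM hM2 hγ hbad
  have hpath := fun r (hr : r < N) => hpath r (hr.trans N.lt_two_pow_self)
  refine ⟨w.tile, fun r hr => ?_, fun r hr => (hpath r hr).2⟩
  obtain ⟨hX, hXR, hY, hYR⟩ := (hpath r hr).1
  exact hw.faceValidAt (by lia) hX hXR hY hYR

end Refinement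

/-! ### Cellular automata simulating Turing machines -/

section TuringMachines

open Turing

variable {Γ Λ : Type}

/-- The states of the cellular automaton simulating a Turing machine: a tape symbol, together with
a state from a finite set `S` in the cell carrying the head. -/
abbrev MachineCell (Γ : Type) {Λ : Type} (S : Finset Λ) := Option S × Γ

open Classical in
/-- A machine state as a state of the cellular automaton; states outside `S` are dropped. -/
noncomputable def headIn (S : Finset Λ) (q : Λ) : Option S :=
  if h : q ∈ S then some ⟨q, h⟩ else none

theorem headIn_of_mem {S : Finset Λ} {q : Λ} (h : q ∈ S) : headIn S q = some ⟨q, h⟩ := dif_pos h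

variable [Inhabited Λ] (M : TM0.Machine Γ Λ)

/-- The instruction executed by the head at a cell, if there is a head and it does not halt. -/
def MachineCell.instruction {S : Finset Λ} (c : MachineCell Γ S) :
    Option (Λ × TM0.Stmt Γ) :=
  c.1.bind fun q => M q.1 c.2

variable (S : Finset Λ)

/-- The local rule of the cellular automaton simulating a Turing machine. In each step the whole
configuration moves one cell to the right, so that the head, if it moves, moves by `0` or `2`. -/
noncomputable def machineRule (l c r : MachineCell Γ S) : MachineCell Γ S :=
  (match c.instruction M, l.instruction M, r.instruction M with
    | some (q, .write _), _, _ => headIn S q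
    | _, some (q, .move .right), _ => headIn S q
    | _, _, some (q, .move .left) => headIn S q
    | _, _, _ => none,
   match c.instruction M with
    | some (_, .write a) => a
    | _ => c.2)

/-- The cellular automaton simulating a Turing machine; its bad states are the halting heads. -/
noncomputable def machineAutomaton [Inhabited Γ] :
    CellularAutomaton (MachineCell Γ S) where
  rule := machineRule M S
  blank := (none, default)
  rule_blank := by simp [machineRule, MachineCell.instruction]
  bad c := c.1 ≠ none ∧ c.instruction M = none
  not_bad_blank h := h.1 rfl

open Classical in
/-- The configuration of the cellular automaton encoding a configuration of the Turing machine
whose head is at position `p`. -/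
noncomputable def encodeCfg [Inhabited Γ] (c : TM0.Cfg Γ Λ) (p i : ℤ) :
    MachineCell Γ S :=
  (if i = p then headIn S c.q else none, c.Tape.nth (i - p))

variable [Inhabited Γ] {S}

theorem instruction_encodeCfg {c : TM0.Cfg Γ Λ} (hc : c.q ∈ S) (p i : ℤ) :
    (encodeCfg S c p i).instruction M = if i = p then M c.q c.Tape.head else none := by
  by_cases h : i = p
  · subst h
    simp [encodeCfg, MachineCell.instruction, headIn_of_mem hc]
  · simp [encodeCfg, MachineCell.instruction, h]

theorem bad_encodeCfg {c : TM0.Cfg Γ Λ} (hc : c.q ∈ S) (p i : ℤ) :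
    (machineAutomaton M S).bad (encodeCfg S c p i) ↔ i = p ∧ TM0.step M c = none := by
  change _ ∧ _ = none ↔ _
  rw [instruction_encodeCfg M hc]
  obtain ⟨q, T⟩ := c
  by_cases h : i = p <;> simp [h, encodeCfg, TM0.step, headIn_of_mem hc]

theorem exists_step_encodeCfg {c c' : TM0.Cfg Γ Λ} (hc : c.q ∈ S) (p : ℤ)
    (h : c' ∈ TM0.step M c) :
    ∃ p', (machineAutomaton M S).step (encodeCfg S c p) = encodeCfg S c' p' := by
  obtain ⟨q, T⟩ := c
  simp only [TM0.step, Option.mem_def, Option.map_eq_some_iff] at h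
  obtain ⟨⟨q', a⟩, hM, rfl⟩ := h
  have instr := instruction_encodeCfg M hc p
  dsimp only at instr
  rw [hM] at instr
  rcases a with (_ | _) | a
  · refine ⟨p, funext fun i => ?_⟩
    have tape : T.nth (i - 1 - p) = (T.move .left).nth (i - p) := by
      rw [Tape.move_left_nth, sub_right_comm]
    simp only [CellularAutomaton.step, machineAutomaton, machineRule, instr]
    rcases eq_or_ne i p with rfl | h
    · simpa [encodeCfg] using tape
    · by_cases h₁ : i - 1 = p
      · simpa [h, encodeCfg, h₁] using tape
      · by_cases h₂ : i - 2 = p <;> simpa [h, h₁, h₂, encodeCfg] using tape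
  · refine ⟨p + 2, funext fun i => ?_⟩
    have tape : T.nth (i - 1 - p) = (T.move .right).nth (i - (p + 2)) := by
      rw [Tape.move_right_nth]
      congr 1
      ring
    simp only [CellularAutomaton.step, machineAutomaton, machineRule, instr]
    rcases eq_or_ne i (p + 2) with rfl | h
    · simpa [encodeCfg] using tape
    · simpa [h, encodeCfg, show i - 2 ≠ p by lia] using tape
  · refine ⟨p + 1, funext fun i => ?_⟩
    simp only [CellularAutomaton.step, machineAutomaton, machineRule, instr]
    rcases eq_or_ne i (p + 1) with rfl | h
    · simpa [encodeCfg] using (Tape.write_nth (i := 0) a T).symm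
    · simp [h, encodeCfg, Tape.write_nth, show i - 1 ≠ p by lia, show i - (p + 1) ≠ 0 by lia,
        show i - 1 - p = i - (p + 1) by ring]

theorem eval_dom_of_bad (hS : TM0.Supports M ↑S) {n : ℕ} {i : ℤ} :
    ∀ {c : TM0.Cfg Γ Λ} (_ : c.q ∈ S) {p : ℤ},
      (machineAutomaton M S).bad ((machineAutomaton M S).step^[n] (encodeCfg S c p) i) →
      (StateTransition.eval (TM0.step M) c).Dom := by
  have halted {c : TM0.Cfg Γ Λ} (h : TM0.step M c = none) :
      (StateTransition.eval (TM0.step M) c).Dom :=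
    Part.dom_iff_mem.2 ⟨c, StateTransition.mem_eval.2 ⟨.refl, h⟩⟩
  induction n with
  | zero => exact fun hc p h => halted ((bad_encodeCfg M hc p i).1 h).2
  | succ n ih =>
    intro c hc p h
    rcases hstep : TM0.step M c with - | c'
    · exact halted hstep
    · obtain ⟨p', hp⟩ := exists_step_encodeCfg M hc p hstep
      rw [Function.iterate_succ_apply, hp] at h
      rw [StateTransition.reaches_eval (.single hstep)]
      exact ih (TM0.step_supports M hS hstep hc) h

theorem exists_bad_of_eval_dom (hS : TM0.Supports M ↑S) {c : TM0.Cfg Γ Λ} (hc : c.q ∈ S) (p : ℤ)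
    (h : (StateTransition.eval (TM0.step M) c).Dom) :
    ∃ n i, (machineAutomaton M S).bad ((machineAutomaton M S).step^[n] (encodeCfg S c p) i) := by
  obtain ⟨c', hc'⟩ := Part.dom_iff_mem.1 h
  obtain ⟨reaches, halted⟩ := StateTransition.mem_eval.1 hc'
  clear h hc'
  induction reaches using Relation.ReflTransGen.head_induction_on generalizing p with
  | refl => exact ⟨0, p, (bad_encodeCfg M hc p p).2 ⟨rfl, halted⟩⟩
  | head hstep _ ih =>
    obtain ⟨p', hp⟩ := exists_step_encodeCfg M hc p hstep
    obtain ⟨n, i, hn⟩ := ih (TM0.step_supports M hS hstep hc) p'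
    exact ⟨n + 1, i, by rwa [Function.iterate_succ_apply, hp]⟩

/-- The configuration with the word `a bᵏ` on the cells `1, …, k + 1`, on a background `o`. -/
def wordConfiguration {G : Type*} (o a b : G) (k : ℕ) (i : ℤ) : G :=
  if i = 1 then a else if 2 ≤ i ∧ i ≤ k + 1 then b else o

theorem encodeCfg_init (a b : Γ) (k : ℕ) (hS : default ∈ S) :
    encodeCfg S (TM0.init (a :: List.replicate k b) : TM0.Cfg Γ Λ) 1 =
      wordConfiguration (none, default) (some ⟨default, hS⟩, a) (none, b) k := by
  have nth_natCast (l : List Γ) (n : ℕ) : (Tape.mk₁ l).nth n = l.getI n := by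
    rw [Tape.mk₁, Tape.mk₂, Tape.mk'_nth_nat, ListBlank.nth_mk]
  have nth_negSucc (l : List Γ) (n : ℕ) : (Tape.mk₁ l).nth (Int.negSucc n) = default := by
    change ListBlank.nth (Tape.mk₁ l).left n = _
    simp [Tape.mk₁, Tape.mk₂, ListBlank.nth_mk]
  funext i
  unfold encodeCfg wordConfiguration TM0.init
  rcases lt_trichotomy i 1 with hi | rfl | hi
  · obtain ⟨n, hn⟩ := Int.eq_negSucc_of_lt_zero (show i - 1 < 0 by lia)
    rw [hn, nth_negSucc, if_neg hi.ne, if_neg hi.ne, if_neg (by lia)]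
  · simpa [headIn_of_mem hS] using nth_natCast (a :: List.replicate k b) 0
  · obtain ⟨n, hn⟩ := Int.eq_ofNat_of_zero_le (show 0 ≤ i - 2 by lia)
    have index : i - 1 = (n + 1 : ℕ) := by push_cast; lia
    rw [if_neg hi.ne', if_neg hi.ne', index, nth_natCast, List.getI_cons_succ]
    split_ifs with h
    · rw [List.getI_eq_getElem _ (by simp; lia), List.getElem_replicate]
    · rw [List.getI_eq_default _ (by simp; lia)]

theorem exists_bad_wordConfiguration_iff (hS : TM0.Supports M ↑S) {a b : Γ} {k : ℕ}
    {l : List Γ} (hl : l = a :: List.replicate k b) :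
    (∃ n i, (machineAutomaton M S).bad ((machineAutomaton M S).step^[n]
      (wordConfiguration (machineAutomaton M S).blank (some ⟨default, hS.1⟩, a) (none, b) k) i)) ↔
      (TM0.eval M l).Dom := by
  rw [hl, ← show encodeCfg S _ 1 = wordConfiguration (machineAutomaton M S).blank _ _ k from
    encodeCfg_init a b k hS.1]
  exact ⟨fun ⟨_, _, h⟩ => eval_dom_of_bad M hS hS.1 h, exists_bad_of_eval_dom M hS hS.1 1⟩

theorem trInit_append_singleton {K : Type} [DecidableEq K] {Γ : K → Type} (κ : K) (a b : Γ κ)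
    (n : ℕ) : TM2to1.trInit κ (List.replicate n b ++ [a]) =
      (true, Function.update (fun _ => none) κ (some a)) ::
        List.replicate n (false, Function.update (fun _ => none) κ (some b)) := by
  simp only [TM2to1.trInit, List.reverse_append, List.reverse_replicate, List.reverse_singleton,
    List.singleton_append]
  exact congrArg (List.cons _) List.map_replicate

theorem trNat_two_pow_sub_one (k : ℕ) :
    PartrecToTM2.trNat (2 ^ k - 1) = List.replicate k PartrecToTM2.Γ'.bit1 := by
  induction k with
  | zero => simp [PartrecToTM2.trNat, PartrecToTM2.trNum]
  | succ k ih =>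
    have bit : 2 ^ (k + 1) - 1 = Nat.bit true (2 ^ k - 1) := by
      have := Nat.one_le_two_pow (n := k)
      simp only [Nat.bit, cond_true]
      lia
    rw [bit, List.replicate_succ, ← ih]
    unfold PartrecToTM2.trNat
    rw [← Num.ofNat'_eq, ← Num.ofNat'_eq, Num.ofNat'_bit, cond_true]
    cases Num.ofNat' (2 ^ k - 1) <;> rfl

end TuringMachines

theorem exists_partrec_not_computablePred_dom_comp {f : ℕ → ℕ} (hf : Computable f)
    (hinj : f.Injective) :
    ∃ ψ : ℕ →. ℕ, Partrec ψ ∧ ¬ ComputablePred fun k => (ψ (f k)).Dom := by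
  let inverse : ℕ →. ℕ := fun n => Nat.rfind fun k => Part.some (decide (f k = n))
  have inverse_apply (k : ℕ) : inverse (f k) = Part.some k := by
    refine Part.eq_some_iff.2 (Nat.mem_rfind.2 ⟨by simp, fun {j} hj => ?_⟩)
    simpa using hinj.ne hj.ne
  have inverse_partrec : Partrec inverse := by
    have test : Computable₂ fun n k : ℕ => decide (f k = n) :=
      (Primrec.eq (α := ℕ)).decide.to_comp.comp₂ (hf.comp₂ Computable.snd.to₂)
        Computable.fst.to₂
    exact Partrec.rfind test.partrec₂
  let halts : ℕ →. ℕ := fun k => (Denumerable.ofNat Nat.Partrec.Code k).eval 0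
  have halts_partrec : Partrec halts :=
    Nat.Partrec.Code.eval_part.comp (Computable.ofNat _) (Computable.const 0)
  refine ⟨fun n => (inverse n).bind halts,
    inverse_partrec.bind (halts_partrec.comp Computable.snd), fun h => ?_⟩
  have reduction := ManyOneReducible.mk (fun k => ((inverse (f k)).bind halts).Dom)
    (Computable.encode (α := Nat.Partrec.Code))
  refine ComputablePred.halting_problem 0
    ((ComputablePred.computable_of_manyOneReducible reduction h).of_eq fun c => ?_)
  rw [inverse_apply, Part.bind_some]
  simp only [Denumerable.ofNat_encode]

open Turing in
theorem partrecToTM2_eval_dom (c : ToPartrec.Code) (l : List ℕ) :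
    let : Inhabited PartrecToTM2.Λ' := ⟨PartrecToTM2.trNormal c .halt⟩
    (TM2.eval PartrecToTM2.tr .main (PartrecToTM2.trList l)).Dom ↔ (c.eval l).Dom := by
  let : Inhabited PartrecToTM2.Λ' := ⟨PartrecToTM2.trNormal c .halt⟩
  have init : TM2.init .main (PartrecToTM2.trList l) = PartrecToTM2.init c l := by
    simp only [TM2.init, PartrecToTM2.init]
    congr 1
    funext κ
    cases κ <;> simp [PartrecToTM2.K'.elim]
  change (StateTransition.eval (TM2.step PartrecToTM2.tr) (TM2.init .main _)).Dom ↔ _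
  rw [init, PartrecToTM2.tr_eval]
  rfl

open Turing in
theorem exists_cellularAutomaton_undecidable :
    ∃ (G : Type) (_ : Finite G) (K : CellularAutomaton G) (a b : G), ¬ ComputablePred
      fun k : ℕ => ∃ n i, K.bad (K.step^[n] (wordConfiguration K.blank a b (2 * k)) i) := by
  have computable : Computable fun k : ℕ => 2 ^ (2 * k) - 1 :=
    (Primrec.nat_sub.comp ((Primrec₂.unpaired'.1 Nat.Primrec.pow).comp (Primrec.const 2)
      (Primrec.nat_mul.comp (Primrec.const 2) Primrec.id)) (Primrec.const 1)).to_comp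
  have injective : Function.Injective fun k : ℕ => 2 ^ (2 * k) - 1 := fun i j h => by
    have := Nat.pow_right_injective le_rfl (Nat.sub_one_cancel (by positivity) (by positivity) h)
    lia
  obtain ⟨ψ, hψ, undecidable⟩ := exists_partrec_not_computablePred_dom_comp computable injective
  obtain ⟨c, hc⟩ := ToPartrec.Code.exists_code (Nat.Partrec'.part_iff₁.2 hψ)
  let : Inhabited PartrecToTM2.Λ' := ⟨PartrecToTM2.trNormal c .halt⟩
  classical
  have supports := TM1to0.tr_supports _
    (TM2to1.tr_supports _ (PartrecToTM2.tr_supports c .halt))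
  let symbol (z : PartrecToTM2.Γ') : PartrecToTM2.K' → Option PartrecToTM2.Γ' :=
    Function.update (fun _ => none) .main (some z)
  have : Finite PartrecToTM2.K' := Finite.of_injective
    (fun | .main => (0 : Fin 4) | .rev => 1 | .aux => 2 | .stack => 3)
    fun x y => by cases x <;> cases y <;> simp
  have : Finite (TM2to1.Γ' PartrecToTM2.K' fun _ => PartrecToTM2.Γ') := by
    unfold TM2to1.Γ'
    infer_instance
  refine ⟨MachineCell (TM2to1.Γ' PartrecToTM2.K' fun _ => PartrecToTM2.Γ') _, inferInstance,
    machineAutomaton (TM1to0.tr (TM2to1.tr PartrecToTM2.tr)) _,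
    (some ⟨default, supports.1⟩, (true, symbol .cons)), (none, (false, symbol .bit1)), ?_⟩
  refine fun h => undecidable (h.of_eq fun k => ?_)
  have input : TM2to1.trInit PartrecToTM2.K'.main (PartrecToTM2.trList [2 ^ (2 * k) - 1]) =
      (true, symbol .cons) :: List.replicate (2 * k) (false, symbol .bit1) := by
    rw [← trInit_append_singleton]
    simp [PartrecToTM2.trList, trNat_two_pow_sub_one]
  refine (exists_bad_wordConfiguration_iff _ supports input).trans ?_
  rw [TM1to0.tr_eval]
  refine (TM2to1.tr_eval_dom _ _ _).trans ((partrecToTM2_eval_dom c _).trans ?_)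
  rw [hc ⟨[_], rfl⟩]
  rfl

/-! ### Controlled permutations and words computing them -/

section ControlledPerm

variable {A ι L : Type*} [AddCommGroup A] {slot : ι → A} {P Q C : A → Prop}

/-- A position satisfying `P` and a position satisfying `Q` have no slot in common, unless they
are equal. The slots of `v` are the points `v + slot o`. -/
def SlotsSeparated (slot : ι → A) (P Q : A → Prop) : Prop :=
  ∀ v w o p, P v → Q w → v + slot o = w + slot p → v = w ∧ o = p

theorem SlotsSeparated.mono {P' Q' : A → Prop} (h : SlotsSeparated slot P Q)
    (hP : ∀ v, P' v → P v) (hQ : ∀ v, Q' v → Q v) : SlotsSeparated slot P' Q' :=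
  fun v w o p hv hw => h v w o p (hP v hv) (hQ w hw)

theorem SlotsSeparated.symm (h : SlotsSeparated slot P Q) : SlotsSeparated slot Q P :=
  fun v w o p hv hw hvw => (h w v p o hw hv hvw.symm).imp Eq.symm Eq.symm

theorem SlotsSeparated.translate (h : SlotsSeparated slot P Q) (t : A) :
    SlotsSeparated slot (fun v => P (v + t)) (fun v => Q (v + t)) :=
  fun v w o p hv hw hvw => (h _ _ o p hv hw
    (by rw [add_right_comm, hvw, add_right_comm])).imp_left add_right_cancel

theorem SlotsSeparated.not_slot (h : SlotsSeparated slot P Q) {v : A} (hP : P v) (hQ : ¬ Q v)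
    (o p : ι) : ¬ Q (v + slot o - slot p) :=
  fun hQ' => hQ ((h v _ o p hP hQ' (sub_add_cancel _ _).symm).1 ▸ hQ')

theorem exists_slot_or_forall_not (slot : ι → A) (P : A → Prop) (w : A) :
    (∃ v o, P v ∧ w = v + slot o) ∨ ∀ o, ¬ P (w - slot o) := by
  by_cases h : ∃ o, P (w - slot o)
  · obtain ⟨o, ho⟩ := h
    exact .inl ⟨_, o, ho, (sub_add_cancel _ _).symm⟩
  · exact .inr (not_exists.1 h)

open Classical in
/-- The map underlying `controlledPerm`. -/
noncomputable def controlledFun (slot : ι → A) (P : A → Prop) (q : Equiv.Perm ι) (w : A) : A :=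
  if h : ∃ o, P (w - slot o) then w - slot h.choose + slot (q h.choose) else w

theorem controlledFun_add_slot (h : SlotsSeparated slot P P) {v : A} (hv : P v)
    (q : Equiv.Perm ι) (o : ι) : controlledFun slot P q (v + slot o) = v + slot (q o) := by
  have hex : ∃ p, P (v + slot o - slot p) := ⟨o, by simpa using hv⟩
  obtain ⟨-, hslot⟩ := h v _ o hex.choose hv hex.choose_spec (sub_add_cancel _ _).symm
  rw [controlledFun, dif_pos hex, ← hslot, add_sub_cancel_right]

theorem controlledFun_of_forall_not {w : A} (h : ∀ o, ¬ P (w - slot o)) (q : Equiv.Perm ι) :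
    controlledFun slot P q w = w := dif_neg (not_exists.2 h)

theorem controlledFun_controlledFun (h : SlotsSeparated slot P P) (q r : Equiv.Perm ι) (w : A) :
    controlledFun slot P q (controlledFun slot P r w) = controlledFun slot P (q * r) w := by
  rcases exists_slot_or_forall_not slot P w with ⟨v, o, hv, rfl⟩ | hw
  · simp [controlledFun_add_slot h hv]
  · simp [controlledFun_of_forall_not hw]

theorem controlledFun_one (h : SlotsSeparated slot P P) (w : A) :
    controlledFun slot P 1 w = w := by
  rcases exists_slot_or_forall_not slot P w with ⟨v, o, hv, rfl⟩ | hw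
  · simp [controlledFun_add_slot h hv]
  · exact controlledFun_of_forall_not hw 1

open Classical in
/-- The permutation of the group `A` that applies `q` to the slots of each position satisfying
`P` and fixes everything else. The junk value is `1` when slots of such positions overlap. -/
noncomputable def controlledPerm (slot : ι → A) (P : A → Prop) (q : Equiv.Perm ι) :
    Equiv.Perm A :=
  if h : SlotsSeparated slot P P then
    { toFun := controlledFun slot P q
      invFun := controlledFun slot P q⁻¹
      left_inv := fun w => by
        rw [controlledFun_controlledFun h, inv_mul_cancel, controlledFun_one h]
      right_inv := fun w => by
        rw [controlledFun_controlledFun h, mul_inv_cancel, controlledFun_one h] }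
  else 1

theorem controlledPerm_apply (h : SlotsSeparated slot P P) (q : Equiv.Perm ι) (w : A) :
    controlledPerm slot P q w = controlledFun slot P q w := by
  rw [controlledPerm, dif_pos h]
  rfl

theorem controlledPerm_inv (h : SlotsSeparated slot P P) (q : Equiv.Perm ι) :
    (controlledPerm slot P q)⁻¹ = controlledPerm slot P q⁻¹ := by
  rw [inv_eq_iff_mul_eq_one]
  ext w
  rw [Equiv.Perm.mul_apply, controlledPerm_apply h, controlledPerm_apply h,
    controlledFun_controlledFun h, mul_inv_cancel, controlledFun_one h, Equiv.Perm.one_apply]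

theorem controlledPerm_add_slot (h : SlotsSeparated slot P P) {v : A} (hv : P v)
    (q : Equiv.Perm ι) (o : ι) : controlledPerm slot P q (v + slot o) = v + slot (q o) := by
  rw [controlledPerm_apply h, controlledFun_add_slot h hv]

theorem controlledPerm_of_forall_not {w : A} (h : ∀ o, ¬ P (w - slot o)) (q : Equiv.Perm ι) :
    controlledPerm slot P q w = w := by
  rw [controlledPerm]
  split_ifs with h'
  · exact controlledFun_of_forall_not h q
  · rfl

theorem controlledPerm_of_forall_not_apply (q : Equiv.Perm ι) (h : ∀ v, ¬ P v) :
    controlledPerm slot P q = 1 :=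
  Equiv.ext fun _ => controlledPerm_of_forall_not (fun _ => h _) q

theorem controlledPerm_commutator (hP : SlotsSeparated slot P P) (hQ : SlotsSeparated slot Q Q)
    (hPQ : SlotsSeparated slot P Q) (q r : Equiv.Perm ι) :
    controlledPerm slot P q * controlledPerm slot Q r * (controlledPerm slot P q)⁻¹ *
      (controlledPerm slot Q r)⁻¹ =
    controlledPerm slot (fun v => P v ∧ Q v) (q * r * q⁻¹ * r⁻¹) := by
  have hand : SlotsSeparated slot (fun v => P v ∧ Q v) (fun v => P v ∧ Q v) :=
    hP.mono (fun _ => And.left) (fun _ => And.left)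
  rw [controlledPerm_inv hP, controlledPerm_inv hQ]
  ext w
  simp only [Equiv.Perm.mul_apply]
  rcases exists_slot_or_forall_not slot P w with ⟨v, o, hv, rfl⟩ | hw
  · by_cases hvQ : Q v
    · simp [controlledPerm_add_slot hP hv, controlledPerm_add_slot hQ hvQ,
        controlledPerm_add_slot (P := fun v => P v ∧ Q v) hand ⟨hv, hvQ⟩]
    · have fixed (o) := controlledPerm_of_forall_not (hPQ.not_slot hv hvQ o)
      simp [fixed, controlledPerm_add_slot hP hv, controlledPerm_of_forall_not
        (P := fun v => P v ∧ Q v) fun p h => hPQ.not_slot hv hvQ o p h.2]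
  · rw [controlledPerm_of_forall_not (P := fun v => P v ∧ Q v) fun p h => hw p h.1]
    rcases exists_slot_or_forall_not slot Q w with ⟨v, o, hv, rfl⟩ | hw'
    · have hvP : ¬ P v := by simpa using hw o
      have fixed (o) := controlledPerm_of_forall_not (hPQ.symm.not_slot hv hvP o)
      simp [fixed, controlledPerm_add_slot hQ hv]
    · simp [controlledPerm_of_forall_not hw, controlledPerm_of_forall_not hw']

theorem controlledPerm_conj (hC : SlotsSeparated slot C C) (hP : ∀ v, P v → C v)
    (q r : Equiv.Perm ι) :
    controlledPerm slot C q * controlledPerm slot P r * (controlledPerm slot C q)⁻¹ =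
      controlledPerm slot P (q * r * q⁻¹) := by
  have hPP := hC.mono hP hP
  rw [controlledPerm_inv hC]
  ext w
  simp only [Equiv.Perm.mul_apply]
  rcases exists_slot_or_forall_not slot C w with ⟨v, o, hv, rfl⟩ | hw
  · by_cases hvP : P v
    · simp [controlledPerm_add_slot hC hv, controlledPerm_add_slot hPP hvP]
    · have fixed (o) := controlledPerm_of_forall_not
        ((hC.mono (fun _ => id) hP).not_slot hv hvP o)
      simp [fixed, controlledPerm_add_slot hC hv]
  · simp [controlledPerm_of_forall_not hw, controlledPerm_of_forall_not fun o h => hw o (hP _ h)]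

theorem inv_addRight (t : A) : (Equiv.addRight t)⁻¹ = Equiv.addRight (-t) := by
  rw [inv_eq_iff_mul_eq_one]
  ext w
  simp

theorem addRight_mul_controlledPerm_mul_inv (hP : SlotsSeparated slot P P) (t : A)
    (q : Equiv.Perm ι) :
    Equiv.addRight t * controlledPerm slot P q * (Equiv.addRight t)⁻¹ =
      controlledPerm slot (fun v => P (v - t)) q := by
  have hP' : SlotsSeparated slot (fun v => P (v - t)) (fun v => P (v - t)) := by
    simpa only [sub_eq_add_neg] using hP.translate (-t)
  ext w
  simp only [Equiv.Perm.mul_apply, inv_addRight, Equiv.coe_addRight, ← sub_eq_add_neg]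
  rcases exists_slot_or_forall_not slot (fun v => P (v - t)) w with ⟨v, o, hv, rfl⟩ | hw
  · rw [controlledPerm_add_slot hP' hv, add_sub_right_comm, controlledPerm_add_slot hP hv,
      add_right_comm, sub_add_cancel]
  · rw [controlledPerm_of_forall_not (P := fun v => P (v - t)) hw,
      controlledPerm_of_forall_not fun o h => hw o (by rwa [sub_right_comm]), sub_add_cancel]

theorem controlledPerm_mul_of_disjoint (hC : SlotsSeparated slot C C) (hP : ∀ v, P v → C v)
    (hQ : ∀ v, Q v → C v) (disjoint : ∀ v, P v → ¬ Q v) (q : Equiv.Perm ι) :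
    controlledPerm slot P q * controlledPerm slot Q q =
      controlledPerm slot (fun v => P v ∨ Q v) q := by
  have hPQ := hC.mono hP hQ
  have hor : SlotsSeparated slot (fun v => P v ∨ Q v) (fun v => P v ∨ Q v) :=
    hC.mono (fun v h => h.elim (hP v) (hQ v)) (fun v h => h.elim (hP v) (hQ v))
  ext w
  rw [Equiv.Perm.mul_apply]
  rcases exists_slot_or_forall_not slot (fun v => P v ∨ Q v) w with ⟨v, o, hv, rfl⟩ | hw
  · rw [controlledPerm_add_slot hor hv]
    rcases hv with hv | hv
    · rw [controlledPerm_of_forall_not (hPQ.not_slot hv (disjoint v hv) o),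
        controlledPerm_add_slot (hC.mono hP hP) hv]
    · rw [controlledPerm_add_slot (hC.mono hQ hQ) hv, controlledPerm_of_forall_not
        (hPQ.symm.not_slot hv (fun h => disjoint v h hv) _)]
  · rw [controlledPerm_of_forall_not (P := fun v => P v ∨ Q v) hw,
      controlledPerm_of_forall_not fun o h => hw o (.inr h),
      controlledPerm_of_forall_not fun o h => hw o (.inl h)]

end ControlledPerm

section Words

variable {α H : Type*} [Group H] (π : α → H)

/-- Words over the alphabet `α ∪ α⁻¹`; the letter `(a, true)` is `a` and `(a, false)` is `a⁻¹`. -/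
abbrev SignedWord (α : Type*) : Type _ := List (α × Bool)

/-- The value of a word in a group in which each letter has been given a value. -/
def wordValue (w : SignedWord α) : H := FreeGroup.lift π (FreeGroup.mk w)

theorem wordValue_single (a : α) : wordValue π [(a, true)] = π a := FreeGroup.lift_apply_of

theorem wordValue_append (v w : SignedWord α) :
    wordValue π (v ++ w) = wordValue π v * wordValue π w := by
  simp only [wordValue, ← FreeGroup.mul_mk, map_mul]

theorem wordValue_invRev (w : SignedWord α) :
    wordValue π (FreeGroup.invRev w) = (wordValue π w)⁻¹ := by
  rw [wordValue, wordValue, ← FreeGroup.inv_mk, map_inv]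

theorem map_wordValue {H' : Type*} [Group H'] (f : H →* H') (w : SignedWord α) :
    f (wordValue π w) = wordValue (fun a => f (π a)) w :=
  FreeGroup.lift_unique (f.comp (FreeGroup.lift π)) fun a => by simp

/-- The word `u w u⁻¹`. -/
def conjWord (u w : SignedWord α) : SignedWord α := u ++ w ++ FreeGroup.invRev u

/-- The word `v w v⁻¹ w⁻¹`. -/
def commutatorWord (v w : SignedWord α) : SignedWord α :=
  v ++ w ++ FreeGroup.invRev v ++ FreeGroup.invRev w

/-- The commutator of `a` and `t⁻¹ w t`. If `a` is controlled by a condition on `v`, `w` is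
controlled by a condition on `v` and `t` is a translation, then this is controlled by the first
condition on `v` and the second on `v + t`. -/
def prependWord (t a w : SignedWord α) : SignedWord α :=
  commutatorWord a (conjWord (FreeGroup.invRev t) w)

theorem wordValue_conjWord (u w : SignedWord α) :
    wordValue π (conjWord u w) = wordValue π u * wordValue π w * (wordValue π u)⁻¹ := by
  simp only [conjWord, wordValue_append, wordValue_invRev]

theorem wordValue_commutatorWord (v w : SignedWord α) :
    wordValue π (commutatorWord v w) =
      wordValue π v * wordValue π w * (wordValue π v)⁻¹ * (wordValue π w)⁻¹ := by
  simp only [commutatorWord, wordValue_append, wordValue_invRev]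

/-- A word recognising the label sequences of length `2 * k + 3` whose initial two labels are
those of `a` and `b`, whose last one is that of `z`, and whose other labels are those of `c`. -/
def windowWord (t a b c z : SignedWord α) (k : ℕ) : SignedWord α :=
  prependWord t a (prependWord t b ((prependWord t c)^[2 * k] z))

/-- The product of the `2 * k + 3` translates of `windowWord` under which a given position lies
inside the window. -/
def lineWord (t a b c z : SignedWord α) (k : ℕ) : SignedWord α :=
  (fun w => windowWord t a b c z k ++ conjWord t w)^[2 * k + 3] []

end Words

section Permutations

/-- A 3-cycle that is its own commutator with `firstSwap`. -/
def threeCycle : Equiv.Perm (Fin 5) := Equiv.swap 0 1 * Equiv.swap 1 2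

/-- The transposition that exchanges the slots `0` and `1`. -/
def firstSwap : Equiv.Perm (Fin 5) := Equiv.swap 0 1

/-- Conjugates `threeCycle` to a 3-cycle whose commutator with `threeCycle` is
`doubleSwap`. -/
def conjugator : Equiv.Perm (Fin 5) := Equiv.swap 0 1 * Equiv.swap 0 3

/-- The involution that exchanges the slots `0, 1` and the slots `2, 3`. -/
def doubleSwap : Equiv.Perm (Fin 5) := Equiv.swap 0 1 * Equiv.swap 2 3

theorem commutator_firstSwap_threeCycle :
    firstSwap * threeCycle * firstSwap⁻¹ * threeCycle⁻¹ = threeCycle := by decide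

theorem commutator_threeCycle_conj :
    threeCycle * (conjugator * threeCycle * conjugator⁻¹) * threeCycle⁻¹ *
      (conjugator * threeCycle * conjugator⁻¹)⁻¹ = doubleSwap := by decide

end Permutations

section Windows

variable {A L : Type*} [AddCommGroup A]

/-- The position `v` of a line in direction `t` carries the label `a`, and so do its two
neighbours in the transverse direction `s`; `v` and `v + t` satisfy `C`. -/
def Marked (t s : A) (C : A → Prop) (label : A → Option L) (a : Option L) (v : A) : Prop :=
  C v ∧ C (v + t) ∧ label v = a ∧ label (v + s) = a ∧ label (v - s) = a

/-- The positions `v, v + t, …, v + j • t` are marked by `σ 0, …, σ j`. -/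
def Reads (t s : A) (C : A → Prop) (label : A → Option L) (σ : ℕ → Option L) (j : ℕ) (v : A) :
    Prop :=
  ∀ i ≤ j, Marked t s C label (σ i) (v + i • t)

/-- The position `v` is the one with index `i` in a run of positions marked by
`σ 0, …, σ m`. -/
def HasIndex (t s : A) (C : A → Prop) (label : A → Option L) (m : ℕ) (σ : ℕ → Option L) (v : A)
    (i : ℕ) : Prop :=
  i ≤ m ∧ Reads t s C label σ m (v - i • t)

variable {t s : A} {C : A → Prop} {label : A → Option L} {σ : ℕ → Option L} {m i j : ℕ} {v w : A}

theorem reads_zero : Reads t s C label σ 0 v ↔ Marked t s C label (σ 0) v := by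
  simp [Reads]

theorem reads_succ : Reads t s C label σ (j + 1) v ↔
    Marked t s C label (σ 0) v ∧ Reads t s C label (fun i => σ (i + 1)) j (v + t) := by
  refine ⟨fun h => ⟨by simpa using h 0 j.succ.zero_le, fun i hi => ?_⟩, fun ⟨h0, hs⟩ i hi => ?_⟩
  · simpa only [succ_nsmul', ← add_assoc] using h (i + 1) (by lia)
  · rcases i with - | i
    · simpa using h0
    · simpa only [succ_nsmul', ← add_assoc] using hs i (by lia)

theorem Reads.coded (h : Reads t s C label σ j v) : C v := by
  simpa using (h 0 j.zero_le).1

theorem Marked.label_eq {a : Option L} (h : Marked t s C label a v)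
    (hw : w = v ∨ w = v + s ∨ w = v - s) : label w = a := by
  rcases hw with rfl | rfl | rfl
  exacts [h.2.2.1, h.2.2.2.1, h.2.2.2.2]

theorem HasIndex.marked_of_le (h : HasIndex t s C label m σ v i) {l : ℕ} (hl : l ≤ m) :
    Marked t s C label (σ l) (v - i • t + l • t) := h.2 l hl

theorem HasIndex.marked (h : HasIndex t s C label m σ v i) : Marked t s C label (σ i) v := by
  simpa using h.marked_of_le h.1

theorem HasIndex.coded (h : HasIndex t s C label m σ v i) : C v := h.marked.1

theorem hasIndex_zero_iff : HasIndex t s C label m σ v 0 ↔ Reads t s C label σ m v := by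
  simp [HasIndex]

theorem HasIndex.succ (h : HasIndex t s C label m σ v i) (hi : i < m) :
    HasIndex t s C label m σ (v + t) (i + 1) :=
  ⟨hi, by simpa [succ_nsmul] using h.2⟩

theorem HasIndex.pred (h : HasIndex t s C label m σ (v + t) (i + 1)) :
    HasIndex t s C label m σ v i :=
  ⟨by have := h.1; lia, by simpa [succ_nsmul] using h.2⟩

section Unique

variable (zero : σ 0 = none) (pos : ∀ i, 1 ≤ i → i ≤ m → σ i ≠ none)
include zero pos

theorem HasIndex.le_of_adjacent (h : HasIndex t s C label m σ v i)
    (h' : HasIndex t s C label m σ w j) (hw : w = v ∨ w = v + s ∨ w = v - s) : j ≤ i := by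
  by_contra! hij
  obtain ⟨c, rfl⟩ := Nat.exists_eq_add_of_le hij.le
  have hc : c ≤ m := by have := h'.1; lia
  refine pos c (by lia) hc ?_
  rw [← (h'.marked_of_le hc).2.2.1, ← zero]
  refine (h.marked_of_le m.zero_le).label_eq ?_
  rcases hw with rfl | rfl | rfl
  · left; rw [add_nsmul, zero_nsmul]; abel
  · right; left; rw [add_nsmul, zero_nsmul]; abel
  · right; right; rw [add_nsmul, zero_nsmul]; abel

theorem HasIndex.unique (h : HasIndex t s C label m σ v i)
    (h' : HasIndex t s C label m σ v j) : i = j :=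
  le_antisymm (h'.le_of_adjacent zero pos h (.inl rfl)) (h.le_of_adjacent zero pos h' (.inl rfl))

theorem HasIndex.eq_of_add_side (h : HasIndex t s C label m σ v i)
    (h' : HasIndex t s C label m σ (v + s) j) : i = j :=
  le_antisymm (h'.le_of_adjacent zero pos h (.inr (.inr (by abel))))
    (h.le_of_adjacent zero pos h' (.inr (.inl rfl)))

theorem HasIndex.modEq_of_add_step (h : HasIndex t s C label m σ v i)
    (h' : HasIndex t s C label m σ (v + t) j) : j ≡ i + 1 [ZMOD m + 1] := by
  rcases h.1.eq_or_lt with rfl | hi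
  · rcases j with - | j
    · exact (Int.modEq_zero_iff_dvd.2 dvd_rfl).symm
    · exact absurd h'.1 (by rw [h.unique zero pos h'.pred]; lia)
  · rw [h'.unique zero pos (h.succ hi)]
    rfl

theorem HasIndex.modEq_of_add {a b : ℤ} (h : HasIndex t s C label m σ v i)
    (h' : HasIndex t s C label m σ (v + a • t + b • s) j) (hab : a.natAbs + b.natAbs = 1) :
    j ≡ i + a [ZMOD m + 1] := by
  rcases (by lia : a = 1 ∧ b = 0 ∨ a = -1 ∧ b = 0 ∨ a = 0 ∧ b = 1 ∨ a = 0 ∧ b = -1) with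
    ⟨rfl, rfl⟩ | ⟨rfl, rfl⟩ | ⟨rfl, rfl⟩ | ⟨rfl, rfl⟩ <;>
  simp only [one_smul, zero_smul, neg_smul, add_zero, ← sub_eq_add_neg] at h' ⊢
  · exact h.modEq_of_add_step zero pos h'
  · rw [← sub_add_cancel v t] at h
    simpa [sub_eq_add_neg] using ((h'.modEq_of_add_step zero pos h).sub_right 1).symm
  · rw [h.eq_of_add_side zero pos h']
  · rw [← sub_add_cancel v s] at h
    rw [h'.eq_of_add_side zero pos h]

end Unique

section WordValues

variable {α : Type*} {π : α → Equiv.Perm A} {slot : Fin 5 → A} {tw aw bw cw zw w : SignedWord α}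
variable (separated : SlotsSeparated slot C C) (ht : wordValue π tw = Equiv.addRight t)
include separated ht

theorem wordValue_prependWord
    (ha : wordValue π aw = controlledPerm slot (Marked t s C label (σ 0)) firstSwap)
    (hw : wordValue π w =
      controlledPerm slot (Reads t s C label (fun i => σ (i + 1)) j) threeCycle) :
    wordValue π (prependWord tw aw w) =
      controlledPerm slot (Reads t s C label σ (j + 1)) threeCycle := by
  let R : A → Prop := Reads t s C label (fun i => σ (i + 1)) j
  have hR : SlotsSeparated slot R R := separated.mono (fun _ => Reads.coded) (fun _ => Reads.coded)
  have shifted : (Equiv.addRight t)⁻¹ * controlledPerm slot R threeCycle * Equiv.addRight t =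
      controlledPerm slot (fun v => R (v + t)) threeCycle := by
    have := addRight_mul_controlledPerm_mul_inv hR (-t) threeCycle
    simpa only [sub_neg_eq_add, ← inv_addRight, inv_inv] using this
  have markedR : SlotsSeparated slot (Marked t s C label (σ 0)) fun v => R (v + t) :=
    (separated.translate t).mono (fun _ h => h.2.1) (fun _ => Reads.coded)
  rw [prependWord, wordValue_commutatorWord, wordValue_conjWord, wordValue_invRev, inv_inv, ht, ha,
    hw, shifted, controlledPerm_commutator (separated.mono (fun _ h => h.1) (fun _ h => h.1))
    (hR.translate t) markedR, commutator_firstSwap_threeCycle]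
  congr 1
  exact funext fun v => propext reads_succ.symm

theorem wordValue_iterate_prependWord
    (hc : ∀ i < j, wordValue π cw = controlledPerm slot (Marked t s C label (σ i)) firstSwap)
    (hz : wordValue π zw = controlledPerm slot (Marked t s C label (σ j)) threeCycle) :
    wordValue π ((prependWord tw cw)^[j] zw) =
      controlledPerm slot (Reads t s C label σ j) threeCycle := by
  induction j generalizing σ with
  | zero =>
    rw [Function.iterate_zero_apply, hz]
    congr 1
    exact funext fun v => propext reads_zero.symm
  | succ j ih =>
    rw [Function.iterate_succ_apply']
    exact wordValue_prependWord separated ht (hc 0 j.succ_pos)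
      (ih (fun i hi => hc (i + 1) (by lia)) hz)

variable {k : ℕ}
  (ha : wordValue π aw = controlledPerm slot (Marked t s C label (σ 0)) firstSwap)
  (hb : wordValue π bw = controlledPerm slot (Marked t s C label (σ 1)) firstSwap)
  (hc : ∀ i, 2 ≤ i → i < 2 * k + 2 →
    wordValue π cw = controlledPerm slot (Marked t s C label (σ i)) firstSwap)
  (hz : wordValue π zw = controlledPerm slot (Marked t s C label (σ (2 * k + 2))) threeCycle)
include ha hb hc hz

theorem wordValue_windowWord : wordValue π (windowWord tw aw bw cw zw k) =
    controlledPerm slot (Reads t s C label σ (2 * k + 2)) threeCycle :=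
  wordValue_prependWord separated ht ha <|
    wordValue_prependWord (σ := fun i => σ (i + 1)) separated ht hb <|
      wordValue_iterate_prependWord separated ht (fun i hi => hc (i + 2) (by lia) (by lia)) hz

theorem wordValue_iterate_windowWord (zero : σ 0 = none)
    (pos : ∀ i, 1 ≤ i → i ≤ 2 * k + 2 → σ i ≠ none) (hj : j ≤ 2 * k + 3) :
    wordValue π ((fun w => windowWord tw aw bw cw zw k ++ conjWord tw w)^[j] []) =
      controlledPerm slot (fun v => ∃ i < j, HasIndex t s C label (2 * k + 2) σ v i)
        threeCycle := by
  induction j with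
  | zero =>
    rw [controlledPerm_of_forall_not_apply _ (by simp)]
    rfl
  | succ j ih =>
    have coded : ∀ v, (∃ i < j, HasIndex t s C label (2 * k + 2) σ v i) → C v :=
      fun v ⟨i, _, h⟩ => h.coded
    have next {v i} (hi : i < j) (h : HasIndex t s C label (2 * k + 2) σ (v - t) i) :
        HasIndex t s C label (2 * k + 2) σ v (i + 1) := by
      simpa using h.succ (by lia)
    rw [Function.iterate_succ_apply', wordValue_append, wordValue_conjWord,
      wordValue_windowWord separated ht ha hb hc hz, ih (by lia), ht,
      addRight_mul_controlledPerm_mul_inv (separated.mono coded coded),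
      controlledPerm_mul_of_disjoint separated fun _ => Reads.coded]
    · congr 1
      refine funext fun v => propext ⟨?_, ?_⟩
      · rintro (h | ⟨i, hi, h⟩)
        · exact ⟨0, j.succ_pos, hasIndex_zero_iff.2 h⟩
        · exact ⟨i + 1, by lia, next hi h⟩
      · rintro ⟨_ | i, hi, h⟩
        · exact .inl (hasIndex_zero_iff.1 h)
        · exact .inr ⟨i, by lia, HasIndex.pred (by simpa using h)⟩
    · exact fun v ⟨i, hi, h⟩ => (next hi h).coded
    · rintro v h ⟨i, hi, h'⟩
      exact absurd ((next hi h').unique zero pos (hasIndex_zero_iff.2 h)) i.succ_ne_zero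

theorem wordValue_lineWord (zero : σ 0 = none)
    (pos : ∀ i, 1 ≤ i → i ≤ 2 * k + 2 → σ i ≠ none) :
    wordValue π (lineWord tw aw bw cw zw k) =
      controlledPerm slot (fun v => ∃ i, HasIndex t s C label (2 * k + 2) σ v i) threeCycle := by
  rw [lineWord, wordValue_iterate_windowWord separated ht ha hb hc hz zero pos le_rfl]
  congr 1
  exact funext fun v => propext
    ⟨fun ⟨i, _, h⟩ => ⟨i, h⟩, fun ⟨i, h⟩ => ⟨i, by have := h.1; lia, h⟩⟩

end WordValues

end Windows

/-! ### The permutation that moves a position along its snake -/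

section Involutions

variable {A : Type*} {τ ρ : Equiv.Perm A} {N : ℕ}

theorem semiconjBy_of_involutions (hτ : τ * τ = 1) (hρ : ρ * ρ = 1) :
    SemiconjBy τ (ρ * τ) (ρ * τ)⁻¹ := by
  rw [SemiconjBy, mul_inv_rev, inv_eq_of_mul_eq_one_right hτ, inv_eq_of_mul_eq_one_right hρ,
    mul_assoc]

theorem apply_zpow_of_involutions (hτ : τ * τ = 1) (hρ : ρ * ρ = 1) (a : ℤ) (y : A) :
    τ (((ρ * τ) ^ a) y) = ((ρ * τ) ^ (-a)) (τ y) := by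
  rw [zpow_neg, ← inv_zpow]
  exact congrArg (· y) ((semiconjBy_of_involutions hτ hρ).zpow_right a).eq

variable (hτ : τ * τ = 1) (hρ : ρ * ρ = 1)
  (fixed : ∀ y, ∃ a ≤ N,
    τ (((ρ * τ) ^ a) y) = ((ρ * τ) ^ a) y ∨ ρ (τ (((ρ * τ) ^ a) y)) = τ (((ρ * τ) ^ a) y))
include hτ hρ fixed

theorem exists_apply_eq_zpow_of_fixed (y : A) :
    ∃ c : ℕ, c ≤ 2 * N + 1 ∧ τ y = ((ρ * τ) ^ (c : ℤ)) y := by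
  have reflect {a b : ℕ} (h : τ (((ρ * τ) ^ a) y) = ((ρ * τ) ^ b) y) :
      τ y = ((ρ * τ) ^ ((a + b : ℕ) : ℤ)) y := by
    rw [← zpow_natCast, apply_zpow_of_involutions hτ hρ, zpow_neg, Equiv.Perm.inv_eq_iff_eq] at h
    rw [h, ← zpow_natCast, ← Equiv.Perm.mul_apply, ← zpow_add, Nat.cast_add]
  obtain ⟨a, ha, h | h⟩ := fixed y
  · exact ⟨a + a, by lia, reflect h⟩
  · exact ⟨a + (a + 1), by lia, reflect (by rw [← h, pow_succ']; rfl)⟩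

theorem exists_pow_apply_eq_self_of_fixed (y : A) :
    ∃ k : ℕ, 0 < k ∧ k ≤ 4 * N + 3 ∧ ((ρ * τ) ^ k) y = y := by
  obtain ⟨c, hc, h⟩ := exists_apply_eq_zpow_of_fixed hτ hρ fixed y
  obtain ⟨c', hc', h'⟩ :=
    exists_apply_eq_zpow_of_fixed hτ hρ fixed (((ρ * τ) ^ (N + 1 : ℤ)) y)
  refine ⟨c' + 2 * (N + 1) - c, by lia, by lia, ?_⟩
  rw [apply_zpow_of_involutions hτ hρ, h, ← Equiv.Perm.mul_apply, ← Equiv.Perm.mul_apply,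
    ← zpow_add, ← zpow_add] at h'
  have := congrArg ((ρ * τ) ^ (N + 1 - c : ℤ)) h'
  rw [← Equiv.Perm.mul_apply, ← Equiv.Perm.mul_apply, ← zpow_add, ← zpow_add] at this
  rw [← zpow_natCast]
  convert this.symm using 2
  · congr 1
    lia
  · simp

theorem pow_factorial_eq_one_of_fixed : (ρ * τ) ^ (4 * N + 3).factorial = 1 := by
  ext y
  obtain ⟨k, hk, hkN, h⟩ := exists_pow_apply_eq_self_of_fixed hτ hρ fixed y
  obtain ⟨q, hq⟩ := Nat.dvd_factorial hk hkN
  rw [hq, pow_mul, Equiv.Perm.one_apply]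
  exact Equiv.Perm.pow_apply_eq_self_of_apply_eq_self h q

end Involutions

section Snake

variable (under : ℤ → ℤ → Prop) (σ : Snake)

/-- The snake that retraces the path of `σ` backwards. -/
def Snake.reverse (σ : Snake) : Snake := ⟨σ.X, σ.Y, !σ.east, !σ.north⟩

theorem Snake.next_reverse_next : (σ.next under).reverse.next under = σ.reverse := by
  rcases σ with ⟨X, Y, e, n⟩
  by_cases h : under (X + corner e) (Y + corner n) <;> cases e <;> cases n <;>
    simp_all [Snake.next, Snake.reverse, stride, corner]

theorem Snake.natAbs_next_sub :
    ((σ.next under).X - σ.X).natAbs + ((σ.next under).Y - σ.Y).natAbs = 1 := by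
  rcases σ with ⟨X, Y, e, n⟩
  by_cases h : under (X + corner e) (Y + corner n) <;> cases e <;> cases n <;>
    simp_all [Snake.next, stride, corner]

/-- Headings are a function of the position along a snake that starts at the origin. -/
def Snake.Aligned (σ : Snake) : Prop := σ.east = decide (Even σ.Y) ∧ σ.north = decide (Even σ.X)

theorem Snake.Aligned.next {σ : Snake} (h : σ.Aligned) : (σ.next under).Aligned := by
  rcases σ with ⟨X, Y, e, n⟩
  obtain ⟨rfl, rfl⟩ : e = decide (Even Y) ∧ n = decide (Even X) := h
  have odd_stride (b : Bool) : Odd (stride b) := by cases b <;> decide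
  rw [Snake.next]
  split_ifs <;>
    simp [Aligned, Int.even_add, Int.not_even_iff_odd.2 (odd_stride _), -Int.not_even_iff_odd]

end Snake

/-- The data that a tape yields at the positions in `A`: the two directions of the tiling, which
positions carry a code, and the tile, index labels and headings they encode. -/
structure TileField (A G : Type*) where
  right : A
  up : A
  coded : A → Prop
  tile : A → Tile G
  colLabel : A → Option (Label G)
  rowLabel : A → Option (Label G)
  east : A → Bool
  north : A → Bool

namespace TileField

variable {A G : Type*} [AddCommGroup A] {K : CellularAutomaton G} {D : TileField A G} {a v w : A}

section Positions

/-- The position with coordinates `(X, Y)` in the tiling with origin `a`. -/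
def point (D : TileField A G) (a : A) (X Y : ℤ) : A := a + X • D.right + Y • D.up

theorem point_zero : D.point a 0 0 = a := by simp [point]

theorem point_point (a : A) (X Y X' Y' : ℤ) :
    D.point (D.point a X Y) X' Y' = D.point a (X + X') (Y + Y') := by
  simp only [point, add_smul]
  abel

/-- The tiling that is read from the origin `a`. -/
def tilesFrom (D : TileField A G) (a : A) (X Y : ℤ) : Tile G := D.tile (D.point a X Y)

theorem tilesFrom_point (a : A) (X Y X' Y' : ℤ) :
    D.tilesFrom (D.point a X Y) X' Y' = D.tilesFrom a (X + X') (Y + Y') := by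
  rw [tilesFrom, point_point, tilesFrom]

/-- The snake at `v` with the given headings after one step, in coordinates relative to `v`. -/
noncomputable def stepFrom (D : TileField A G) (v : A) (east north : Bool) : Snake :=
  Snake.next (isColUnder (D.tilesFrom v)) ⟨0, 0, east, north⟩

theorem shift_stepFrom_point (a : A) (σ : Snake) :
    (D.stepFrom (D.point a σ.X σ.Y) σ.east σ.north).shift σ.X σ.Y =
      σ.next (isColUnder (D.tilesFrom a)) := by
  have := Snake.next_shift σ.X σ.Y (isColUnder (D.tilesFrom (D.point a σ.X σ.Y)))
    ⟨0, 0, σ.east, σ.north⟩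
  simp only [isColUnder, tilesFrom_point, add_sub_cancel, Snake.shift, zero_add] at this
  exact this.symm

/-- The snake at `v` after one step with the headings stored at `v`. -/
noncomputable def successor (D : TileField A G) (v : A) : Snake :=
  D.stepFrom v (D.east v) (D.north v)

/-- The snake at `v` after one step with the reversed headings. -/
noncomputable def predecessor (D : TileField A G) (v : A) : Snake :=
  D.stepFrom v (!D.east v) (!D.north v)

/-- The position following `v`. -/
noncomputable def next (D : TileField A G) (v : A) : A :=
  D.point v (D.successor v).X (D.successor v).Y

/-- The position preceding `v`. -/
noncomputable def prev (D : TileField A G) (v : A) : A :=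
  D.point v (D.predecessor v).X (D.predecessor v).Y

/-- The snake `σ` is at the position `v` of the tiling with origin `a`, and has the headings
stored there. -/
structure IsAt (D : TileField A G) (a : A) (σ : Snake) (v : A) : Prop where
  eq_point : v = D.point a σ.X σ.Y
  east : D.east v = σ.east
  north : D.north v = σ.north

/-- The step from `v` to `D.next v` is legal: both positions are coded, the face at `v` is tiled
correctly, and the headings stored at `D.next v` are those of the snake. -/
structure Linked (K : CellularAutomaton G) (D : TileField A G) (v : A) : Prop where
  coded : D.coded v
  coded_next : D.coded (D.next v)
  faceValid : FaceValid K (D.tilesFrom v 0 0) (D.tilesFrom v 1 0) (D.tilesFrom v 0 1)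
    (D.tilesFrom v 1 1) (D.colLabel v) (D.rowLabel v)
  east_next : D.east (D.next v) = (D.successor v).east
  north_next : D.north (D.next v) = (D.successor v).north

theorem IsAt.shift_successor {σ : Snake} (h : D.IsAt a σ v) :
    (D.successor v).shift σ.X σ.Y = σ.next (isColUnder (D.tilesFrom a)) := by
  rw [successor, h.east, h.north, h.eq_point, shift_stepFrom_point]

theorem IsAt.next_eq_point {σ : Snake} (h : D.IsAt a σ v) :
    D.next v = D.point a (σ.next (isColUnder (D.tilesFrom a))).X
      (σ.next (isColUnder (D.tilesFrom a))).Y := by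
  rw [← h.shift_successor, next]
  conv_lhs => rw [h.eq_point, point_point, ← h.eq_point]
  simp [Snake.shift, add_comm]

theorem IsAt.next {σ : Snake} (h : D.IsAt a σ v) (hv : Linked K D v) :
    D.IsAt a (σ.next (isColUnder (D.tilesFrom a))) (D.next v) :=
  ⟨h.next_eq_point, by rw [hv.east_next, ← h.shift_successor]; rfl,
    by rw [hv.north_next, ← h.shift_successor]; rfl⟩

theorem prev_next (hv : Linked K D v) : D.prev (D.next v) = v := by
  have retrace := shift_stepFrom_point v (D.successor v).reverse (D := D)
  rw [successor, stepFrom, Snake.next_reverse_next, ← stepFrom, ← successor] at retrace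
  have hX := congrArg Snake.X retrace
  have hY := congrArg Snake.Y retrace
  rw [prev, predecessor, hv.east_next, hv.north_next]
  nth_rw 1 [next]
  rw [point_point, add_comm _ (Snake.X _), add_comm _ (Snake.Y _)]
  exact (congrArg₂ (D.point v) hX hY).trans point_zero

end Positions

section Dynamics

variable {slot : Fin 5 → A} {P : A → Prop}

open Classical in
/-- The map underlying `linkPerm`. -/
noncomputable def linkFun (K : CellularAutomaton G) (D : TileField A G) (slot : Fin 5 → A)
    (w : A) : A :=
  if Linked K D (w - slot 0) then D.next (w - slot 0) + slot 1
  else if Linked K D (D.prev (w - slot 1)) ∧ D.next (D.prev (w - slot 1)) = w - slot 1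
  then D.prev (w - slot 1) + slot 0
  else w

theorem linkFun_forward (hv : Linked K D v) :
    linkFun K D slot (v + slot 0) = D.next v + slot 1 := by
  simp [linkFun, hv]

theorem linkFun_backward (separated : SlotsSeparated slot D.coded D.coded) (hv : Linked K D v) :
    linkFun K D slot (D.next v + slot 1) = v + slot 0 := by
  have : ¬ Linked K D (D.next v + slot 1 - slot 0) := fun h =>
    absurd (separated _ _ 1 0 hv.coded_next h.coded (by abel)).2 (by decide)
  simp [linkFun, this, prev_next hv, hv]

theorem linkFun_cases (K : CellularAutomaton G) (D : TileField A G) (slot : Fin 5 → A) (w : A) :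
    (∃ v, Linked K D v ∧ w = v + slot 0) ∨ (∃ v, Linked K D v ∧ w = D.next v + slot 1) ∨
      linkFun K D slot w = w := by
  by_cases h₀ : Linked K D (w - slot 0)
  · exact .inl ⟨_, h₀, by simp⟩
  by_cases h₁ : Linked K D (D.prev (w - slot 1)) ∧ D.next (D.prev (w - slot 1)) = w - slot 1
  · exact .inr (.inl ⟨_, h₁.1, by simp [h₁.2]⟩)
  · exact .inr (.inr (by rw [linkFun, if_neg h₀, if_neg h₁]))

theorem linkFun_involutive (separated : SlotsSeparated slot D.coded D.coded) :
    Function.Involutive (linkFun K D slot) := fun w => by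
  rcases linkFun_cases K D slot w with ⟨v, hv, rfl⟩ | ⟨v, hv, rfl⟩ | h
  · rw [linkFun_forward hv, linkFun_backward separated hv]
  · rw [linkFun_backward separated hv, linkFun_forward hv]
  · rw [h, h]

open Classical in
/-- The involution that exchanges the slot `0` of each linked position with the slot `1` of the
position following it. The junk value is `1` when this is not well defined. -/
noncomputable def linkPerm (K : CellularAutomaton G) (D : TileField A G) (slot : Fin 5 → A) :
    Equiv.Perm A :=
  if h : Function.Involutive (linkFun K D slot) then h.toPerm else 1

/-- The permutation that moves the slots `0` one step forward and the slots `1` one step backward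
along the snakes, as long as the positions are linked and satisfy `P`. -/
noncomputable def dynamics (K : CellularAutomaton G) (D : TileField A G) (slot : Fin 5 → A)
    (P : A → Prop) : Equiv.Perm A :=
  controlledPerm slot P doubleSwap * linkPerm K D slot

/-- The first `N` positions of the snake from `v` are linked and satisfy `P`. -/
def IsChain (K : CellularAutomaton G) (D : TileField A G) (P : A → Prop) (N : ℕ) (v : A) : Prop :=
  ∀ r < N, Linked K D (D.next^[r] v) ∧ P (D.next^[r] v)

theorem IsChain.cons {N : ℕ} (hv : Linked K D v) (hP : P v) (h : IsChain K D P N (D.next v)) :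
    IsChain K D P (N + 1) v
  | 0, _ => ⟨hv, hP⟩
  | r + 1, hr => h r (Nat.lt_of_succ_lt_succ hr)

theorem IsChain.concat {N : ℕ} (h : IsChain K D P N v) (hv : Linked K D (D.next^[N] v))
    (hP : P (D.next^[N] v)) : IsChain K D P (N + 1) v := fun r hr => by
  rcases Nat.lt_succ_iff_lt_or_eq.1 hr with hr | rfl
  exacts [h r hr, ⟨hv, hP⟩]

variable (separated : SlotsSeparated slot D.coded D.coded)
include separated

theorem linkPerm_apply (w : A) : linkPerm K D slot w = linkFun K D slot w := by
  rw [linkPerm, dif_pos (linkFun_involutive separated)]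
  rfl

theorem linkPerm_forward (hv : Linked K D v) :
    linkPerm K D slot (v + slot 0) = D.next v + slot 1 := by
  rw [linkPerm_apply separated, linkFun_forward hv]

theorem linkPerm_backward (hv : Linked K D v) :
    linkPerm K D slot (D.next v + slot 1) = v + slot 0 := by
  rw [linkPerm_apply separated, linkFun_backward separated hv]

theorem linkPerm_mul_self : linkPerm K D slot * linkPerm K D slot = 1 := by
  ext w
  simp only [Equiv.Perm.mul_apply, linkPerm_apply separated, linkFun_involutive separated w,
    Equiv.Perm.one_apply]

theorem linked_of_linkPerm_ne (hv : D.coded v)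
    (hne : linkPerm K D slot (v + slot 0) ≠ v + slot 0) : Linked K D v := by
  rw [linkPerm_apply separated] at hne
  rcases linkFun_cases K D slot (v + slot 0) with ⟨u, hu, h⟩ | ⟨u, hu, h⟩ | h
  · rwa [(separated _ _ 0 0 hv hu.coded h).1]
  · exact absurd (separated _ _ 0 1 hv hu.coded_next h).2 (by decide)
  · exact absurd h hne

theorem exists_linked_of_linkPerm_ne (hw : D.coded w)
    (hne : linkPerm K D slot (w + slot 1) ≠ w + slot 1) : ∃ v, Linked K D v ∧ D.next v = w := by
  rw [linkPerm_apply separated] at hne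
  rcases linkFun_cases K D slot (w + slot 1) with ⟨u, hu, h⟩ | ⟨u, hu, h⟩ | h
  · exact absurd (separated _ _ 1 0 hw hu.coded h).2 (by decide)
  · exact ⟨u, hu, (separated _ _ 1 1 hw hu.coded_next h).1.symm⟩
  · exact absurd h hne

variable (hP : ∀ v, P v → D.coded v)
include hP

theorem dynamics_forward (hv : Linked K D v) (hPv : P (D.next v)) :
    dynamics K D slot P (v + slot 0) = D.next v + slot 0 := by
  rw [dynamics, Equiv.Perm.mul_apply, linkPerm_forward separated hv,
    controlledPerm_add_slot (separated.mono hP hP) hPv]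
  rfl

theorem dynamics_backward (hv : Linked K D v) (hPv : P v) :
    dynamics K D slot P (D.next v + slot 1) = v + slot 1 := by
  rw [dynamics, Equiv.Perm.mul_apply, linkPerm_backward separated hv,
    controlledPerm_add_slot (separated.mono hP hP) hPv]
  rfl

theorem holds_of_controlledPerm_ne {q : Equiv.Perm (Fin 5)} {o : Fin 5} (hv : D.coded v)
    (hne : controlledPerm slot P q (v + slot o) ≠ v + slot o) : P v := by
  by_contra hPv
  exact hne (controlledPerm_of_forall_not
    ((separated.mono (fun _ => id) hP).not_slot hv hPv o) q)

end Dynamics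

section FiniteOrder

variable {slot : Fin 5 → A} {P : A → Prop} {N : ℕ}

/-- Neither of the two involutions composing `dynamics` stops the motion at `y`. -/
def Moves (K : CellularAutomaton G) (D : TileField A G) (slot : Fin 5 → A) (P : A → Prop) (y : A) :
    Prop :=
  linkPerm K D slot y ≠ y ∧
    controlledPerm slot P doubleSwap (linkPerm K D slot y) ≠ linkPerm K D slot y

variable (separated : SlotsSeparated slot D.coded D.coded) (hP : ∀ v, P v → D.coded v)
include separated hP

theorem forward_of_moves (hv : D.coded v) (h : Moves K D slot P (v + slot 0)) :
    Linked K D v ∧ P (D.next v) := by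
  have linked := linked_of_linkPerm_ne separated hv h.1
  have hne := h.2
  rw [linkPerm_forward separated linked] at hne
  exact ⟨linked, holds_of_controlledPerm_ne separated hP linked.coded_next hne⟩

theorem backward_of_moves (hw : D.coded w) (h : Moves K D slot P (w + slot 1)) :
    ∃ v, Linked K D v ∧ P v ∧ D.next v = w := by
  obtain ⟨v, linked, rfl⟩ := exists_linked_of_linkPerm_ne separated hw h.1
  have hne := h.2
  rw [linkPerm_backward separated linked] at hne
  exact ⟨v, linked, holds_of_controlledPerm_ne separated hP linked.coded hne, rfl⟩

theorem isChain_of_moves_forward (hv : P v)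
    (h : ∀ r < N, Moves K D slot P ((dynamics K D slot P ^ r) (v + slot 0))) :
    IsChain K D P N v := by
  induction N generalizing v with
  | zero => exact fun r hr => absurd hr r.not_lt_zero
  | succ N ih =>
    obtain ⟨linked, hPv⟩ := forward_of_moves separated hP (hP v hv) (h 0 N.succ_pos)
    refine .cons linked hv (ih hPv fun r hr => ?_)
    rw [← dynamics_forward separated hP linked hPv, ← Equiv.Perm.mul_apply, ← pow_succ]
    exact h (r + 1) (Nat.succ_lt_succ hr)

theorem exists_isChain_of_moves_backward (hw : D.coded w)
    (h : ∀ r < N, Moves K D slot P ((dynamics K D slot P ^ r) (w + slot 1))) :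
    ∃ v, IsChain K D P N v ∧ D.next^[N] v = w := by
  induction N generalizing w with
  | zero => exact ⟨w, fun r hr => absurd hr r.not_lt_zero, rfl⟩
  | succ N ih =>
    obtain ⟨v, linked, hPv, rfl⟩ := backward_of_moves separated hP hw (h 0 N.succ_pos)
    obtain ⟨u, chain, rfl⟩ := ih linked.coded fun r hr => by
      rw [← dynamics_backward separated hP linked hPv, ← Equiv.Perm.mul_apply, ← pow_succ]
      exact h (r + 1) (Nat.succ_lt_succ hr)
    exact ⟨u, chain.concat linked hPv, Function.iterate_succ_apply' ..⟩

theorem exists_not_moves (hN : ∀ v, ¬ IsChain K D P N v) (y : A) :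
    ∃ r ≤ N, ¬ Moves K D slot P ((dynamics K D slot P ^ r) y) := by
  by_contra! moves
  rcases linkFun_cases K D slot y with ⟨v, hv, rfl⟩ | ⟨v, hv, rfl⟩ | h
  · have hPv := (forward_of_moves separated hP hv.coded (moves 0 N.zero_le)).2
    refine hN (D.next v) (isChain_of_moves_forward separated hP hPv fun r hr => ?_)
    rw [← dynamics_forward separated hP hv hPv, ← Equiv.Perm.mul_apply, ← pow_succ]
    exact moves (r + 1) hr
  · obtain ⟨u, chain, -⟩ :=
      exists_isChain_of_moves_backward separated hP hv.coded_next fun r hr => moves r hr.le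
    exact hN u chain
  · exact (moves 0 N.zero_le).1 ((linkPerm_apply separated y).trans h)

theorem dynamics_pow_factorial_eq_one (hN : ∀ v, ¬ IsChain K D P N v) :
    dynamics K D slot P ^ (4 * N + 3).factorial = 1 := by
  have control_mul_self :
      controlledPerm slot P doubleSwap * controlledPerm slot P doubleSwap = 1 := by
    have doubleSwap_inv : doubleSwap⁻¹ = doubleSwap := by decide
    rw [← inv_eq_iff_mul_eq_one, controlledPerm_inv (separated.mono hP hP), doubleSwap_inv]
  refine pow_factorial_eq_one_of_fixed (linkPerm_mul_self separated) control_mul_self fun y => ?_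
  obtain ⟨r, hr, h⟩ := exists_not_moves separated hP hN y
  rw [Moves, not_and_or, not_ne_iff, not_ne_iff] at h
  exact ⟨r, hr, h⟩

end FiniteOrder

section Grid

variable {m : ℕ} {γ : ℤ → G} {N : ℕ}

/-- The position `v` has a column index and a row index with respect to the labels
`σ 0, …, σ m`. -/
def OnGrid (D : TileField A G) (m : ℕ) (σ : ℕ → Option (Label G)) (v : A) : Prop :=
  (∃ i, HasIndex D.right D.up D.coded D.colLabel m σ v i) ∧
    ∃ j, HasIndex D.up D.right D.coded D.rowLabel m σ v j

theorem OnGrid.coded {σ : ℕ → Option (Label G)} (h : D.OnGrid m σ v) : D.coded v :=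
  h.1.choose_spec.coded

theorem IsAt.next_eq_add {S : Snake} (h : D.IsAt a S v) :
    D.next v = v + ((S.next (isColUnder (D.tilesFrom a))).X - S.X) • D.right +
      ((S.next (isColUnder (D.tilesFrom a))).Y - S.Y) • D.up := by
  rw [h.next_eq_point]
  conv_rhs => rw [h.eq_point]
  simp only [point, sub_smul]
  abel

theorem IsAt.faceValidAt {S : Snake} (h : D.IsAt a S v) (hv : Linked K D v)
    (hcol : D.colLabel v = indexLabel m γ (S.X % (m + 1)))
    (hrow : D.rowLabel v = indexLabel m γ (S.Y % (m + 1))) :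
    FaceValidAt K m γ (D.tilesFrom a) S.X S.Y := by
  have face := hv.faceValid
  rw [hcol, hrow, h.eq_point] at face
  simp only [tilesFrom_point, add_zero] at face
  exact face

theorem label_eq_of_modEq {t s : A} {C : A → Prop} {label : A → Option (Label G)} {i : ℕ} {X : ℤ}
    (h : HasIndex t s C label m (fun l => indexLabel m γ l) v i) (hX : i ≡ X [ZMOD m + 1]) :
    label v = indexLabel m γ (X % (m + 1)) := by
  have := h.1
  rw [h.marked.2.2.1, ← hX.eq, Int.emod_eq_of_lt (by lia) (by lia)]

/-- The position `v` has column and row indices congruent to the coordinates of the snake `S`. -/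
def IndexedBy (D : TileField A G) (m : ℕ) (γ : ℤ → G) (S : Snake) (v : A) : Prop :=
  (∃ i : ℕ, HasIndex D.right D.up D.coded D.colLabel m (fun l => indexLabel m γ l) v i ∧
    i ≡ S.X [ZMOD m + 1]) ∧
  ∃ j : ℕ, HasIndex D.up D.right D.coded D.rowLabel m (fun l => indexLabel m γ l) v j ∧
    j ≡ S.Y [ZMOD m + 1]

theorem IndexedBy.next {S : Snake} (h : D.IndexedBy m γ S v) (hS : D.IsAt a S v)
    (hgrid : D.OnGrid m (fun l => indexLabel m γ l) (D.next v)) :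
    D.IndexedBy m γ (S.next (isColUnder (D.tilesFrom a))) (D.next v) := by
  have zero : indexLabel m γ ((0 : ℕ) : ℤ) = none := indexLabel_zero
  have pos (i : ℕ) (hi : 1 ≤ i) (_ : i ≤ m) : indexLabel m γ i ≠ none := by
    simp [indexLabel_of_ne_zero (m := m) (γ := γ) (by lia : (i : ℤ) ≠ 0)]
  obtain ⟨⟨i, hi, hiX⟩, j, hj, hjY⟩ := h
  obtain ⟨⟨i', hi'⟩, j', hj'⟩ := hgrid
  have unit_step := S.natAbs_next_sub (isColUnder (D.tilesFrom a))
  refine ⟨⟨i', hi', ?_⟩, j', hj', ?_⟩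
  · rw [hS.next_eq_add] at hi'
    simpa using (hi.modEq_of_add zero pos hi' unit_step).trans (hiX.add_right _)
  · rw [hS.next_eq_add, add_right_comm] at hj'
    simpa using (hj.modEq_of_add zero pos hj' ((add_comm _ _).trans unit_step)).trans
      (hjY.add_right _)

theorem not_isChain_of_not_pathValid (hN : ∀ x S, ¬ PathValid K m γ x S N) (v : A) :
    ¬ IsChain K D (D.OnGrid m fun l => indexLabel m γ l) N v := fun chain => by
  rcases N.eq_zero_or_pos with rfl | hpos
  · exact hN (fun _ _ => D.tile v) .origin fun r hr => absurd hr r.not_lt_zero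
  obtain ⟨⟨i, hi⟩, j, hj⟩ := (chain 0 hpos).2
  let a := D.point v (-i) (-j)
  let S : Snake := ⟨i, j, D.east v, D.north v⟩
  have invariant (r : ℕ) (hr : r < N) :
      D.IsAt a ((Snake.next (isColUnder (D.tilesFrom a)))^[r] S) (D.next^[r] v) ∧
        D.IndexedBy m γ ((Snake.next (isColUnder (D.tilesFrom a)))^[r] S) (D.next^[r] v) := by
    induction r with
    | zero =>
      exact ⟨⟨by simp [a, S, point_point, point_zero], rfl, rfl⟩, ⟨i, hi, rfl⟩, j, hj, rfl⟩
    | succ r ih =>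
      obtain ⟨isAt, indexed⟩ := ih (r.lt_succ_self.trans hr)
      have grid := (chain (r + 1) hr).2
      rw [Function.iterate_succ_apply'] at grid ⊢
      rw [Function.iterate_succ_apply']
      exact ⟨isAt.next (chain r (r.lt_succ_self.trans hr)).1, indexed.next isAt grid⟩
  refine hN (D.tilesFrom a) S fun r hr => ?_
  obtain ⟨isAt, ⟨i', hi', hX⟩, j', hj', hY⟩ := invariant r hr
  exact isAt.faceValidAt (chain r hr).1 (label_eq_of_modEq hi' hX) (label_eq_of_modEq hj' hY)

end Grid

section InfiniteOrder

theorem hasIndex_of_marked {L : Type*} {t s : A} {C : A → Prop} {label : A → Option L} {m : ℕ}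
    {σ : ℤ → Option L} (h : ∀ X : ℤ, Marked t s C label (σ (X % (m + 1))) (a + X • t)) (X : ℤ) :
    HasIndex t s C label m (fun l => σ l) (a + X • t) (X % (m + 1)).toNat := by
  have hX₀ := Int.emod_nonneg X (show (m : ℤ) + 1 ≠ 0 by lia)
  have hXm := Int.emod_lt_of_pos X (show (0 : ℤ) < m + 1 by lia)
  refine ⟨by lia, fun l hl => ?_⟩
  have hl_mod : (X - X % (m + 1) + l) % (m + 1) = l := by
    rw [Int.add_emod, Int.sub_emod, Int.emod_emod, sub_self, Int.zero_emod, zero_add,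
      Int.emod_emod, Int.emod_eq_of_lt (by lia) (by lia)]
  have marked := h (X - X % (m + 1) + l)
  rw [hl_mod] at marked
  convert marked using 1
  rw [← natCast_zsmul, Int.toNat_of_nonneg hX₀, add_smul, sub_smul, natCast_zsmul]
  abel

/-- The positions `D.point 0 X Y` are distinct, and the data there are the tiling `x`, the index
labels of its blocks, and the headings of aligned snakes. -/
structure Represents (D : TileField A G) (m : ℕ) (γ : ℤ → G) (x : ℤ → ℤ → Tile G) : Prop where
  eq_zero : ∀ X Y, D.point 0 X Y = 0 → X = 0 ∧ Y = 0
  coded : ∀ X Y, D.coded (D.point 0 X Y)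
  tile : ∀ X Y, D.tile (D.point 0 X Y) = x X Y
  colLabel : ∀ X Y, D.colLabel (D.point 0 X Y) = indexLabel m γ (X % (m + 1))
  rowLabel : ∀ X Y, D.rowLabel (D.point 0 X Y) = indexLabel m γ (Y % (m + 1))
  east : ∀ X Y, D.east (D.point 0 X Y) = decide (Even Y)
  north : ∀ X Y, D.north (D.point 0 X Y) = decide (Even X)

variable {m : ℕ} {γ : ℤ → G} {x : ℤ → ℤ → Tile G} {S : Snake} (repr : D.Represents m γ x)
include repr

theorem Represents.tilesFrom_zero : D.tilesFrom 0 = x := funext₂ repr.tile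

theorem Represents.isAt (hS : S.Aligned) : D.IsAt 0 S (D.point 0 S.X S.Y) :=
  ⟨rfl, (repr.east ..).trans hS.1.symm, (repr.north ..).trans hS.2.symm⟩

theorem Represents.next_eq_point (hS : S.Aligned) :
    D.next (D.point 0 S.X S.Y) =
      D.point 0 (S.next (isColUnder x)).X (S.next (isColUnder x)).Y := by
  rw [(repr.isAt hS).next_eq_point, repr.tilesFrom_zero]

theorem Represents.linked (hS : S.Aligned) (hface : FaceValidAt K m γ x S.X S.Y) :
    Linked K D (D.point 0 S.X S.Y) := by
  have isAt_next := repr.isAt (hS.next (isColUnder x))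
  have shift_successor := (repr.isAt hS).shift_successor
  rw [repr.tilesFrom_zero] at shift_successor
  rw [← repr.next_eq_point hS] at isAt_next
  refine ⟨repr.coded .., repr.next_eq_point hS ▸ repr.coded .., ?_, ?_, ?_⟩
  · simp only [tilesFrom_point, repr.tilesFrom_zero, repr.colLabel, repr.rowLabel, add_zero]
    exact hface
  · rw [isAt_next.east, ← shift_successor]
    rfl
  · rw [isAt_next.north, ← shift_successor]
    rfl

theorem Represents.onGrid (X Y : ℤ) :
    D.OnGrid m (fun l => indexLabel m γ l) (D.point 0 X Y) := by
  have add_right (X Y : ℤ) : D.point 0 X Y + D.right = D.point 0 (X + 1) Y := by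
    simp only [point, add_smul, one_smul]
    abel
  have add_up (X Y : ℤ) : D.point 0 X Y + D.up = D.point 0 X (Y + 1) := by
    simp only [point, add_smul, one_smul, add_assoc]
  have sub_right (X Y : ℤ) : D.point 0 X Y - D.right = D.point 0 (X - 1) Y := by
    rw [sub_eq_iff_eq_add, add_right, sub_add_cancel]
  have sub_up (X Y : ℤ) : D.point 0 X Y - D.up = D.point 0 X (Y - 1) := by
    rw [sub_eq_iff_eq_add, add_up, sub_add_cancel]
  have col (Z : ℤ) : Marked D.right D.up D.coded D.colLabel (indexLabel m γ (Z % (m + 1)))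
      (Y • D.up + Z • D.right) := by
    rw [show Y • D.up + Z • D.right = D.point 0 Z Y by rw [point, zero_add, add_comm]]
    simp only [Marked, add_right, add_up, sub_up, repr.coded, repr.colLabel, and_self]
  have row (Z : ℤ) : Marked D.up D.right D.coded D.rowLabel (indexLabel m γ (Z % (m + 1)))
      (X • D.right + Z • D.up) := by
    rw [show X • D.right + Z • D.up = D.point 0 X Z by rw [point, zero_add]]
    simp only [Marked, add_right, add_up, sub_right, repr.coded, repr.rowLabel, and_self]
  rw [point, zero_add]
  exact ⟨⟨_, add_comm (X • D.right) _ ▸ hasIndex_of_marked col X⟩, _, hasIndex_of_marked row Y⟩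

variable {slot : Fin 5 → A} {N : ℕ} (separated : SlotsSeparated slot D.coded D.coded)
  (valid : PathValid K m γ x .origin N)
include separated valid

theorem Represents.dynamics_pow_apply {r : ℕ} (hr : r ≤ N) :
    ((Snake.next (isColUnder x))^[r] .origin).Aligned ∧
    (dynamics K D slot (D.OnGrid m fun l => indexLabel m γ l) ^ r) (slot 0) =
      D.point 0 ((Snake.next (isColUnder x))^[r] .origin).X
        ((Snake.next (isColUnder x))^[r] .origin).Y + slot 0 := by
  induction r with
  | zero => exact ⟨⟨rfl, rfl⟩, by simp [Snake.origin, point_zero]⟩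
  | succ r ih =>
    obtain ⟨aligned, ih⟩ := ih (r.le_succ.trans hr)
    have linked := repr.linked aligned (valid r hr)
    rw [Function.iterate_succ_apply', pow_succ', Equiv.Perm.mul_apply, ih,
      dynamics_forward separated (fun _ => OnGrid.coded) linked
        (repr.next_eq_point aligned ▸ repr.onGrid ..), repr.next_eq_point aligned]
    exact ⟨aligned.next _, rfl⟩

theorem Represents.dynamics_pow_ne_one {r : ℕ} (hr : r ≤ N)
    (no_return : ¬ (((Snake.next (isColUnder x))^[r] .origin).X = 0 ∧
      ((Snake.next (isColUnder x))^[r] .origin).Y = 0)) :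
    dynamics K D slot (D.OnGrid m fun l => indexLabel m γ l) ^ r ≠ 1 := fun h => by
  have moved := (repr.dynamics_pow_apply separated valid hr).2
  rw [h, Equiv.Perm.one_apply, right_eq_add] at moved
  exact no_return (repr.eq_zero _ _ moved)

end InfiniteOrder

end TileField

/-! ### The generators and the words for the dynamics -/

/-- Names for the generators of the group: the two translations of the tiling, the permutations
controlled by the label of a column or of a row, the conjugator, and the link permutation. -/
inductive Generator
  | right | up
  | column (l : Fin 4) | row (l : Fin 4)
  | conjugator | link

theorem Generator.finite : Finite Generator := by
  refine Set.finite_univ_iff.1 ((Set.toFinite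
    ({right, up, conjugator, link} ∪ Set.range column ∪ Set.range row)).subset fun g _ => ?_)
  cases g <;> simp

section Words

variable {α : Type*} (ι : Generator → α)

/-- The word for the permutation controlled by having an index in a line in direction `t`. -/
def generatorLineWord (t : Generator) (mark : Fin 4 → Generator) (k : ℕ) : SignedWord α :=
  lineWord [(ι t, true)] [(ι (mark 0), true)] [(ι (mark 1), true)] [(ι (mark 2), true)]
    [(ι (mark 3), true)] k

/-- The word for `TileField.dynamics` on blocks of side `2 * k + 3`, whose letters are the images
of generators under `ι`. -/
def dynamicsWord (k : ℕ) : SignedWord α :=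
  commutatorWord (generatorLineWord ι .right .column k)
    (conjWord [(ι .conjugator, true)] (generatorLineWord ι .up .row k)) ++ [(ι .link, true)]

variable [Primcodable α] {β : Type*} [Primcodable β] {f g : β → SignedWord α}

theorem primrec_invRev : Primrec (FreeGroup.invRev : SignedWord α → SignedWord α) :=
  Primrec.list_reverse.comp <| Primrec.list_map Primrec.id <|
    (Primrec.pair (Primrec.fst.comp Primrec.snd)
      (Primrec.not.comp (Primrec.snd.comp Primrec.snd))).to₂

theorem primrec_conjWord (hf : Primrec f) (hg : Primrec g) :
    Primrec fun b => conjWord (f b) (g b) :=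
  Primrec.list_append.comp (Primrec.list_append.comp hf hg) (primrec_invRev.comp hf)

theorem primrec_commutatorWord (hf : Primrec f) (hg : Primrec g) :
    Primrec fun b => commutatorWord (f b) (g b) :=
  Primrec.list_append.comp (Primrec.list_append.comp (Primrec.list_append.comp hf hg)
    (primrec_invRev.comp hf)) (primrec_invRev.comp hg)

theorem primrec_prependWord (t a : SignedWord α) (hf : Primrec f) :
    Primrec fun b => prependWord t a (f b) :=
  primrec_commutatorWord (Primrec.const a) (primrec_conjWord (Primrec.const _) hf)

theorem primrec_windowWord (t a b c z : SignedWord α) :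
    Primrec fun k => windowWord t a b c z k :=
  primrec_prependWord t a <| primrec_prependWord t b <|
    Primrec.nat_iterate (Primrec.nat_mul.comp (Primrec.const 2) Primrec.id) (Primrec.const z)
      (primrec_prependWord t c Primrec.snd).to₂

theorem primrec_lineWord (t a b c z : SignedWord α) : Primrec fun k => lineWord t a b c z k :=
  Primrec.nat_iterate
    (Primrec.nat_add.comp (Primrec.nat_mul.comp (Primrec.const 2) Primrec.id) (Primrec.const 3))
    (Primrec.const []) <|
    (Primrec.list_append.comp ((primrec_windowWord t a b c z).comp Primrec.fst)
      (primrec_conjWord (Primrec.const t) Primrec.snd)).to₂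

theorem primrec_dynamicsWord : Primrec (dynamicsWord ι) :=
  Primrec.list_append.comp
    (primrec_commutatorWord (primrec_lineWord ..)
      (primrec_conjWord (Primrec.const _) (primrec_lineWord ..)))
    (Primrec.const _)

end Words

section Values

variable {A G : Type*} [AddCommGroup A] (K : CellularAutomaton G) (a b : G)

/-- The index labels that occur in a block whose configuration is a `wordConfiguration`. -/
def markLabel : Fin 4 → Option (Label G) :=
  ![none, some (a, false), some (b, false), some (K.blank, true)]

/-- The permutation with which a generator marks the label `l`. Only the last label of a
`lineWord` is marked with the 3-cycle. -/
def markPerm (l : Fin 4) : Equiv.Perm (Fin 5) := if l = 3 then threeCycle else firstSwap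

/-- The permutations of the positions denoted by the generators. -/
noncomputable def generatorPerm (D : TileField A G) (slot : Fin 5 → A) :
    Generator → Equiv.Perm A
  | .right => Equiv.addRight D.right
  | .up => Equiv.addRight D.up
  | .column l => controlledPerm slot
      (Marked D.right D.up D.coded D.colLabel (markLabel K a b l)) (markPerm l)
  | .row l => controlledPerm slot
      (Marked D.up D.right D.coded D.rowLabel (markLabel K a b l)) (markPerm l)
  | .conjugator => controlledPerm slot D.coded conjugator
  | .link => D.linkPerm K slot

/-- The index labels of the blocks of side `2 * k + 3` that simulate `wordConfiguration`. -/
def wordLabel (k l : ℕ) : Option (Label G) :=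
  indexLabel (2 * k + 2 : ℕ) (wordConfiguration K.blank a b (2 * k)) l

theorem wordLabel_zero (k : ℕ) : wordLabel K a b k 0 = markLabel K a b 0 := indexLabel_zero

theorem wordLabel_one (k : ℕ) : wordLabel K a b k 1 = markLabel K a b 1 := by
  rw [wordLabel, indexLabel_of_ne_zero (by simp), decide_eq_false (by lia)]
  rfl

theorem wordLabel_of_lt {k l : ℕ} (h₂ : 2 ≤ l) (h : l < 2 * k + 2) :
    wordLabel K a b k l = markLabel K a b 2 := by
  rw [wordLabel, indexLabel_of_ne_zero (by lia), decide_eq_false (by lia), wordConfiguration,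
    if_neg (by lia), if_pos (by lia)]
  rfl

theorem wordLabel_last (k : ℕ) : wordLabel K a b k (2 * k + 2) = markLabel K a b 3 := by
  rw [wordLabel, indexLabel_of_ne_zero (by lia), decide_eq_true rfl, wordConfiguration,
    if_neg (by lia), if_neg (by lia)]
  rfl

variable {K a b} {α : Type*} {ι : Generator → α} {π : α → Equiv.Perm A} {D : TileField A G}
  {slot : Fin 5 → A} (hπ : ∀ g, π (ι g) = generatorPerm K a b D slot g)
  (separated : SlotsSeparated slot D.coded D.coded)
include hπ separated

theorem wordValue_generatorLineWord {t s : A} {label : A → Option (Label G)}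
    {step : Generator} {mark : Fin 4 → Generator}
    (hstep : generatorPerm K a b D slot step = Equiv.addRight t)
    (hmark : ∀ l, generatorPerm K a b D slot (mark l) =
      controlledPerm slot (Marked t s D.coded label (markLabel K a b l)) (markPerm l)) (k : ℕ) :
    wordValue π (generatorLineWord ι step mark k) = controlledPerm slot
      (fun v => ∃ i, HasIndex t s D.coded label (2 * k + 2) (wordLabel K a b k) v i)
      threeCycle := by
  have value (g : Generator) : wordValue π [(ι g, true)] = generatorPerm K a b D slot g := by
    rw [wordValue_single, hπ]
  refine wordValue_lineWord separated (by rw [value, hstep]) ?_ ?_ (fun i h₂ hi => ?_) ?_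
    (wordLabel_zero K a b k) fun i hi _ => ?_
  · rw [value, hmark, wordLabel_zero]
    rfl
  · rw [value, hmark, wordLabel_one]
    rfl
  · rw [value, hmark, wordLabel_of_lt K a b h₂ hi]
    rfl
  · rw [value, hmark, wordLabel_last]
    rfl
  · rw [wordLabel, indexLabel_of_ne_zero (by lia)]
    exact Option.some_ne_none _

theorem wordValue_dynamicsWord (k : ℕ) :
    wordValue π (dynamicsWord ι k) =
      D.dynamics K slot (D.OnGrid (2 * k + 2) (wordLabel K a b k)) := by
  have column := wordValue_generatorLineWord hπ separated (label := D.colLabel) (step := .right)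
    (mark := .column) rfl (fun _ => rfl) k
  have row := wordValue_generatorLineWord hπ separated (label := D.rowLabel) (step := .up)
    (mark := .row) rfl (fun _ => rfl) k
  have coded {t s : A} {label : A → Option (Label G)} (v : A) :
      (∃ i, HasIndex t s D.coded label (2 * k + 2) (wordLabel K a b k) v i) → D.coded v :=
    fun ⟨_, h⟩ => h.coded
  rw [dynamicsWord, wordValue_append, wordValue_commutatorWord, wordValue_conjWord, column, row,
    wordValue_single, wordValue_single, hπ, hπ, generatorPerm, generatorPerm,
    controlledPerm_conj separated coded, controlledPerm_commutator (separated.mono coded coded)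
    (separated.mono coded coded) (separated.mono coded coded), commutator_threeCycle_conj]
  rfl

end Values

/-! ### Permutations that depend locally on the tape -/

section LocallyConstant

open Topology

variable {T B C : Type*} [TopologicalSpace T]

theorem isLocallyConstant_bind {f : T → B → C} {g : T → B}
    (hf : ∀ b, IsLocallyConstant fun z => f z b) (hg : IsLocallyConstant g) :
    IsLocallyConstant fun z => f z (g z) := by
  refine (IsLocallyConstant.iff_eventually_eq _).2 fun z => ?_
  filter_upwards [hg.eventually_eq z, (hf (g z)).eventually_eq z] with y hy hfy
  rw [hy, hfy]

theorem isLocallyConstant_and {p q : T → Prop} (hp : IsLocallyConstant p)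
    (hq : IsLocallyConstant q) : IsLocallyConstant fun z => p z ∧ q z := hp.comp₂ hq And

theorem isLocallyConstant_eq {f g : T → B} (hf : IsLocallyConstant f)
    (hg : IsLocallyConstant g) : IsLocallyConstant fun z => f z = g z := hf.comp₂ hg Eq

theorem isLocallyConstant_ite {p : T → Prop} {_ : ∀ z, Decidable (p z)}
    {f g : T → B} (hp : IsLocallyConstant p) (hf : IsLocallyConstant f)
    (hg : IsLocallyConstant g) : IsLocallyConstant fun z => if p z then f z else g z := by
  refine (IsLocallyConstant.iff_eventually_eq _).2 fun z => ?_
  filter_upwards [hp.eventually_eq z, hf.eventually_eq z, hg.eventually_eq z] with y hy hfy hgy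
  simp only [hy, hfy, hgy]

theorem isLocallyConstant_pi {I : Type*} [Finite I] {f : T → I → B}
    (hf : ∀ i, IsLocallyConstant fun z => f z i) : IsLocallyConstant f := by
  refine (IsLocallyConstant.iff_eventually_eq _).2 fun z => ?_
  filter_upwards [Filter.eventually_all.2 fun i => (hf i).eventually_eq z] with y hy
  exact funext hy

theorem exists_finset_dependsOn_of_isLocallyConstant {A S : Type*} [TopologicalSpace S]
    [CompactSpace S] [DiscreteTopology S] {f : (A → S) → B} (hf : IsLocallyConstant f) :
    ∃ F : Finset A, DependsOn f F := by
  classical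
  have window (z : A → S) : ∃ F : Finset A, ∀ y, (∀ v ∈ F, y v = z v) → f y = f z := by
    obtain ⟨F, u, hu, hF⟩ := isOpen_pi_iff.1 (hf.isOpen_fiber (f z)) z rfl
    exact ⟨F, fun y hy => hF fun v hv => (hy v hv).symm ▸ (hu v hv).2⟩
  choose F hF using window
  obtain ⟨t, -, cover⟩ := isCompact_univ.elim_nhds_subcover
    (fun z => (F z : Set A).pi fun v => {z v})
    fun z _ => set_pi_mem_nhds (F z).finite_toSet fun v _ => by simp
  refine ⟨t.biUnion F, fun y y' hy => ?_⟩
  obtain ⟨z, hz, hyz⟩ := Set.mem_iUnion₂.1 (cover (Set.mem_univ y))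
  have hyz (v) (hv : v ∈ F z) : y v = z v := hyz v hv
  rw [hF z y hyz, hF z y' fun v hv => hyz v hv ▸ (hy v (Finset.mem_biUnion.2 ⟨z, hz, hv⟩)).symm]

theorem isLocallyConstant_controlledFun {A ι : Type*} [AddCommGroup A] [Finite ι] {slot : ι → A}
    {P : T → A → Prop} (hP : ∀ v, IsLocallyConstant fun z => P z v) (q : Equiv.Perm ι) (w : A) :
    IsLocallyConstant fun z => controlledFun slot (P z) q w := by
  classical
  exact (isLocallyConstant_pi fun o => hP (w - slot o)).comp fun p : ι → Prop =>
    if h : ∃ o, p o then w - slot h.choose + slot (q h.choose) else w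

namespace TileField

/-- The tile field `D z` depends locally on the tape `z`: so does each datum at each position. -/
structure DependsLocally {A G : Type*} (D : T → TileField A G) : Prop where
  right : IsLocallyConstant fun z => (D z).right
  up : IsLocallyConstant fun z => (D z).up
  coded : ∀ v, IsLocallyConstant fun z => (D z).coded v
  tile : ∀ v, IsLocallyConstant fun z => (D z).tile v
  colLabel : ∀ v, IsLocallyConstant fun z => (D z).colLabel v
  rowLabel : ∀ v, IsLocallyConstant fun z => (D z).rowLabel v
  east : ∀ v, IsLocallyConstant fun z => (D z).east v
  north : ∀ v, IsLocallyConstant fun z => (D z).north v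

namespace DependsLocally

variable {A G : Type*} [AddCommGroup A] {K : CellularAutomaton G} {D : T → TileField A G}
  {slot : Fin 5 → A} (hD : DependsLocally D)
include hD

theorem point {X Y : T → ℤ} (hX : IsLocallyConstant X) (hY : IsLocallyConstant Y) (v : A) :
    IsLocallyConstant fun z => (D z).point v (X z) (Y z) :=
  ((hX.prodMk hY).prodMk (hD.right.prodMk hD.up)).comp fun x =>
    v + x.1.1 • x.2.1 + x.1.2 • x.2.2

theorem tilesFrom (v : A) (X Y : ℤ) : IsLocallyConstant fun z => (D z).tilesFrom v X Y :=
  isLocallyConstant_bind (f := fun z => (D z).tile) hD.tile (hD.point (.const X) (.const Y) v)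

theorem stepFrom {b c : T → Bool} (hb : IsLocallyConstant b) (hc : IsLocallyConstant c) (v : A) :
    IsLocallyConstant fun z => (D z).stepFrom v (b z) (c z) := by
  have constant (b c : Bool) : IsLocallyConstant fun z => (D z).stepFrom v b c :=
    isLocallyConstant_ite ((hD.tilesFrom v _ _).comp fun t => t.kind = .colUnder) (.const _)
      (.const _)
  exact isLocallyConstant_bind (f := fun z c => (D z).stepFrom v (b z) c)
    (fun c => isLocallyConstant_bind (f := fun z b => (D z).stepFrom v b c) (constant · c) hb) hc

theorem successor (v : A) : IsLocallyConstant fun z => (D z).successor v :=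
  hD.stepFrom (hD.east v) (hD.north v) v

theorem predecessor (v : A) : IsLocallyConstant fun z => (D z).predecessor v :=
  hD.stepFrom ((hD.east v).comp (!·)) ((hD.north v).comp (!·)) v

theorem next (v : A) : IsLocallyConstant fun z => (D z).next v :=
  hD.point ((hD.successor v).comp Snake.X) ((hD.successor v).comp Snake.Y) v

theorem prev (v : A) : IsLocallyConstant fun z => (D z).prev v :=
  hD.point ((hD.predecessor v).comp Snake.X) ((hD.predecessor v).comp Snake.Y) v

theorem faceValid (v : A) : IsLocallyConstant fun z =>
    FaceValid K ((D z).tilesFrom v 0 0) ((D z).tilesFrom v 1 0) ((D z).tilesFrom v 0 1)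
      ((D z).tilesFrom v 1 1) ((D z).colLabel v) ((D z).rowLabel v) :=
  (((hD.tilesFrom v 0 0).prodMk ((hD.tilesFrom v 1 0).prodMk ((hD.tilesFrom v 0 1).prodMk
    (hD.tilesFrom v 1 1)))).prodMk ((hD.colLabel v).prodMk (hD.rowLabel v))).comp
    fun x => FaceValid K x.1.1 x.1.2.1 x.1.2.2.1 x.1.2.2.2 x.2.1 x.2.2

theorem linked (v : A) : IsLocallyConstant fun z => Linked K (D z) v := by
  have linked_iff (z) : Linked K (D z) v ↔ (D z).coded v ∧ (D z).coded ((D z).next v) ∧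
      FaceValid K ((D z).tilesFrom v 0 0) ((D z).tilesFrom v 1 0) ((D z).tilesFrom v 0 1)
        ((D z).tilesFrom v 1 1) ((D z).colLabel v) ((D z).rowLabel v) ∧
      (D z).east ((D z).next v) = ((D z).successor v).east ∧
      (D z).north ((D z).next v) = ((D z).successor v).north :=
    ⟨fun h => ⟨h.1, h.2, h.3, h.4, h.5⟩, fun ⟨h₁, h₂, h₃, h₄, h₅⟩ => ⟨h₁, h₂, h₃, h₄, h₅⟩⟩
  simp only [linked_iff]
  refine isLocallyConstant_and (hD.coded v) <| isLocallyConstant_and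
    (isLocallyConstant_bind (f := fun z => (D z).coded) hD.coded (hD.next v)) <|
    isLocallyConstant_and (hD.faceValid v) <| isLocallyConstant_and ?_ ?_
  · exact isLocallyConstant_eq
      (isLocallyConstant_bind (f := fun z => (D z).east) hD.east (hD.next v))
      ((hD.successor v).comp Snake.east)
  · exact isLocallyConstant_eq
      (isLocallyConstant_bind (f := fun z => (D z).north) hD.north (hD.next v))
      ((hD.successor v).comp Snake.north)

theorem linkFun (w : A) : IsLocallyConstant fun z => (D z).linkFun K slot w := by
  have linked_prev : IsLocallyConstant fun z => Linked K (D z) ((D z).prev (w - slot 1)) :=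
    isLocallyConstant_bind (f := fun z => Linked K (D z)) hD.linked (hD.prev _)
  have next_prev : IsLocallyConstant fun z => (D z).next ((D z).prev (w - slot 1)) :=
    isLocallyConstant_bind (f := fun z => (D z).next) hD.next (hD.prev _)
  exact isLocallyConstant_ite (hD.linked _) ((hD.next _).comp (· + slot 1)) <|
    isLocallyConstant_ite
      (isLocallyConstant_and linked_prev (isLocallyConstant_eq next_prev (.const _)))
      ((hD.prev _).comp (· + slot 0)) (.const _)

end DependsLocally

end TileField

end LocallyConstant

section Translate

variable {A ι G : Type*} [AddCommGroup A] {K : CellularAutomaton G}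

theorem controlledFun_translate (slot : ι → A) (P : A → Prop) (q : Equiv.Perm ι) (w v : A) :
    controlledFun slot (fun v => P (v + w)) q v + w = controlledFun slot P q (v + w) := by
  have sub_slot : (fun o => P (v + w - slot o)) = fun o => P (v - slot o + w) :=
    funext fun _ => congrArg P (add_sub_right_comm ..)
  rw [controlledFun, controlledFun, sub_slot]
  split_ifs
  · rw [add_sub_right_comm, add_right_comm]
  · rfl

namespace TileField

/-- The tile field whose data at `v` are those of `D` at `v + w`. -/
def translate (D : TileField A G) (w : A) : TileField A G where
  right := D.right
  up := D.up
  coded v := D.coded (v + w)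
  tile v := D.tile (v + w)
  colLabel v := D.colLabel (v + w)
  rowLabel v := D.rowLabel (v + w)
  east v := D.east (v + w)
  north v := D.north (v + w)

variable (D : TileField A G) (w v : A)

theorem point_translate (X Y : ℤ) : (D.translate w).point v X Y + w = D.point (v + w) X Y := by
  rw [point, point, add_right_comm, add_right_comm v]
  rfl

theorem tilesFrom_translate : (D.translate w).tilesFrom v = D.tilesFrom (v + w) :=
  funext₂ fun X Y => congrArg D.tile (point_translate D w v X Y)

theorem successor_translate : (D.translate w).successor v = D.successor (v + w) := by
  rw [successor, stepFrom, tilesFrom_translate]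
  rfl

theorem predecessor_translate : (D.translate w).predecessor v = D.predecessor (v + w) := by
  rw [predecessor, stepFrom, tilesFrom_translate]
  rfl

theorem next_translate : (D.translate w).next v + w = D.next (v + w) := by
  rw [next, point_translate, successor_translate, next]

theorem prev_translate : (D.translate w).prev v + w = D.prev (v + w) := by
  rw [prev, point_translate, predecessor_translate, prev]

theorem linked_translate : Linked K (D.translate w) v ↔ Linked K D (v + w) := by
  constructor
  · rintro ⟨h₁, h₂, h₃, h₄, h₅⟩
    rw [tilesFrom_translate] at h₃
    rw [successor_translate] at h₄ h₅
    exact ⟨h₁, next_translate D w v ▸ h₂, h₃, next_translate D w v ▸ h₄,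
      next_translate D w v ▸ h₅⟩
  · rintro ⟨h₁, h₂, h₃, h₄, h₅⟩
    rw [← tilesFrom_translate] at h₃
    rw [← successor_translate] at h₄ h₅
    rw [← next_translate] at h₂ h₄ h₅
    exact ⟨h₁, h₂, h₃, h₄, h₅⟩

theorem linkFun_translate (slot : Fin 5 → A) :
    linkFun K (D.translate w) slot v + w = linkFun K D slot (v + w) := by
  have sub_slot (o : Fin 5) : v + w - slot o = v - slot o + w := add_sub_right_comm ..
  have forward : Linked K (D.translate w) (v - slot 0) ↔ Linked K D (v + w - slot 0) := by
    rw [linked_translate, sub_slot]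
  have backward : Linked K (D.translate w) ((D.translate w).prev (v - slot 1)) ∧
        (D.translate w).next ((D.translate w).prev (v - slot 1)) = v - slot 1 ↔
      Linked K D (D.prev (v + w - slot 1)) ∧ D.next (D.prev (v + w - slot 1)) = v + w - slot 1 := by
    rw [linked_translate, prev_translate, sub_slot, ← prev_translate, ← next_translate,
      add_left_inj]
  rw [linkFun, linkFun]
  by_cases h : Linked K D (v + w - slot 0)
  · rw [if_pos h, if_pos (forward.2 h), add_right_comm, next_translate, sub_slot]
  rw [if_neg h, if_neg (mt forward.1 h)]
  split_ifs with h₁ h₂ h₂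
  · rw [add_right_comm, prev_translate, sub_slot]
  · exact absurd (backward.1 h₁) h₂
  · exact absurd (backward.2 h₂) h₁
  · rfl

end TileField

end Translate

section Local

variable {A S G : Type*} [AddCommGroup A] [TopologicalSpace S]

/-- A family of permutations of the positions, one for each tape, that commutes with translations
and of which the image and the preimage of `0` depend locally on the tape: the motion of the head
of a reversible finite-state automaton with one state. -/
structure IsLocal (h : (A → S) → Equiv.Perm A) : Prop where
  translate : ∀ z w v, h (fun x => z (x + w)) v + w = h z (v + w)
  apply_zero : IsLocallyConstant fun z => h z 0
  inv_apply_zero : IsLocallyConstant fun z => (h z)⁻¹ 0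

theorem IsLocal.inv {h : (A → S) → Equiv.Perm A} (local_h : IsLocal h) : IsLocal h⁻¹ where
  translate z w v := by
    rw [Pi.inv_apply, Pi.inv_apply, eq_comm, Equiv.Perm.inv_eq_iff_eq, ← local_h.translate,
      ← Equiv.Perm.mul_apply, mul_inv_cancel, Equiv.Perm.one_apply]
  apply_zero := local_h.inv_apply_zero
  inv_apply_zero := by simpa only [Pi.inv_apply, inv_inv] using local_h.apply_zero

theorem isLocal_controlledPerm {slot : Fin 5 → A} {P : (A → S) → A → Prop}
    (separated : ∀ z, SlotsSeparated slot (P z) (P z))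
    (local_P : ∀ v, IsLocallyConstant fun z => P z v)
    (translate : ∀ z w, P (fun x => z (x + w)) = fun v => P z (v + w)) (q : Equiv.Perm (Fin 5)) :
    IsLocal fun z => controlledPerm slot (P z) q where
  translate z w v := by
    rw [controlledPerm_apply (separated _), controlledPerm_apply (separated _), translate,
      controlledFun_translate]
  apply_zero := by
    simpa only [controlledPerm_apply (separated _)] using
      isLocallyConstant_controlledFun local_P q 0
  inv_apply_zero := by
    simpa only [controlledPerm_inv (separated _), controlledPerm_apply (separated _)] using
      isLocallyConstant_controlledFun local_P q⁻¹ 0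

theorem isLocal_addRight {t : (A → S) → A} (local_t : IsLocallyConstant t)
    (translate : ∀ z w, t (fun x => z (x + w)) = t z) : IsLocal fun z => Equiv.addRight (t z) where
  translate z w v := by
    simp only [Equiv.coe_addRight, translate, add_right_comm]
  apply_zero := by simpa only [Equiv.coe_addRight, zero_add] using local_t
  inv_apply_zero := by
    simp only [inv_addRight, Equiv.coe_addRight, zero_add]
    exact local_t.comp Neg.neg

variable {K : CellularAutomaton G} {D : (A → S) → TileField A G} {slot : Fin 5 → A}
  (dependsLocally : TileField.DependsLocally D)
  (translate : ∀ z w, D (fun x => z (x + w)) = (D z).translate w)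
  (separated : ∀ z, SlotsSeparated slot (D z).coded (D z).coded)
include dependsLocally translate separated

theorem isLocal_linkPerm : IsLocal fun z => (D z).linkPerm K slot where
  translate z w v := by
    rw [TileField.linkPerm_apply (separated _), TileField.linkPerm_apply (separated _), translate,
      TileField.linkFun_translate]
  apply_zero := by
    simpa only [TileField.linkPerm_apply (separated _)] using dependsLocally.linkFun 0
  inv_apply_zero := by
    simpa only [inv_eq_of_mul_eq_one_right (TileField.linkPerm_mul_self (separated _)),
      TileField.linkPerm_apply (separated _)] using dependsLocally.linkFun 0

theorem isLocal_controlledPerm_marked {t s : (A → S) → A} {label : (A → S) → A → Option (Label G)}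
    (local_t : IsLocallyConstant t) (local_s : IsLocallyConstant s)
    (local_label : ∀ v, IsLocallyConstant fun z => label z v)
    (translate_t : ∀ z w, t (fun x => z (x + w)) = t z)
    (translate_s : ∀ z w, s (fun x => z (x + w)) = s z)
    (translate_label : ∀ z w, label (fun x => z (x + w)) = fun v => label z (v + w))
    (a : Option (Label G)) (q : Equiv.Perm (Fin 5)) :
    IsLocal fun z => controlledPerm slot (Marked (t z) (s z) (D z).coded (label z) a) q := by
  refine isLocal_controlledPerm
    (fun z => (separated z).mono (fun _ h => h.1) (fun _ h => h.1)) (fun v => ?_) (fun z w => ?_) q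
  · have label_eq {f : (A → S) → A} (hf : IsLocallyConstant f) :
        IsLocallyConstant fun z => label z (f z) = a :=
      (isLocallyConstant_bind local_label hf).comp (· = a)
    exact isLocallyConstant_and (dependsLocally.coded v) <| isLocallyConstant_and
      (isLocallyConstant_bind dependsLocally.coded (local_t.comp (v + ·))) <|
      isLocallyConstant_and (label_eq (.const v)) <| isLocallyConstant_and
      (label_eq (local_s.comp (v + ·))) (label_eq (local_s.comp (v - ·)))
  · funext v
    simp only [Marked, translate, translate_t, translate_s, translate_label, TileField.translate,
      add_right_comm v w, sub_add_eq_add_sub]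

theorem isLocal_generatorPerm (a b : G) :
    ∀ g : Generator, IsLocal fun z => generatorPerm K a b (D z) slot g
  | .right => isLocal_addRight dependsLocally.right fun z w => by rw [translate]; rfl
  | .up => isLocal_addRight dependsLocally.up fun z w => by rw [translate]; rfl
  | .column _ => isLocal_controlledPerm_marked dependsLocally translate separated
      dependsLocally.right dependsLocally.up dependsLocally.colLabel
      (fun z w => by rw [translate]; rfl) (fun z w => by rw [translate]; rfl)
      (fun z w => by rw [translate]; rfl) _ _
  | .row _ => isLocal_controlledPerm_marked dependsLocally translate separated
      dependsLocally.up dependsLocally.right dependsLocally.rowLabel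
      (fun z w => by rw [translate]; rfl) (fun z w => by rw [translate]; rfl)
      (fun z w => by rw [translate]; rfl) _ _
  | .conjugator => isLocal_controlledPerm separated dependsLocally.coded
      (fun z w => by rw [translate]; rfl) _
  | .link => isLocal_linkPerm dependsLocally translate separated

end Local

/-! ### Reversible finite-state automata -/

section TapeControlled

variable {d n k : ℕ}

/-- The map underlying `tapeControlledHom`. -/
def tapeControlledFun (h : (V d → Fin n) → Equiv.Perm (V d)) (c : X d n k) : X d n k :=
  ⟨(c.val.1, fun v => c.val.2 ((h c.val.1)⁻¹ v)),
    fun _ _ hu hv => (h c.val.1)⁻¹.injective (c.property _ _ hu hv)⟩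

/-- A family of permutations of `ℤ^d`, one for each tape, acts on `X_{n,k}` by moving the head and
preserving the tape and the state. -/
def tapeControlledHom : ((V d → Fin n) → Equiv.Perm (V d)) →* Equiv.Perm (X d n k) where
  toFun h := ⟨tapeControlledFun h, tapeControlledFun h⁻¹,
    fun _ => by simp [tapeControlledFun], fun _ => by simp [tapeControlledFun]⟩
  map_one' := rfl
  map_mul' h h' := Equiv.ext fun _ => by simp [tapeControlledFun]

theorem headAt_ok (v : V d) (q : Fin k) : headOk fun u => if u = v then some q else none := by
  intro u w hu hw
  by_cases hu' : u = v <;> by_cases hw' : w = v <;> simp_all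

theorem tapeControlledHom_injective (hk : 1 ≤ k) :
    Function.Injective (tapeControlledHom : _ →* Equiv.Perm (X d n k)) := by
  refine (injective_iff_map_eq_one _).2 fun h hh => funext fun z => Equiv.ext fun v => ?_
  let c : X d n k := ⟨(z, fun u => if u = v then some ⟨0, hk⟩ else none), headAt_ok v _⟩
  have head : c.val.2 ((h z)⁻¹ v) = c.val.2 v :=
    congrArg (fun π : Equiv.Perm (X d n k) => (π c).val.2 v) hh
  have fixed : (h z)⁻¹ v = v := by simpa [c] using head
  exact (Equiv.Perm.inv_eq_iff_eq.1 fixed).symm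

theorem isTM_tapeControlledFun {h : (V d → Fin n) → Equiv.Perm (V d)}
    (local_h : IsLocal h) : IsTM (tapeControlledFun h : X d n k → X d n k) := by
  obtain ⟨F, hF⟩ := exists_finset_dependsOn_of_isLocallyConstant local_h.apply_zero
  refine ⟨F, ∅, fun x q => (x, q, h x 0), fun x x' q hx => ⟨by simp, ?_⟩, fun c hc => ?_,
    fun c v q hv => ⟨fun _ => by simp [tapeControlledFun], fun t => ?_⟩⟩
  · exact congrArg (Prod.mk q) (hF hx)
  · exact Subtype.ext (Prod.ext rfl (funext fun _ => (hc _).trans (hc _).symm))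
  · have moved : v + h (fun u => c.val.1 (u + v)) 0 = h c.val.1 v := by
      rw [add_comm, local_h.translate, zero_add]
    change c.val.2 ((h c.val.1)⁻¹ t) = _
    rw [moved]
    split_ifs with ht
    · rw [ht, ← Equiv.Perm.mul_apply, inv_mul_cancel, Equiv.Perm.one_apply, hv]
    · refine Option.not_isSome_iff_eq_none.1 fun some_t => ht ?_
      exact Equiv.Perm.inv_eq_iff_eq.1 (c.property _ _ some_t (by rw [hv]; rfl))

theorem tapeControlledHom_mem_RFAset {h : (V d → Fin n) → Equiv.Perm (V d)} (local_h : IsLocal h) :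
    tapeControlledHom h ∈ RFAset d n k :=
  ⟨⟨isTM_tapeControlledFun local_h, isTM_tapeControlledFun local_h.inv⟩, fun _ => rfl⟩

theorem evalWord_eq_wordValue {m : ℕ} (π : Fin m → Equiv.Perm (X d n k))
    (w : SignedWord (Fin m)) : evalWord π w = wordValue π w := by
  rw [wordValue, FreeGroup.lift_mk, evalWord]
  simp only [Bool.cond_eq_ite]

end TapeControlled

/-! ### Tile fields encoded by tapes -/

section Codes

theorem Letter.finite : Finite Letter :=
  Set.finite_univ_iff.1 <| (Set.toFinite {.zero, .one, .below, .pivot, .above}).subset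
    fun l _ => by cases l <;> simp

theorem TileKind.finite : Finite TileKind :=
  Set.finite_univ_iff.1 <| (Set.toFinite {.plain, .rowUnder, .colUnder}).subset
    fun l _ => by cases l <;> simp

variable {G : Type*}

theorem Line.finite [Finite G] : Finite (Line G) := by
  have := Letter.finite
  refine Finite.of_injective (fun l : Line G => ((l.label, l.indexAlong, l.letterAlong),
    l.indexAcross, l.letterAcross, l.phaseBefore, l.phaseAfter)) fun l l' h => ?_
  cases l; cases l'
  simpa [and_assoc] using h

theorem Colour.finite [Finite G] : Finite (Colour G) := by
  have := Letter.finite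
  have := Line.finite (G := G)
  refine Finite.of_injective (fun c : Colour G =>
    (c.toLine, c.atStart, c.atEnd, c.phase, c.pastDiagonal, c.scan)) fun c c' h => ?_
  cases c; cases c'
  simpa using h

theorem Tile.finite [Finite G] : Finite (Tile G) := by
  have := TileKind.finite
  have := Colour.finite (G := G)
  refine Finite.of_injective (fun t : Tile G => (t.west, t.east, t.south, t.north, t.kind))
    fun t t' h => ?_
  cases t; cases t'
  simpa using h

theorem Tile.nonempty [h : Nonempty G] : Nonempty (Tile G) :=
  let ⟨g⟩ := h
  let line : Line G := ⟨(g, true), none, .zero, none, .zero, 0, 0⟩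
  let colour : Colour G := ⟨line, true, true, 0, true, none⟩
  ⟨⟨colour, colour, colour, colour, .plain⟩⟩

theorem exists_bit_code (β : Type*) [Finite β] [Nonempty β] :
    ∃ (B : ℕ) (encode : β → Fin B → Bool) (decode : (Fin B → Bool) → β),
      Function.LeftInverse decode encode := by
  obtain ⟨B, ⟨e⟩⟩ := Finite.exists_equiv_fin β
  refine ⟨B, fun x i => decide (e x = i), Function.invFun _,
    Function.leftInverse_invFun fun x y h => e.injective ?_⟩
  simpa using congrFun h (e y)

end Codes

section Encoding

variable {A S G : Type*} [AddCommGroup A]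

/-- The data that a tape encodes at a position: the tile, the labels of its column and of its row,
and whether the headings are east and north. -/
abbrev SiteData (G : Type*) : Type _ :=
  Tile G × Option (Label G) × Option (Label G) × Bool × Bool

/-- The bits that mark a position carrying a code. They occupy the slots of the position, and no
two of them can overlap. -/
def marker : Fin 5 → Bool := ![true, false, false, false, false]

/-- The slots of a position are the first five positions in direction `a`. -/
def slotsAlong (a : A) (o : Fin 5) : A := o.val • a

variable {B : ℕ} (bit : S → Bool) (decode : (Fin B → Bool) → SiteData G) (a u : A) (z : A → S)
  (v : A)

/-- The position `v` of the tape is the start of a code in direction `a`. -/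
def IsCodeStart : Prop := ∀ j, bit (z (v + slotsAlong a j)) = marker j

/-- The data encoded by the bits that follow the marker at `v`. -/
def siteData : SiteData G := decode fun i => bit (z (v + (5 + i.val) • a))

/-- The tile field encoded by a tape whose codes are written in direction `a`. -/
def encodedField : TileField A G where
  right := (5 + B) • a
  up := u
  coded := IsCodeStart bit a z
  tile v := (siteData bit decode a z v).1
  colLabel v := (siteData bit decode a z v).2.1
  rowLabel v := (siteData bit decode a z v).2.2.1
  east v := (siteData bit decode a z v).2.2.2.1
  north v := (siteData bit decode a z v).2.2.2.2

theorem isCodeStart_translate (w : A) :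
    IsCodeStart bit a (fun x => z (x + w)) = fun v => IsCodeStart bit a z (v + w) := by
  funext v
  simp only [IsCodeStart, add_right_comm v w]

theorem siteData_translate (w : A) :
    siteData bit decode a (fun x => z (x + w)) v = siteData bit decode a z (v + w) := by
  simp only [siteData, add_right_comm v w]

theorem encodedField_translate (w : A) :
    encodedField bit decode a u (fun x => z (x + w)) =
      (encodedField bit decode a u z).translate w := by
  simp only [encodedField, TileField.translate, isCodeStart_translate, siteData_translate]

theorem dependsLocally_encodedField [TopologicalSpace S] [DiscreteTopology S] :
    TileField.DependsLocally (encodedField bit decode a u) := by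
  have local_bit (v : A) : IsLocallyConstant fun z : A → S => bit (z v) :=
    ((IsLocallyConstant.of_discrete bit).comp_continuous (continuous_apply v))
  have local_data (v : A) : IsLocallyConstant fun z => siteData bit decode a z v :=
    (isLocallyConstant_pi fun _ => local_bit _).comp decode
  exact {
    right := .const _
    up := .const _
    coded v := (isLocallyConstant_pi fun _ => local_bit _).comp fun b => ∀ j, b j = marker j
    tile v := (local_data v).comp fun x => x.1
    colLabel v := (local_data v).comp fun x => x.2.1
    rowLabel v := (local_data v).comp fun x => x.2.2.1
    east v := (local_data v).comp fun x => x.2.2.2.1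
    north v := (local_data v).comp fun x => x.2.2.2.2 }

variable {bit a z}

theorem IsCodeStart.not_of_lt {v w : A} {o p : Fin 5} (hv : IsCodeStart bit a z v)
    (h : v + slotsAlong a o = w + slotsAlong a p) (hlt : o < p) : ¬ IsCodeStart bit a z w := by
  intro hw
  let j : Fin 5 := p - o
  have sub_val : j.val = p - o := Fin.sub_val_of_le hlt.le
  have v_eq : v = w + slotsAlong a j := by
    rw [slotsAlong, sub_val, sub_nsmul _ hlt.le, ← add_assoc, ← sub_eq_add_neg]
    exact eq_sub_of_add_eq h
  have marker_zero := hv 0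
  rw [slotsAlong, Fin.val_zero, zero_nsmul, add_zero, v_eq, hw j] at marker_zero
  have marker_inj : ∀ j, marker j = marker 0 → j = 0 := by decide
  have := congrArg Fin.val (marker_inj j marker_zero)
  lia

theorem slotsSeparated_isCodeStart :
    SlotsSeparated (slotsAlong a) (IsCodeStart bit a z) (IsCodeStart bit a z) := by
  intro v w o p hv hw h
  rcases lt_trichotomy o p with hlt | rfl | hlt
  · exact absurd hw (hv.not_of_lt h hlt)
  · exact ⟨add_right_cancel h, rfl⟩
  · exact absurd hv (hw.not_of_lt h.symm hlt)

variable {decode u} {φ ψ : A →+ ℤ}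

theorem exists_tape_of_words (bit_surjective : Function.Surjective bit) (hφa : φ a = 1)
    (hφu : φ u = 0) (hψa : ψ a = 0) (hψu : ψ u = 1) {L : ℕ} [NeZero L]
    (word : ℤ → ℤ → Fin L → Bool) :
    ∃ z : A → S, ∀ X Y (j : Fin L), bit (z (X • L • a + Y • u + j.val • a)) = word X Y j := by
  refine ⟨fun v => Function.surjInv bit_surjective <|
    word (Int.divModEquiv L (φ v)).1 (ψ v) (Int.divModEquiv L (φ v)).2, fun X Y j => ?_⟩
  have φ_eq : φ (X • L • a + Y • u + j.val • a) = (Int.divModEquiv L).symm (X, j) := by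
    simp [hφa, hφu]
  have ψ_eq : ψ (X • L • a + Y • u + j.val • a) = Y := by simp [hψa, hψu]
  rw [Function.surjInv_eq bit_surjective, φ_eq, ψ_eq, Equiv.apply_symm_apply]

theorem exists_represents {encode : SiteData G → Fin B → Bool}
    (decode_encode : Function.LeftInverse decode encode) (bit_surjective : Function.Surjective bit)
    (hφa : φ a = 1) (hφu : φ u = 0) (hψa : ψ a = 0) (hψu : ψ u = 1) (m : ℕ) (γ : ℤ → G)
    (x : ℤ → ℤ → Tile G) : ∃ z, (encodedField bit decode a u z).Represents m γ x := by
  let data (X Y : ℤ) : SiteData G := (x X Y, indexLabel m γ (X % (m + 1)),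
    indexLabel m γ (Y % (m + 1)), decide (Even Y), decide (Even X))
  obtain ⟨z, hz⟩ := exists_tape_of_words bit_surjective hφa hφu hψa hψu
    fun X Y => Fin.append marker (encode (data X Y))
  have point_zero (X Y : ℤ) :
      (encodedField bit decode a u z).point 0 X Y = X • (5 + B) • a + Y • u := by
    rw [TileField.point, zero_add]
    rfl
  have data_eq (X Y : ℤ) :
      siteData bit decode a z ((encodedField bit decode a u z).point 0 X Y) = data X Y := by
    rw [siteData, point_zero, ← decode_encode (data X Y)]
    refine congrArg decode (funext fun i => ?_)
    exact (hz X Y (Fin.natAdd 5 i)).trans (Fin.append_right ..)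
  refine ⟨z, fun X Y h => ?_, fun X Y j => ?_, fun X Y => congrArg (·.1) (data_eq X Y),
    fun X Y => congrArg (·.2.1) (data_eq X Y), fun X Y => congrArg (·.2.2.1) (data_eq X Y),
    fun X Y => congrArg (·.2.2.2.1) (data_eq X Y), fun X Y => congrArg (·.2.2.2.2) (data_eq X Y)⟩
  · rw [point_zero] at h
    have hX := congrArg φ h
    have hY := congrArg ψ h
    have period_ne_zero : (5 + B : ℤ) ≠ 0 := by lia
    exact ⟨by simpa [hφa, hφu, period_ne_zero] using hX, by simpa [hψa, hψu] using hY⟩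
  · rw [point_zero]
    exact (hz X Y (Fin.castAdd B j)).trans (Fin.append_left ..)

theorem exists_tileField_family {d n : ℕ} (hd : 2 ≤ d) (hn : 2 ≤ n) (G : Type*)
    [Finite G] [Nonempty G] :
    ∃ (D : (V d → Fin n) → TileField (V d) G) (slot : Fin 5 → V d),
      TileField.DependsLocally D ∧ (∀ z w, D (fun x => z (x + w)) = (D z).translate w) ∧
      (∀ z, SlotsSeparated slot (D z).coded (D z).coded) ∧
      ∀ (m : ℕ) (γ : ℤ → G) x, ∃ z, (D z).Represents m γ x := by
  have := Tile.finite (G := G)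
  have := Tile.nonempty (G := G)
  obtain ⟨B, encode, decode, decode_encode⟩ := exists_bit_code (SiteData G)
  let axis (i : Fin d) : V d := Pi.single i 1
  let bit (s : Fin n) : Bool := decide (s.val ≠ 0)
  have bit_surjective : Function.Surjective bit
    | true => ⟨⟨1, hn⟩, rfl⟩
    | false => ⟨⟨0, by lia⟩, rfl⟩
  let i₀ : Fin d := ⟨0, by lia⟩
  let i₁ : Fin d := ⟨1, hd⟩
  have i₀_ne_i₁ : i₀ ≠ i₁ := by simp [i₀, i₁]
  refine ⟨encodedField bit decode (axis i₀) (axis i₁), slotsAlong (axis i₀),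
    dependsLocally_encodedField .., encodedField_translate _ _ _ _,
    fun _ => slotsSeparated_isCodeStart, exists_represents decode_encode bit_surjective
      (φ := Pi.evalAddMonoidHom _ i₀) (ψ := Pi.evalAddMonoidHom _ i₁) ?_ ?_ ?_ ?_⟩ <;>
  simp [axis, i₀_ne_i₁, i₀_ne_i₁.symm]

end Encoding

section Torsion

variable {A T G α : Type*} [AddCommGroup A] {K : CellularAutomaton G} {a b : G}
  {D : T → TileField A G} {slot : Fin 5 → A} {ι : Generator → α}
  {π : α → T → Equiv.Perm A}

theorem isOfFinOrder_wordValue_dynamicsWord_iff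
    (hπ : ∀ g, π (ι g) = fun z => generatorPerm K a b (D z) slot g)
    (separated : ∀ z, SlotsSeparated slot (D z).coded (D z).coded)
    (exists_represents : ∀ (m : ℕ) (γ : ℤ → G) x, ∃ z, (D z).Represents m γ x) (k : ℕ) :
    IsOfFinOrder (wordValue π (dynamicsWord ι k)) ↔
      ∃ n i, K.bad (K.step^[n] (wordConfiguration K.blank a b (2 * k)) i) := by
  let γ := wordConfiguration K.blank a b (2 * k)
  have blank_outside (i : ℤ) (hi : i < 1 ∨ ((2 * k + 2 : ℕ) : ℤ) < i) : γ i = K.blank :=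
    (if_neg (by lia)).trans (if_neg (by lia))
  have even : (2 * k + 2).bodd = false := by simp
  have value (z) : wordValue π (dynamicsWord ι k) z =
      (D z).dynamics K slot ((D z).OnGrid (2 * k + 2) (wordLabel K a b k)) :=
    (map_wordValue π (Pi.evalMonoidHom _ z) _).trans <|
      wordValue_dynamicsWord (fun g => congrFun (hπ g) z) (separated z) k
  rw [isOfFinOrder_iff_pow_eq_one]
  constructor
  · rintro ⟨r, hr, pow_eq_one⟩
    by_contra! never_bad
    obtain ⟨x, valid, no_return⟩ :=
      exists_pathValid_of_not_bad K even (by lia) blank_outside never_bad (r + 1)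
    obtain ⟨z, repr⟩ := exists_represents (2 * k + 2) γ x
    have := congrFun pow_eq_one z
    rw [Pi.pow_apply, value] at this
    exact repr.dynamics_pow_ne_one (separated z) valid r.le_succ
      (fun h => hr.ne' (no_return r r.lt_succ_self h.1 h.2)) this
  · rintro ⟨T, bad⟩
    obtain ⟨N, hN⟩ := exists_not_pathValid_of_bad K T even (by lia) blank_outside bad
    refine ⟨_, (4 * N + 3).factorial_pos, funext fun z => ?_⟩
    rw [Pi.pow_apply, value]
    exact TileField.dynamics_pow_factorial_eq_one (separated z) (fun _ => TileField.OnGrid.coded)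
      (TileField.not_isChain_of_not_pathValid hN)

theorem not_exists_computable_isOfFinOrder (undecidable : ¬ ComputablePred fun j : ℕ =>
      ∃ N i, K.bad (K.step^[N] (wordConfiguration K.blank a b (2 * j)) i))
    (separated : ∀ z, SlotsSeparated slot (D z).coded (D z).coded)
    (exists_represents : ∀ (m : ℕ) (γ : ℤ → G) x, ∃ z, (D z).Represents m γ x)
    {m : ℕ} (ι : Generator ≃ Fin m) :
    ¬ ∃ g : ℕ → Bool, Computable g ∧ ∀ w : SignedWord (Fin m), (g (Encodable.encode w) = true ↔
      IsOfFinOrder (wordValue (fun i z => generatorPerm K a b (D z) slot (ι.symm i)) w)) := by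
  rintro ⟨g, computable_g, hg⟩
  refine undecidable (ComputablePred.computable_iff.2 ⟨fun j => g (Encodable.encode
    (dynamicsWord ι j)), computable_g.comp (Primrec.encode.comp (primrec_dynamicsWord ι)).to_comp,
    funext fun j => propext ?_⟩)
  rw [hg, isOfFinOrder_wordValue_dynamicsWord_iff (K := K) (a := a) (b := b)
    (fun _ => by simp only [Equiv.symm_apply_apply]) separated exists_represents]

end Torsion

end RFATorsion

/-- For `d ≥ 2` and `n ≥ 2`, there is a finitely generated subgroup of
`RFA(ℤ^d,n,k)` (generated by finitely many reversible finite-state automata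
`π 0, …, π (m-1)`) whose torsion problem is undecidable: no algorithm decides,
given a word over the generators and their inverses, whether the represented
element has finite order. -/
theorem rfa_torsion_undecidable_dim_ge_two (d n k : ℕ)
    (hn : 2 ≤ n) (hk : 1 ≤ k) (hd : 2 ≤ d) :
    ∃ (m : ℕ) (π : Fin m → Equiv.Perm (X d n k)),
      (∀ i, π i ∈ RFAset d n k) ∧
      ¬ ∃ g : ℕ → Bool, Computable g ∧
        ∀ w : List (Fin m × Bool),
          (g (Encodable.encode w) = true ↔ IsOfFinOrder (evalWord π w)) := by
  obtain ⟨G, _, K, a, b, undecidable⟩ := RFATorsion.exists_cellularAutomaton_undecidable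
  have : Nonempty G := ⟨K.blank⟩
  obtain ⟨D, slot, dependsLocally, translate, separated, exists_represents⟩ :=
    RFATorsion.exists_tileField_family hd hn G
  have := RFATorsion.Generator.finite
  obtain ⟨m, ⟨ι⟩⟩ := Finite.exists_equiv_fin RFATorsion.Generator
  let h (i : Fin m) (z : V d → Fin n) : Equiv.Perm (V d) :=
    RFATorsion.generatorPerm K a b (D z) slot (ι.symm i)
  refine ⟨m, fun i => RFATorsion.tapeControlledHom (h i),
    fun i => RFATorsion.tapeControlledHom_mem_RFAset
      (RFATorsion.isLocal_generatorPerm dependsLocally translate separated a b (ι.symm i)), ?_⟩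
  have isOfFinOrder_iff (w : RFATorsion.SignedWord (Fin m)) :
      IsOfFinOrder (evalWord (fun i => RFATorsion.tapeControlledHom (k := k) (h i)) w) ↔
        IsOfFinOrder (RFATorsion.wordValue h w) := by
    rw [RFATorsion.evalWord_eq_wordValue, ← RFATorsion.map_wordValue,
      (RFATorsion.tapeControlledHom_injective hk).isOfFinOrder_iff]
  simp only [isOfFinOrder_iff]
  exact RFATorsion.not_exists_computable_isOfFinOrder undecidable separated exists_represents ι
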